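/- arXiv:1508.04457 — 4 statements merged into one kernel-verified Lean document; each statement's English description precedes it below -/
import Mathlib

section
/- Let f(z) = Σ_{p odd prime} z^p. Then f(e^{−t}) ~ 1/(t·log(1/t)) as t → 0⁺; that is, the sum Σ_{p odd prime} e^{−pt}, multiplied by t·log(1/t), tends to 1 as t decreases to 0. -/
open Filter Topology Asymptotics MeasureTheory

/-- `Q2 k` is the number of Goldbach partitions of `2*k`, i.e. the number of
unordered pairs `{p, q}` of odd primes with `p + q = 2*k`. -/
def Q2 (k : ℕ) : ℕ :=
  ((Finset.range (2 * k + 1) ×ˢ Finset.range (2 * k + 1)).filter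
    (fun pq => pq.1.Prime ∧ pq.2.Prime ∧ Odd pq.1 ∧ Odd pq.2 ∧
      pq.1 ≤ pq.2 ∧ pq.1 + pq.2 = 2 * k)).card

/-- `fOdd z = Σ_{p odd prime} z^p`. -/
noncomputable def fOdd (z : ℝ) : ℝ := ∑' p : ℕ, if p.Prime ∧ Odd p then z ^ p else 0

/-- `fOdd' z = Σ_{p odd prime} p * z^(p-1)`, the derivative of `fOdd` on `(0,1)`. -/
noncomputable def fOdd' (z : ℝ) : ℝ :=
  ∑' p : ℕ, if p.Prime ∧ Odd p then (p : ℝ) * z ^ (p - 1) else 0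

/-- `fOdd'' z = Σ_{p odd prime} p * (p-1) * z^(p-2)`, the second derivative of `fOdd` on `(0,1)`. -/
noncomputable def fOdd'' (z : ℝ) : ℝ :=
  ∑' p : ℕ, if p.Prime ∧ Odd p then (p : ℝ) * ((p : ℝ) - 1) * z ^ (p - 2) else 0

/-- The prime-counting function at a real argument: the number of primes `≤ y`. -/
noncomputable def primePi (y : ℝ) : ℕ := Nat.primeCounting ⌊y⌋₊

/-!
The proof is Wiener's method with a Schwartz kernel. For coefficients `a` obeying a Chebyshev bound,
the measure `∑ a(n) / n • δ_{log n}` has uniformly bounded mass on unit intervals, so its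
convolution with a Schwartz function `φ` is bounded by a Schwartz seminorm of `φ`. If moreover the
Dirichlet series of `a` extends continuously to the line `Re s = 1`, this convolution tends to `0`
at infinity: for `φ` with compactly supported Fourier transform it is the Fourier transform of an
integrable function, hence vanishes at infinity by Riemann–Lebesgue, and such `φ` are dense.

Odd primes form the residue class of `1` modulo `2`. For the von Mangoldt function of an invertible
residue class modulo `q`, non-vanishing of Dirichlet `L`-functions on `Re s = 1` says that the
Dirichlet series minus `ζ(s) / q.totient` extends continuously. Taking the Gumbel density
`e ^ (-v) * exp (-e ^ (-v))` as kernel turns the convolution at `T = log (1 / t)` into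
`t * ∑ a(n) * e ^ (-n * t)`. Prime powers contribute a convergent sum, hence nothing in the limit,
and the weight `log p` may be traded for `T` because `T - log p` only multiplies the kernel by a
polynomial factor, which is a bounded error.
-/

open scoped SchwartzMap ContDiff FourierTransform LSeries.notation

section SchwartzDensity

variable {E F : Type*} [NormedAddCommGroup E] [NormedSpace ℝ E]
  [NormedAddCommGroup F] [NormedSpace ℝ F]

-- `u (c • ·)` is supported where `1 ≤ c * ‖x‖`, so a spare power of `‖x‖` buys the factor `c`.
lemma norm_pow_mul_iteratedFDeriv_comp_smul_smul_le {u : E → ℝ} (hu : ContDiff ℝ ∞ u)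
    (hu_zero : ∀ x, ‖x‖ < 1 → u x = 0) {C : ℕ → ℝ} (hC : ∀ i x, ‖iteratedFDeriv ℝ i u x‖ ≤ C i)
    (f : 𝓢(E, F)) (k n : ℕ) {c : ℝ} (hc₀ : 0 < c) (hc₁ : c ≤ 1) (x : E) :
    ‖x‖ ^ k * ‖iteratedFDeriv ℝ n (fun y ↦ u (c • y) • f y) x‖ ≤
      c * ∑ i ∈ Finset.range (n + 1),
        n.choose i * C i * SchwartzMap.seminorm ℝ (k + 1) (n - i) f := by
  have hC₀ (i : ℕ) : 0 ≤ C i := (norm_nonneg _).trans (hC i 0)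
  rcases lt_or_ge (c * ‖x‖) 1 with hx | hx
  · have hzero : (fun y ↦ u (c • y) • f y) =ᶠ[𝓝 x] fun _ ↦ 0 := by
      have hopen : IsOpen {y : E | c * ‖y‖ < 1} := isOpen_lt (by fun_prop) continuous_const
      filter_upwards [hopen.mem_nhds hx] with y hy
      rw [hu_zero (c • y) (by rwa [norm_smul, Real.norm_of_nonneg hc₀.le]), zero_smul]
    rw [(EventuallyEq.iteratedFDeriv ℝ hzero n).eq_of_nhds, iteratedFDeriv_fun_zero,
      Pi.zero_apply, norm_zero, mul_zero]
    have hseminorm (i : ℕ) := apply_nonneg (SchwartzMap.seminorm ℝ (k + 1) (n - i)) f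
    exact mul_nonneg hc₀.le (Finset.sum_nonneg fun i _ ↦
      mul_nonneg (mul_nonneg (Nat.cast_nonneg _) (hC₀ i)) (hseminorm i))
  · have hscale (i : ℕ) : ‖iteratedFDeriv ℝ i (fun y ↦ u (c • y)) x‖ ≤ C i := by
      rw [iteratedFDeriv_comp_const_smul c (hu.of_le (mod_cast le_top)), norm_smul, norm_pow,
        Real.norm_of_nonneg hc₀.le]
      exact (mul_le_of_le_one_left (norm_nonneg _) (pow_le_one₀ hc₀.le hc₁)).trans (hC i _)
    have hpow : ‖x‖ ^ k ≤ c * ‖x‖ ^ (k + 1) := by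
      calc ‖x‖ ^ k ≤ (c * ‖x‖) * ‖x‖ ^ k := le_mul_of_one_le_left (by positivity) hx
        _ = c * ‖x‖ ^ (k + 1) := by ring
    calc ‖x‖ ^ k * ‖iteratedFDeriv ℝ n (fun y ↦ u (c • y) • f y) x‖
        ≤ c * ‖x‖ ^ (k + 1) * ∑ i ∈ Finset.range (n + 1),
            n.choose i * ‖iteratedFDeriv ℝ i (fun y ↦ u (c • y)) x‖ *
              ‖iteratedFDeriv ℝ (n - i) f x‖ := by
          gcongr
          exact norm_iteratedFDeriv_smul_le (hu.comp (contDiff_const_smul c)) (f.smooth ⊤) x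
            (mod_cast le_top)
      _ = c * ∑ i ∈ Finset.range (n + 1),
            n.choose i * ‖iteratedFDeriv ℝ i (fun y ↦ u (c • y)) x‖ *
              (‖x‖ ^ (k + 1) * ‖iteratedFDeriv ℝ (n - i) f x‖) := by
          rw [mul_assoc, Finset.mul_sum]
          congr! 2 with i
          ring
      _ ≤ _ := by
          gcongr with i
          · exact mul_nonneg (Nat.cast_nonneg _) (hC₀ i)
          · exact hscale i
          · exact f.le_seminorm ℝ (k + 1) (n - i) x

lemma exists_norm_iteratedFDeriv_one_sub_contDiffBump_le [FiniteDimensional ℝ E]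
    (χ : ContDiffBump (0 : E)) (n : ℕ) :
    ∃ C, ∀ x, ‖iteratedFDeriv ℝ n (fun y ↦ 1 - χ y) x‖ ≤ C := by
  obtain ⟨C, hC⟩ := (χ.hasCompactSupport.iteratedFDeriv (𝕜 := ℝ) n).exists_bound_of_continuous
    (χ.contDiff.continuous_iteratedFDeriv (m := n) (n := n) le_rfl)
  refine ⟨1 + C, fun x ↦ ?_⟩
  have hone : ‖iteratedFDeriv ℝ n (fun _ : E ↦ (1 : ℝ)) x‖ ≤ 1 := by
    rcases eq_or_ne n 0 with rfl | hn
    · simp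
    · simp [iteratedFDeriv_const_of_ne hn]
  rw [fun_iteratedFDeriv_sub contDiff_const χ.contDiff]
  exact (norm_sub_le _ _).trans (add_le_add hone (hC x))

lemma dense_setOf_hasCompactSupport_schwartzMap [FiniteDimensional ℝ E] :
    Dense {f : 𝓢(E, F) | HasCompactSupport f} := by
  intro f
  let χ : ContDiffBump (0 : E) := ⟨1, 2, one_pos, one_lt_two⟩
  choose C hC using exists_norm_iteratedFDeriv_one_sub_contDiffBump_le χ
  have hcut (m : ℕ) : HasCompactSupport fun x ↦ χ ((m + 1 : ℝ)⁻¹ • x) • f x :=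
    (χ.hasCompactSupport.comp_smul (by positivity)).smul_right
  let g (m : ℕ) : 𝓢(E, F) := (hcut m).toSchwartzMap
    ((χ.contDiff.comp (contDiff_const_smul _)).smul (f.smooth ⊤))
  suffices Tendsto g atTop (𝓝 f) from mem_closure_of_tendsto this (.of_forall hcut)
  refine ((schwartz_withSeminorms ℝ E F).tendsto_nhds g f).2 fun ⟨k, n⟩ ε hε ↦ ?_
  let K := ∑ i ∈ Finset.range (n + 1),
    n.choose i * C i * SchwartzMap.seminorm ℝ (k + 1) (n - i) f
  have hbound (m : ℕ) : SchwartzMap.seminorm ℝ k n (g m - f) ≤ (m + 1 : ℝ)⁻¹ * K := by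
    rw [map_sub_rev]
    have hpointwise := norm_pow_mul_iteratedFDeriv_comp_smul_smul_le
      (contDiff_const.sub χ.contDiff) (fun x hx ↦ by
        rw [χ.one_of_mem_closedBall (by simpa using hx.le), sub_self]) hC f k n
      (inv_pos.2 m.cast_add_one_pos) (inv_le_one_of_one_le₀ (by simp))
    refine SchwartzMap.seminorm_le_bound ℝ k n _
      ((by positivity : (0 : ℝ) ≤ _).trans (hpointwise 0)) fun x ↦ ?_
    convert hpointwise x using 4 with y
    ext y
    simp [g, sub_smul]
  have hlim : Tendsto (fun m : ℕ ↦ (m + 1 : ℝ)⁻¹ * K) atTop (𝓝 0) := by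
    simpa using (tendsto_one_div_add_atTop_nhds_zero_nat (𝕜 := ℝ)).mul_const K
  filter_upwards [hlim.eventually_lt_const hε] with m hm using (hbound m).trans_lt hm

end SchwartzDensity

/-- A Chebyshev-type bound: the sums `∑_{n ≤ N} ‖a n‖` grow at most linearly in `N`.
The term `a 0` is left out because it does not enter the Dirichlet series of `a`. -/
def BoundedOnAverage (a : ℕ → ℂ) : Prop :=
  ∃ B : ℝ, ∀ N : ℕ, ∑ n ∈ Finset.Icc 1 N, ‖a n‖ ≤ B * N

/-- The convolution of `φ` with the measure `∑ a(n) / n • δ_{log n}`, written with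
`LSeries.term` so that the index `n = 0` contributes nothing. -/
noncomputable def logConv (a : ℕ → ℂ) (φ : 𝓢(ℝ, ℂ)) (T : ℝ) : ℂ :=
  ∑' n, LSeries.term a 1 n * φ (T - Real.log n)

lemma inv_one_add_sq_le_of_abs_sub_le_one {x v : ℝ} (h : |x - v| ≤ 1) :
    (1 + x ^ 2)⁻¹ ≤ 4 * (1 + v ^ 2)⁻¹ := by
  have hsq : (x - v) ^ 2 ≤ 1 := (sq_le_one_iff_abs_le_one _).2 h
  rw [← div_eq_mul_inv, inv_eq_one_div, div_le_div_iff₀ (by positivity) (by positivity)]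
  nlinarith [sq_nonneg (2 * x - v)]

lemma inv_one_add_sub_sq_le_floor (x v : ℝ) :
    (1 + (x - v) ^ 2)⁻¹ ≤ 4 * (1 + ((⌊x⌋ - ⌊v⌋ : ℤ) : ℝ) ^ 2)⁻¹ := by
  refine inv_one_add_sq_le_of_abs_sub_le_one ?_
  push_cast
  rw [abs_le]
  constructor <;>
    linarith [Int.floor_le x, Int.lt_floor_add_one x, Int.floor_le v, Int.lt_floor_add_one v]

lemma summable_inv_one_add_sq_int : Summable fun j : ℤ ↦ (1 + (j : ℝ) ^ 2)⁻¹ := by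
  refine .of_norm_bounded_eventually
    (Real.summable_one_div_int_pow (p := 2).2 one_lt_two) ?_
  filter_upwards [eventually_cofinite_ne (0 : ℤ)] with j hj
  rw [Real.norm_of_nonneg (by positivity), one_div]
  gcongr
  linarith

namespace BoundedOnAverage

variable {a b : ℕ → ℂ}

lemma of_norm_le (hb : BoundedOnAverage b) (h : ∀ n, ‖a n‖ ≤ ‖b n‖) : BoundedOnAverage a :=
  let ⟨B, hB⟩ := hb
  ⟨B, fun N ↦ (Finset.sum_le_sum fun n _ ↦ h n).trans (hB N)⟩

lemma sub (ha : BoundedOnAverage a) (hb : BoundedOnAverage b) : BoundedOnAverage (a - b) := by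
  obtain ⟨A, hA⟩ := ha
  obtain ⟨B, hB⟩ := hb
  refine ⟨A + B, fun N ↦ (Finset.sum_le_sum fun n _ ↦ norm_sub_le (a n) (b n)).trans ?_⟩
  rw [Finset.sum_add_distrib, add_mul]
  exact add_le_add (hA N) (hB N)

lemma lseriesSummable (ha : BoundedOnAverage a) {s : ℂ} (hs : 1 < s.re) : LSeriesSummable a s := by
  obtain ⟨B, hB⟩ := ha
  refine LSeriesSummable_of_sum_norm_bigO (r := 1) (.of_bound B (.of_forall fun N ↦ ?_))
    zero_le_one hs
  rw [Real.norm_of_nonneg (Finset.sum_nonneg fun _ _ ↦ norm_nonneg _), Real.rpow_one,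
    Real.norm_natCast]
  exact hB N

end BoundedOnAverage

lemma sum_norm_term_one_le_of_floor_log_eq {a : ℕ → ℂ} {B : ℝ}
    (hB : ∀ N : ℕ, ∑ n ∈ Finset.Icc 1 N, ‖a n‖ ≤ B * N) {s : Finset ℕ} {k : ℤ}
    (hs : ∀ n ∈ s, ⌊Real.log n⌋ = k) :
    ∑ n ∈ s, ‖LSeries.term a 1 n‖ ≤ B * Real.exp 1 := by
  have hB₀ : 0 ≤ B := by simpa using (norm_nonneg (a 1)).trans (by simpa using hB 1)
  have hlog {n : ℕ} (hn : n ∈ s.erase 0) :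
      Real.exp k ≤ n ∧ n ≤ ⌊Real.exp (k + 1)⌋₊ := by
    obtain ⟨hn₀, hns⟩ := Finset.mem_erase.1 hn
    have hpos : (0 : ℝ) < n := Nat.cast_pos.2 (Nat.pos_of_ne_zero hn₀)
    obtain ⟨hle, hlt⟩ := Int.floor_eq_iff.1 (hs n hns)
    exact ⟨(Real.le_log_iff_exp_le hpos).1 hle,
      Nat.le_floor ((Real.log_lt_iff_lt_exp hpos).1 hlt).le⟩
  calc ∑ n ∈ s, ‖LSeries.term a 1 n‖
      = ∑ n ∈ s.erase 0, ‖LSeries.term a 1 n‖ := (Finset.sum_erase _ (by simp)).symm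
    _ ≤ ∑ n ∈ s.erase 0, ‖a n‖ * Real.exp (-k) := by
        refine Finset.sum_le_sum fun n hn ↦ ?_
        rw [LSeries.norm_term_eq, if_neg (Finset.ne_of_mem_erase hn), Complex.one_re,
          Real.rpow_one, div_eq_mul_inv, Real.exp_neg]
        gcongr
        exact (hlog hn).1
    _ ≤ (∑ n ∈ Finset.Icc 1 ⌊Real.exp (k + 1)⌋₊, ‖a n‖) * Real.exp (-k) := by
        rw [← Finset.sum_mul]
        gcongr
        intro n hn
        exact Finset.mem_Icc.2 ⟨Nat.pos_of_ne_zero (Finset.ne_of_mem_erase hn), (hlog hn).2⟩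
    _ ≤ B * Real.exp (k + 1) * Real.exp (-k) := by
        gcongr
        exact (hB _).trans (by gcongr; exact Nat.floor_le (Real.exp_nonneg _))
    _ = B * Real.exp 1 := by
        rw [mul_assoc, ← Real.exp_add, add_neg_cancel_comm]

namespace BoundedOnAverage

variable {a b : ℕ → ℂ}

lemma exists_tsum_norm_term_mul_le (ha : BoundedOnAverage a) :
    ∃ C : ℝ, ∀ T : ℝ,
      Summable (fun n : ℕ ↦ ‖LSeries.term a 1 n‖ * (1 + (T - Real.log n) ^ 2)⁻¹) ∧
      ∑' n : ℕ, ‖LSeries.term a 1 n‖ * (1 + (T - Real.log n) ^ 2)⁻¹ ≤ C := by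
  obtain ⟨B, hB⟩ := ha
  have hB₀ : 0 ≤ B := by simpa using (norm_nonneg (a 1)).trans (by simpa using hB 1)
  let C := B * Real.exp 1 * (4 * ∑' j : ℤ, (1 + (j : ℝ) ^ 2)⁻¹)
  suffices hsum : ∀ (T : ℝ) (s : Finset ℕ),
      ∑ n ∈ s, ‖LSeries.term a 1 n‖ * (1 + (T - Real.log n) ^ 2)⁻¹ ≤ C from
    ⟨C, fun T ↦ ⟨summable_of_sum_le (fun n ↦ by positivity) (hsum T),
      Real.tsum_le_of_sum_le (fun n ↦ by positivity) (hsum T)⟩⟩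
  intro T s
  let block (n : ℕ) : ℤ := ⌊Real.log n⌋
  calc ∑ n ∈ s, ‖LSeries.term a 1 n‖ * (1 + (T - Real.log n) ^ 2)⁻¹
      ≤ ∑ n ∈ s, ‖LSeries.term a 1 n‖ * (4 * (1 + ((⌊T⌋ - block n : ℤ) : ℝ) ^ 2)⁻¹) := by
        gcongr with n
        exact inv_one_add_sub_sq_le_floor T (Real.log n)
    _ = ∑ k ∈ s.image block, ∑ n ∈ s with block n = k,
          ‖LSeries.term a 1 n‖ * (4 * (1 + ((⌊T⌋ - block n : ℤ) : ℝ) ^ 2)⁻¹) :=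
        (Finset.sum_fiberwise_of_maps_to (fun n hn ↦ Finset.mem_image_of_mem _ hn) _).symm
    _ = ∑ k ∈ s.image block, (∑ n ∈ s with block n = k, ‖LSeries.term a 1 n‖) *
          (4 * (1 + ((⌊T⌋ - k : ℤ) : ℝ) ^ 2)⁻¹) := by
        refine Finset.sum_congr rfl fun k _ ↦ ?_
        rw [Finset.sum_mul]
        exact Finset.sum_congr rfl fun n hn ↦ by rw [(Finset.mem_filter.1 hn).2]
    _ ≤ ∑ k ∈ s.image block, B * Real.exp 1 * (4 * (1 + ((⌊T⌋ - k : ℤ) : ℝ) ^ 2)⁻¹) := by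
        gcongr with k
        exact sum_norm_term_one_le_of_floor_log_eq hB fun n hn ↦ (Finset.mem_filter.1 hn).2
    _ ≤ C := by
        rw [← Finset.mul_sum, ← Finset.mul_sum]
        refine mul_le_mul_of_nonneg_left (mul_le_mul_of_nonneg_left ?_ zero_le_four) (by positivity)
        rw [← (Equiv.subLeft ⌊T⌋).tsum_eq fun j : ℤ ↦ (1 + (j : ℝ) ^ 2)⁻¹]
        exact ((Equiv.subLeft ⌊T⌋).summable_iff.2 summable_inv_one_add_sq_int).sum_le_tsum _
          fun k _ ↦ by positivity

end BoundedOnAverage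

/-- A Schwartz seminorm dominating `sup_v (1 + v²) ‖φ v‖`; it controls `logConv` uniformly. -/
noncomputable def quadraticDecay : Seminorm ℝ 𝓢(ℝ, ℂ) :=
  SchwartzMap.seminorm ℝ 0 0 + SchwartzMap.seminorm ℝ 2 0

lemma continuous_quadraticDecay : Continuous quadraticDecay :=
  ((schwartz_withSeminorms ℝ ℝ ℂ).continuous_seminorm (0, 0)).add
    ((schwartz_withSeminorms ℝ ℝ ℂ).continuous_seminorm (2, 0))

lemma norm_le_quadraticDecay_mul (φ : 𝓢(ℝ, ℂ)) (v : ℝ) :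
    ‖φ v‖ ≤ quadraticDecay φ * (1 + v ^ 2)⁻¹ := by
  rw [← div_eq_mul_inv, le_div_iff₀ (by positivity)]
  have h₀ := SchwartzMap.norm_le_seminorm ℝ φ v
  have h₂ := SchwartzMap.norm_pow_mul_le_seminorm ℝ φ 2 v
  rw [Real.norm_eq_abs, sq_abs] at h₂
  calc ‖φ v‖ * (1 + v ^ 2) = ‖φ v‖ + v ^ 2 * ‖φ v‖ := by ring
    _ ≤ _ := add_le_add h₀ h₂

namespace BoundedOnAverage

variable {a b : ℕ → ℂ}

lemma exists_tsum_norm_logConv_le (ha : BoundedOnAverage a) :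
    ∃ C : ℝ, ∀ (φ : 𝓢(ℝ, ℂ)) (T : ℝ),
      Summable (fun n ↦ ‖LSeries.term a 1 n * φ (T - Real.log n)‖) ∧
      ∑' n, ‖LSeries.term a 1 n * φ (T - Real.log n)‖ ≤ C * quadraticDecay φ := by
  obtain ⟨C, hC⟩ := ha.exists_tsum_norm_term_mul_le
  refine ⟨C, fun φ T ↦ ?_⟩
  obtain ⟨hsum, hle⟩ := hC T
  have hterm (n : ℕ) : ‖LSeries.term a 1 n * φ (T - Real.log n)‖ ≤
      ‖LSeries.term a 1 n‖ * (1 + (T - Real.log n) ^ 2)⁻¹ * quadraticDecay φ := by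
    rw [norm_mul, mul_assoc, mul_comm _ (quadraticDecay φ)]
    gcongr
    exact norm_le_quadraticDecay_mul φ _
  have hsum' := hsum.mul_right (quadraticDecay φ)
  have hnorm := hsum'.of_nonneg_of_le (fun n ↦ norm_nonneg _) hterm
  refine ⟨hnorm, (hnorm.tsum_le_tsum hterm hsum').trans ?_⟩
  rw [tsum_mul_right]
  gcongr

lemma summable_logConv (ha : BoundedOnAverage a) (φ : 𝓢(ℝ, ℂ)) (T : ℝ) :
    Summable fun n ↦ LSeries.term a 1 n * φ (T - Real.log n) :=
  let ⟨_, hC⟩ := ha.exists_tsum_norm_logConv_le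
  (hC φ T).1.of_norm

lemma exists_norm_logConv_le (ha : BoundedOnAverage a) :
    ∃ C : ℝ, ∀ (φ : 𝓢(ℝ, ℂ)) (T : ℝ), ‖logConv a φ T‖ ≤ C * quadraticDecay φ :=
  let ⟨C, hC⟩ := ha.exists_tsum_norm_logConv_le
  ⟨C, fun φ T ↦ (norm_tsum_le_tsum_norm (hC φ T).1).trans (hC φ T).2⟩

lemma logConv_sub_left (ha : BoundedOnAverage a) (hb : BoundedOnAverage b) (φ : 𝓢(ℝ, ℂ))
    (T : ℝ) : logConv (a - b) φ T = logConv a φ T - logConv b φ T := by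
  simp only [logConv, LSeries.term_sub, Pi.sub_apply, sub_mul]
  exact (ha.summable_logConv φ T).tsum_sub (hb.summable_logConv φ T)

lemma logConv_sub_right (ha : BoundedOnAverage a) (φ ψ : 𝓢(ℝ, ℂ)) (T : ℝ) :
    logConv a (φ - ψ) T = logConv a φ T - logConv a ψ T := by
  simp only [logConv, sub_apply, mul_sub]
  exact (ha.summable_logConv φ T).tsum_sub (ha.summable_logConv ψ T)

lemma isClosed_setOf_tendsto_logConv (ha : BoundedOnAverage a) :
    IsClosed {φ : 𝓢(ℝ, ℂ) | Tendsto (logConv a φ) atTop (𝓝 0)} := by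
  obtain ⟨C, hC⟩ := ha.exists_norm_logConv_le
  refine isClosed_of_closure_subset fun φ hφ ↦ ?_
  have huniform : Tendsto (fun ψ : 𝓢(ℝ, ℂ) ↦ C * quadraticDecay (φ - ψ)) (𝓝 φ) (𝓝 0) :=
    ((continuous_quadraticDecay.comp (continuous_const.sub continuous_id)).const_mul C).tendsto' _ _
      (by simp)
  refine Metric.tendsto_nhds.2 fun ε hε ↦ ?_
  obtain ⟨ψ, hψ, hψε⟩ := ((mem_closure_iff_frequently.1 hφ).and_eventually
    (huniform.eventually_lt_const (half_pos hε))).exists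
  filter_upwards [Metric.tendsto_nhds.1 hψ (ε / 2) (half_pos hε)] with T hT
  rw [dist_zero_right] at hT ⊢
  calc ‖logConv a φ T‖ = ‖logConv a (φ - ψ) T + logConv a ψ T‖ := by
        rw [ha.logConv_sub_right, sub_add_cancel]
    _ ≤ C * quadraticDecay (φ - ψ) + ‖logConv a ψ T‖ :=
        (norm_add_le _ _).trans (add_le_add_left (hC _ T) _)
    _ < ε := by linarith

end BoundedOnAverage

lemma term_sub_mul_I (a : ℕ → ℂ) (s : ℂ) (y : ℝ) (n : ℕ) :
    LSeries.term a (s - y * Complex.I) n =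
      LSeries.term a s n * Complex.exp (y * Real.log n * Complex.I) := by
  rcases eq_or_ne n 0 with rfl | hn
  · simp
  have hn' : (n : ℂ) ≠ 0 := Nat.cast_ne_zero.2 hn
  rw [LSeries.term_of_ne_zero hn, LSeries.term_of_ne_zero hn, Complex.cpow_sub _ _ hn',
    Complex.cpow_def_of_ne_zero hn' (y * Complex.I), ← Complex.natCast_log, div_div_eq_mul_div,
    div_mul_eq_mul_div]
  congr 3
  ring

lemma term_mul_fourierChar_smul (a : ℕ → ℂ) (s z : ℂ) (T ξ : ℝ) (n : ℕ) :
    LSeries.term a s n * (Real.fourierChar (-(ξ * (T - Real.log n))) • z) =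
      Real.fourierChar (-(ξ * T)) •
        (z * LSeries.term a (s - (2 * Real.pi * ξ : ℝ) * Complex.I) n) := by
  have hsplit : -(ξ * (T - Real.log n)) = -(ξ * T) + ξ * Real.log n := by ring
  rw [term_sub_mul_I, hsplit, AddChar.map_add_eq_mul]
  simp only [Circle.smul_def, Circle.coe_mul, Real.fourierChar_apply, smul_eq_mul]
  push_cast
  ring_nf

lemma tsum_term_mul_fourier {a : ℕ → ℂ} {s : ℂ} (ha : LSeriesSummable a s) {g : ℝ → ℂ}
    (hg : Integrable g) (T : ℝ) :
    ∑' n, LSeries.term a s n * 𝓕 g (T - Real.log n) =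
      𝓕 (fun ξ : ℝ ↦ g ξ * LSeries a (s - (2 * Real.pi * ξ : ℝ) * Complex.I)) T := by
  let G (n : ℕ) (ξ : ℝ) : ℂ :=
    LSeries.term a s n * (Real.fourierChar (-(ξ * (T - Real.log n))) • g ξ)
  have hint (n : ℕ) : Integrable (G n) := by
    refine Integrable.const_mul ?_ _
    simpa [mul_comm] using (Real.fourierIntegral_convergent_iff (T - Real.log n)).2 hg
  have hnorm (n : ℕ) : ∫ ξ, ‖G n ξ‖ = ‖LSeries.term a s n‖ * ∫ ξ, ‖g ξ‖ := by
    simp only [G, norm_mul, Circle.norm_smul, integral_const_mul]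
  have hfubini : ∑' n, ∫ ξ, G n ξ = ∫ ξ, ∑' n, G n ξ :=
    (hasSum_integral_of_summable_integral_norm hint
      (by simpa only [hnorm] using ha.norm.mul_right _)).tsum_eq
  calc ∑' n, LSeries.term a s n * 𝓕 g (T - Real.log n) = ∑' n, ∫ ξ, G n ξ :=
        tsum_congr fun n ↦ by rw [Real.fourier_real_eq, integral_const_mul]
    _ = ∫ ξ, ∑' n, G n ξ := hfubini
    _ = _ := by
        rw [Real.fourier_real_eq]
        refine integral_congr_ae (.of_forall fun ξ ↦ ?_)
        simp only [G, term_mul_fourierChar_smul]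
        simp only [Circle.smul_def, smul_eq_mul, tsum_mul_left, LSeries]

lemma continuous_fourier_mul_of_hasCompactSupport {X : Type*} [TopologicalSpace X]
    [FirstCountableTopology X] [LocallyCompactSpace X] {g : ℝ → ℂ} (hg : Continuous g)
    (hgc : HasCompactSupport g) {G : X → ℝ → ℂ} (hG : Continuous (Function.uncurry G)) (T : ℝ) :
    Continuous fun x ↦ 𝓕 (fun ξ ↦ g ξ * G x ξ) T := by
  have hcont : Continuous (Function.uncurry fun (x : X) (ξ : ℝ) ↦
      Real.fourierChar (-(ξ * T)) • (g ξ * G x ξ)) := by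
    simp only [Function.uncurry_def, Circle.smul_def, Real.fourierChar_apply, smul_eq_mul]
    exact Continuous.mul (by fun_prop) (Continuous.mul (by fun_prop) hG)
  refine (continuous_parametric_integral_of_continuous (μ := volume) hcont hgc).congr fun x ↦ ?_
  rw [Real.fourier_real_eq]
  refine setIntegral_eq_integral_of_forall_compl_eq_zero fun ξ hξ ↦ ?_
  rw [image_eq_zero_of_notMem_tsupport hξ, zero_mul, smul_zero]

lemma tendsto_term_ofReal_nhdsGT (a : ℕ → ℂ) (n : ℕ) (σ₀ : ℝ) :
    Tendsto (fun σ : ℝ ↦ LSeries.term a σ n) (𝓝[>] σ₀) (𝓝 (LSeries.term a σ₀ n)) := by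
  rcases eq_or_ne n 0 with rfl | hn
  · simp
  have hcont : Continuous fun σ : ℝ ↦ LSeries.term a σ n := by
    simp only [LSeries.term_of_ne_zero hn, div_eq_mul_inv, ← Complex.cpow_neg]
    exact continuous_const.mul (Complex.continuous_ofReal.neg.const_cpow
      (.inl (Nat.cast_ne_zero.2 hn)))
  exact (hcont.tendsto σ₀).mono_left nhdsWithin_le_nhds

namespace BoundedOnAverage

variable {a : ℕ → ℂ} {F : ℂ → ℂ}

lemma tendsto_tsum_term_mul_nhdsGT_one (ha : BoundedOnAverage a) (φ : 𝓢(ℝ, ℂ)) (T : ℝ) :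
    Tendsto (fun σ : ℝ ↦ ∑' n, LSeries.term a σ n * φ (T - Real.log n)) (𝓝[>] 1)
      (𝓝 (logConv a φ T)) := by
  refine tendsto_tsum_of_dominated_convergence (ha.summable_logConv φ T).norm
    (fun n ↦ ?_) ?_
  · simpa using (tendsto_term_ofReal_nhdsGT a n 1).mul_const (φ (T - Real.log n))
  · filter_upwards [self_mem_nhdsWithin] with σ hσ n
    rw [norm_mul, norm_mul]
    gcongr
    exact LSeries.norm_term_le_of_re_le_re a (by simpa using (Set.mem_Ioi.1 hσ).le) n

lemma logConv_fourier_eq (ha : BoundedOnAverage a) (hF : ContinuousOn F {s | 1 ≤ s.re})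
    (hFa : Set.EqOn F (LSeries a) {s | 1 < s.re}) {g : 𝓢(ℝ, ℂ)} (hg : HasCompactSupport g)
    (T : ℝ) :
    logConv a (𝓕 g) T = 𝓕 (fun ξ : ℝ ↦ g ξ * F (1 - (2 * Real.pi * ξ : ℝ) * Complex.I)) T := by
  -- `max σ 1` extends the integrand continuously to all real `σ`.
  let G (σ ξ : ℝ) : ℂ := F ((max σ 1 : ℝ) - (2 * Real.pi * ξ : ℝ) * Complex.I)
  have hG : Continuous (Function.uncurry G) :=
    hF.comp_continuous (by fun_prop) fun p ↦ by simp
  have hright : Tendsto (fun σ ↦ 𝓕 (fun ξ ↦ g ξ * G σ ξ) T) (𝓝[>] 1)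
      (𝓝 (𝓕 (fun ξ ↦ g ξ * G 1 ξ) T)) :=
    ((continuous_fourier_mul_of_hasCompactSupport g.continuous hg hG T).tendsto 1).mono_left
      nhdsWithin_le_nhds
  have heq : (fun σ : ℝ ↦ ∑' n, LSeries.term a σ n * 𝓕 g (T - Real.log n)) =ᶠ[𝓝[>] 1]
      fun σ ↦ 𝓕 (fun ξ ↦ g ξ * G σ ξ) T := by
    filter_upwards [self_mem_nhdsWithin] with σ hσ
    rw [SchwartzMap.fourier_coe,
      tsum_term_mul_fourier (ha.lseriesSummable (by simpa using hσ)) g.integrable]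
    congr! 3 with ξ
    simp only [G, max_eq_left (Set.mem_Ioi.1 hσ).le]
    exact (hFa (by simpa using hσ)).symm
  simpa [G] using
    tendsto_nhds_unique (ha.tendsto_tsum_term_mul_nhdsGT_one (𝓕 g) T) (hright.congr' heq.symm)

theorem tendsto_logConv (ha : BoundedOnAverage a) (hF : ContinuousOn F {s | 1 ≤ s.re})
    (hFa : Set.EqOn F (LSeries a) {s | 1 < s.re}) (φ : 𝓢(ℝ, ℂ)) :
    Tendsto (logConv a φ) atTop (𝓝 0) := by
  have hdense : Dense (𝓕 '' {g : 𝓢(ℝ, ℂ) | HasCompactSupport g}) :=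
    (FourierTransform.fourierCLE ℂ 𝓢(ℝ, ℂ)).surjective.denseRange.dense_image
      (FourierTransform.fourierCLE ℂ 𝓢(ℝ, ℂ)).continuous dense_setOf_hasCompactSupport_schwartzMap
  have hband : 𝓕 '' {g : 𝓢(ℝ, ℂ) | HasCompactSupport g} ⊆
      {φ | Tendsto (logConv a φ) atTop (𝓝 0)} := by
    rintro _ ⟨g, hg, rfl⟩
    rw [Set.mem_ofPred_eq, funext (ha.logConv_fourier_eq hF hFa hg)]
    exact (Real.zero_at_infty_fourier _).mono_left atTop_le_cocompact
  exact ha.isClosed_setOf_tendsto_logConv.closure_subset_iff.2 hband (hdense φ)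

end BoundedOnAverage

lemma tendsto_logConv_of_lseriesSummable {a : ℕ → ℂ} (ha : LSeriesSummable a 1) (φ : 𝓢(ℝ, ℂ)) :
    Tendsto (logConv a φ) atTop (𝓝 0) := by
  have hshift (x : ℝ) : Tendsto (fun T : ℝ ↦ φ (T - x)) atTop (𝓝 0) :=
    ((zero_at_infty φ).mono_left atTop_le_cocompact).comp
      (tendsto_atTop_add_const_right atTop (-x) tendsto_id)
  have hlim : Tendsto (logConv a φ) atTop (𝓝 (∑' n, LSeries.term a 1 n * 0)) :=
    tendsto_tsum_of_dominated_convergence (ha.norm.mul_right (SchwartzMap.seminorm ℝ 0 0 φ))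
      (fun n ↦ (hshift (Real.log n)).const_mul (LSeries.term a 1 n))
      (.of_forall fun T n ↦ by
        rw [norm_mul]
        gcongr
        exact SchwartzMap.norm_le_seminorm ℝ φ _)
  simpa using hlim

namespace BoundedOnAverage

variable {a : ℕ → ℂ}

-- Split `T = log n + (T - log n)`, and absorb the second summand into the kernel.
lemma mul_logConv_eq (ha : BoundedOnAverage a)
    (hlog : BoundedOnAverage fun n ↦ Real.log n * a n) (φ : 𝓢(ℝ, ℂ)) (T : ℝ) :
    T * logConv a φ T = logConv (fun n ↦ Real.log n * a n) φ T +
      logConv a (SchwartzMap.smulLeftCLM ℂ (fun v : ℝ ↦ v) φ) T := by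
  rw [logConv, logConv, logConv, ← tsum_mul_left,
    ← (hlog.summable_logConv φ T).tsum_add (ha.summable_logConv _ T)]
  refine tsum_congr fun n ↦ ?_
  have hterm : LSeries.term (fun n ↦ Real.log n * a n) 1 n =
      Real.log n * LSeries.term a 1 n := by
    rcases eq_or_ne n 0 with rfl | hn
    · simp
    · rw [LSeries.term_of_ne_zero hn, LSeries.term_of_ne_zero hn, mul_div_assoc]
  rw [hterm, SchwartzMap.smulLeftCLM_apply_apply (by fun_prop), Complex.real_smul]
  push_cast
  ring

lemma tendsto_mul_logConv_sub (ha : BoundedOnAverage a)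
    (hlog : BoundedOnAverage fun n ↦ Real.log n * a n) (φ : 𝓢(ℝ, ℂ)) :
    Tendsto (fun T : ℝ ↦ T * logConv a φ T - logConv (fun n ↦ Real.log n * a n) φ T) atTop
      (𝓝 0) := by
  let ψ : 𝓢(ℝ, ℂ) := SchwartzMap.smulLeftCLM ℂ (fun v : ℝ ↦ v) φ
  simp only [ha.mul_logConv_eq hlog, add_sub_cancel_left]
  obtain ⟨A, hA⟩ := ha.exists_norm_logConv_le
  obtain ⟨B, hB⟩ := hlog.exists_norm_logConv_le
  let C := B * quadraticDecay ψ + A * quadraticDecay (SchwartzMap.smulLeftCLM ℂ (fun v : ℝ ↦ v) ψ)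
  have hbound (T : ℝ) : ‖T * logConv a ψ T‖ ≤ C := by
    rw [ha.mul_logConv_eq hlog]
    exact (norm_add_le _ _).trans (add_le_add (hB ψ T) (hA _ T))
  refine squeeze_zero_norm' (a := fun T : ℝ ↦ C * T⁻¹) ?_ (by
    simpa using tendsto_inv_atTop_zero.const_mul C)
  filter_upwards [eventually_gt_atTop 0] with T hT
  rw [← div_eq_mul_inv, le_div_iff₀ hT, mul_comm]
  simpa [abs_of_pos hT] using hbound T

end BoundedOnAverage

section Gumbel

/-- The function `y ^ (m + 1) * e ^ (-y)` in the variable `v = -log y`. The case `m = 0` is the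
Gumbel density, and the family is stable under differentiation up to linear combinations. -/
noncomputable def gumbelPow (m : ℕ) (v : ℝ) : ℝ :=
  Real.exp (-v) ^ (m + 1) * Real.exp (-Real.exp (-v))

lemma contDiff_gumbelPow (m : ℕ) : ContDiff ℝ ∞ (gumbelPow m) := by
  unfold gumbelPow
  fun_prop

lemma deriv_gumbelPow (m : ℕ) :
    deriv (gumbelPow m) = gumbelPow (m + 1) - (m + 1 : ℝ) • gumbelPow m := by
  ext v
  have hexp : HasDerivAt (fun v : ℝ ↦ Real.exp (-v)) (-Real.exp (-v)) v := by
    simpa using (hasDerivAt_neg v).exp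
  refine ((hexp.fun_pow (m + 1)).fun_mul hexp.fun_neg.exp).deriv.trans ?_
  simp only [Pi.sub_apply, Pi.smul_apply, smul_eq_mul, gumbelPow, Nat.add_sub_cancel]
  push_cast
  ring

lemma pow_mul_exp_neg_le_factorial (j : ℕ) {y : ℝ} (hy : 0 ≤ y) :
    y ^ j * Real.exp (-y) ≤ j.factorial := by
  rw [Real.exp_neg, ← div_eq_mul_inv, div_le_iff₀ (Real.exp_pos y), ← div_le_iff₀' (by positivity)]
  exact Real.pow_div_factorial_le_exp y hy j

lemma abs_pow_mul_gumbelPow_le (k m : ℕ) (v : ℝ) :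
    |v| ^ k * gumbelPow m v ≤ k.factorial * (m.factorial + (m + 2).factorial) := by
  have hpow : |v| ^ k ≤ k.factorial * (Real.exp v + Real.exp (-v)) := by
    rw [← div_le_iff₀' (by positivity)]
    exact (Real.pow_div_factorial_le_exp |v| (abs_nonneg v) k).trans (Real.exp_abs_le v)
  have hcancel : Real.exp v * Real.exp (-v) = 1 := by
    rw [← Real.exp_add, add_neg_cancel, Real.exp_zero]
  calc |v| ^ k * gumbelPow m v
      ≤ k.factorial * (Real.exp v + Real.exp (-v)) * gumbelPow m v := by
        gcongr
        unfold gumbelPow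
        positivity
    _ = k.factorial * (Real.exp (-v) ^ m * Real.exp (-Real.exp (-v)) +
          Real.exp (-v) ^ (m + 2) * Real.exp (-Real.exp (-v))) := by
        unfold gumbelPow
        linear_combination (k.factorial * Real.exp (-v) ^ m * Real.exp (-Real.exp (-v))) * hcancel
    _ ≤ k.factorial * (m.factorial + (m + 2).factorial) := by
        gcongr
        · exact pow_mul_exp_neg_le_factorial m (Real.exp_nonneg _)
        · exact pow_mul_exp_neg_le_factorial (m + 2) (Real.exp_nonneg _)

lemma exists_abs_pow_mul_norm_iteratedDeriv_gumbelPow_le (k n m : ℕ) :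
    ∃ C, ∀ v, |v| ^ k * ‖iteratedDeriv n (gumbelPow m) v‖ ≤ C := by
  induction n generalizing m with
  | zero =>
    refine ⟨_, fun v ↦ le_of_eq_of_le ?_ (abs_pow_mul_gumbelPow_le k m v)⟩
    rw [iteratedDeriv_zero, Real.norm_of_nonneg (by unfold gumbelPow; positivity)]
  | succ n ih =>
    obtain ⟨C, hC⟩ := ih (m + 1)
    obtain ⟨D, hD⟩ := ih m
    refine ⟨C + (m + 1) * D, fun v ↦ ?_⟩
    have hsmooth (j : ℕ) : ContDiffAt ℝ n (gumbelPow j) v :=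
      (contDiff_gumbelPow j).contDiffAt.of_le (mod_cast le_top)
    rw [iteratedDeriv_succ', deriv_gumbelPow,
      iteratedDeriv_sub (g := (m + 1 : ℝ) • gumbelPow m) (hsmooth _)
        ((hsmooth m).const_smul (m + 1 : ℝ)),
      iteratedDeriv_const_smul (hsmooth m) (m + 1 : ℝ)]
    calc |v| ^ k * ‖iteratedDeriv n (gumbelPow (m + 1)) v -
            (m + 1 : ℝ) • iteratedDeriv n (gumbelPow m) v‖
        ≤ |v| ^ k * (‖iteratedDeriv n (gumbelPow (m + 1)) v‖ +
            (m + 1) * ‖iteratedDeriv n (gumbelPow m) v‖) := by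
          gcongr
          refine (norm_sub_le _ _).trans_eq ?_
          rw [norm_smul, Real.norm_of_nonneg (by positivity : (0 : ℝ) ≤ m + 1)]
      _ = |v| ^ k * ‖iteratedDeriv n (gumbelPow (m + 1)) v‖ +
            (m + 1) * (|v| ^ k * ‖iteratedDeriv n (gumbelPow m) v‖) := by ring
      _ ≤ C + (m + 1) * D := by gcongr; exacts [hC v, hD v]

/-- The Gumbel density `e ^ (-v) * exp (-e ^ (-v))` as a complex-valued Schwartz function: the
kernel for which `logConv` is an Abel sum. -/
noncomputable def gumbel : 𝓢(ℝ, ℂ) :=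
  SchwartzMap.postcompCLM Complex.ofRealCLM
    { toFun := gumbelPow 0
      smooth' := contDiff_gumbelPow 0
      decay' := fun k n ↦ by
        simpa only [norm_iteratedFDeriv_eq_norm_iteratedDeriv, Real.norm_eq_abs] using
          exists_abs_pow_mul_norm_iteratedDeriv_gumbelPow_le k n 0 }

lemma gumbel_apply (v : ℝ) :
    gumbel v = (Real.exp (-v) * Real.exp (-Real.exp (-v)) : ℝ) := by
  change ((gumbelPow 0 v : ℝ) : ℂ) = _
  rw [gumbelPow, zero_add, pow_one]

lemma logConv_gumbel {a : ℕ → ℂ} (ha : a 0 = 0) (T : ℝ) :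
    logConv a gumbel T =
      Real.exp (-T) * ∑' n, a n * (Real.exp (-Real.exp (-T)) : ℂ) ^ n := by
  rw [logConv, ← tsum_mul_left]
  refine tsum_congr fun n ↦ ?_
  rcases eq_or_ne n 0 with rfl | hn
  · simp [ha]
  have hexp : Real.exp (-(T - Real.log n)) = n * Real.exp (-T) := by
    rw [neg_sub, sub_eq_add_neg, Real.exp_add, Real.exp_log (by positivity)]
  have hpow : Real.exp (-(n * Real.exp (-T))) = Real.exp (-Real.exp (-T)) ^ n := by
    rw [← Real.exp_nat_mul, mul_neg]
  rw [LSeries.term_of_ne_zero hn, Complex.cpow_one, gumbel_apply, hexp, hpow]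
  push_cast
  field_simp

end Gumbel

section Tauberian

open ArithmeticFunction
open scoped ArithmeticFunction.zeta

lemma logConv_smul_left (c : ℂ) (a : ℕ → ℂ) (φ : 𝓢(ℝ, ℂ)) (T : ℝ) :
    logConv (c • a) φ T = c * logConv a φ T := by
  simp only [logConv, LSeries.term_smul_apply, mul_assoc, tsum_mul_left]

lemma BoundedOnAverage.const_smul {a : ℕ → ℂ} (ha : BoundedOnAverage a) (c : ℂ) :
    BoundedOnAverage (c • a) := by
  obtain ⟨B, hB⟩ := ha
  refine ⟨‖c‖ * B, fun N ↦ ?_⟩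
  simp only [Pi.smul_apply, smul_eq_mul, norm_mul, ← Finset.mul_sum, mul_assoc]
  gcongr
  exact hB N

lemma boundedOnAverage_zeta : BoundedOnAverage ↗ζ :=
  ⟨1, fun N ↦ (Finset.sum_le_card_nsmul _ _ 1 fun n hn ↦ by
    simp [zeta_apply_ne (Nat.one_le_iff_ne_zero.1 (Finset.mem_Icc.1 hn).1)]).trans (by simp)⟩

lemma boundedOnAverage_vonMangoldt : BoundedOnAverage ↗vonMangoldt := by
  refine ⟨Real.log 4 + 4, fun N ↦ le_of_eq_of_le ?_
    (Chebyshev.psi_le_const_mul_self N.cast_nonneg)⟩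
  simp only [Chebyshev.psi, Nat.floor_natCast, Complex.norm_real,
    Real.norm_of_nonneg vonMangoldt_nonneg]
  rfl

lemma continuous_riemannZeta_sub_pole :
    Continuous (Function.update (fun s ↦ riemannZeta s - 1 / (s - 1)) 1
      (Real.eulerMascheroniConstant : ℂ)) := by
  refine continuous_iff_continuousAt.2 fun s ↦ ?_
  rcases eq_or_ne s 1 with rfl | hs
  · exact continuousAt_update_same.2 tendsto_riemannZeta_sub_one_div
  · rw [continuousAt_update_of_ne hs]
    exact (differentiableAt_riemannZeta hs).continuousAt.sub
      (continuousAt_const.div (by fun_prop) (sub_ne_zero.2 hs))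

lemma tendsto_exp_neg_atTop_nhdsGT_zero :
    Tendsto (fun T : ℝ ↦ Real.exp (-T)) atTop (𝓝[>] 0) :=
  tendsto_nhdsWithin_iff.2
    ⟨Real.tendsto_exp_neg_atTop_nhds_zero, .of_forall fun _ ↦ Real.exp_pos _⟩

lemma tendsto_div_exp_sub_one_nhdsGT_zero :
    Tendsto (fun t : ℝ ↦ t / (Real.exp t - 1)) (𝓝[>] 0) (𝓝 1) := by
  simpa [div_eq_mul_inv, mul_comm] using
    ((Real.hasDerivAt_exp 0).tendsto_slope_zero_right.inv₀ (Real.exp_ne_zero 0))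

lemma tsum_zeta_mul_exp_neg_pow {t : ℝ} (ht : 0 < t) :
    ∑' n, ↗ζ n * (Real.exp (-t) : ℂ) ^ n = ((Real.exp t - 1)⁻¹ : ℝ) := by
  have hlt : Real.exp (-t) < 1 := Real.exp_lt_one_iff.2 (neg_lt_zero.2 ht)
  have hsum : HasSum (fun n ↦ (ζ n : ℝ) * Real.exp (-t) ^ n) (Real.exp t - 1)⁻¹ := by
    refine (hasSum_nat_add_iff' 1).1 ?_
    convert! (hasSum_geometric_of_lt_one (Real.exp_nonneg (-t)) hlt).mul_left (Real.exp (-t))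
      using 1
    · ext n
      simp [pow_succ']
    · rw [Real.exp_neg]
      simp only [Finset.range_one, Finset.sum_singleton, zeta_apply, if_true, Nat.cast_zero,
        zero_mul, sub_zero]
      field_simp
  rw [← hsum.tsum_eq, Complex.ofReal_tsum]
  push_cast
  rfl

lemma tendsto_logConv_zeta_gumbel : Tendsto (logConv ↗ζ gumbel) atTop (𝓝 1) := by
  refine ((Complex.continuous_ofReal.tendsto' 1 1 Complex.ofReal_one).comp
    (tendsto_div_exp_sub_one_nhdsGT_zero.comp tendsto_exp_neg_atTop_nhdsGT_zero)).congr fun T ↦ ?_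
  rw [logConv_gumbel (by simp), tsum_zeta_mul_exp_neg_pow (Real.exp_pos _)]
  simp [div_eq_mul_inv]

theorem BoundedOnAverage.tendsto_logConv_gumbel {a : ℕ → ℂ} {F : ℂ → ℂ} {c : ℂ}
    (ha : BoundedOnAverage a) (hF : ContinuousOn F {s | 1 ≤ s.re})
    (hFa : Set.EqOn F (fun s ↦ LSeries a s - c / (s - 1)) {s | 1 < s.re}) :
    Tendsto (logConv a gumbel) atTop (𝓝 c) := by
  have hζ : BoundedOnAverage (c • ↗ζ) := boundedOnAverage_zeta.const_smul c
  have hsub : Tendsto (logConv (a - c • ↗ζ) gumbel) atTop (𝓝 0) := by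
    refine (ha.sub hζ).tendsto_logConv
      (hF.sub ((continuous_const_mul c).comp continuous_riemannZeta_sub_pole).continuousOn)
      (fun s (hs : 1 < s.re) ↦ ?_) gumbel
    have hs₁ : s ≠ 1 := by rintro rfl; simp at hs
    rw [LSeries_sub (ha.lseriesSummable hs) (hζ.lseriesSummable hs), LSeries_smul,
      LSeries_zeta_eq_riemannZeta hs, Pi.sub_apply, Function.comp_apply, hFa hs,
      Function.update_of_ne hs₁]
    ring
  have hadd := hsub.add (tendsto_logConv_zeta_gumbel.const_mul c)
  rw [zero_add, mul_one] at hadd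
  refine hadd.congr fun T ↦ ?_
  rw [ha.logConv_sub_left hζ, logConv_smul_left, sub_add_cancel]

end Tauberian

section PrimesInResidueClass

open ArithmeticFunction ArithmeticFunction.vonMangoldt
open scoped ArithmeticFunction.zeta

variable {q : ℕ} (a : ZMod q)

/-- The indicator function of the primes congruent to `a` modulo `q`, as complex coefficients of a
Dirichlet series. -/
def primeIndicator (n : ℕ) : ℂ := if n.Prime ∧ (n : ZMod q) = a then 1 else 0

/-- The power series `∑ z ^ p` over the primes `p` congruent to `a` modulo `q`; for `a = 1` and
`q = 2` this is `fOdd`. -/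
noncomputable def primeSeries (z : ℝ) : ℝ :=
  ∑' p : ℕ, if p.Prime ∧ (p : ZMod q) = a then z ^ p else 0

lemma fOdd_eq_primeSeries (z : ℝ) : fOdd z = primeSeries (1 : ZMod 2) z := by
  simp only [fOdd, primeSeries, ZMod.natCast_eq_one_iff_odd]

lemma logConv_primeIndicator_gumbel (T : ℝ) :
    logConv (primeIndicator a) gumbel T =
      (Real.exp (-T) * primeSeries a (Real.exp (-Real.exp (-T))) : ℝ) := by
  rw [logConv_gumbel (by simp [primeIndicator, Nat.not_prime_zero]), Complex.ofReal_mul,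
    primeSeries, Complex.ofReal_tsum]
  congr 1
  refine tsum_congr fun n ↦ ?_
  unfold primeIndicator
  split_ifs <;> simp

lemma log_mul_primeIndicator_eq (n : ℕ) :
    Real.log n * primeIndicator a n = if n.Prime then (residueClass a n : ℂ) else 0 := by
  by_cases hn : n.Prime
  · by_cases hna : (n : ZMod q) = a <;>
      simp [primeIndicator, residueClass, hn, hna, vonMangoldt_apply_prime]
  · simp [primeIndicator, hn]

lemma boundedOnAverage_residueClass : BoundedOnAverage ↗(residueClass a) :=
  boundedOnAverage_vonMangoldt.of_norm_le fun n ↦ by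
    simpa [abs_of_nonneg (residueClass_nonneg a n), abs_of_nonneg vonMangoldt_nonneg] using
      residueClass_le a n

lemma boundedOnAverage_log_mul_primeIndicator :
    BoundedOnAverage fun n ↦ Real.log n * primeIndicator a n :=
  (boundedOnAverage_residueClass a).of_norm_le fun n ↦ by
    rw [log_mul_primeIndicator_eq]
    split_ifs <;> simp

lemma boundedOnAverage_primeIndicator : BoundedOnAverage (primeIndicator a) :=
  boundedOnAverage_zeta.of_norm_le fun n ↦ by
    rcases eq_or_ne n 0 with rfl | hn
    · simp [primeIndicator, Nat.not_prime_zero]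
    · unfold primeIndicator
      split_ifs <;> simp [hn]

lemma lseriesSummable_residueClass_sub_log_mul_primeIndicator [NeZero q] :
    LSeriesSummable (↗(residueClass a) - fun n : ℕ ↦ Real.log n * primeIndicator a n) 1 := by
  refine (Complex.summable_ofReal.2 (summable_residueClass_non_primes_div a)).congr fun n ↦ ?_
  rcases eq_or_ne n 0 with rfl | hn
  · simp
  rw [LSeries.term_of_ne_zero hn, Complex.cpow_one, Pi.sub_apply, log_mul_primeIndicator_eq]
  split_ifs <;> simp

variable {a}

theorem tendsto_mul_primeSeries_exp_neg_exp_neg [NeZero q] (ha : IsUnit a) :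
    Tendsto (fun T : ℝ ↦ T * (Real.exp (-T) * primeSeries a (Real.exp (-Real.exp (-T)))))
      atTop (𝓝 (q.totient : ℝ)⁻¹) := by
  have hΛ : Tendsto (logConv ↗(residueClass a) gumbel) atTop (𝓝 (q.totient : ℂ)⁻¹) :=
    (boundedOnAverage_residueClass a).tendsto_logConv_gumbel
      (continuousOn_LFunctionResidueClassAux a) (eqOn_LFunctionResidueClassAux ha)
  have hpow := tendsto_logConv_of_lseriesSummable
    (lseriesSummable_residueClass_sub_log_mul_primeIndicator a) gumbel
  have hlog := (boundedOnAverage_primeIndicator a).tendsto_mul_logConv_sub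
    (boundedOnAverage_log_mul_primeIndicator a) gumbel
  have hprime := hlog.add (hΛ.sub hpow)
  simp only [(boundedOnAverage_residueClass a).logConv_sub_left
    (boundedOnAverage_log_mul_primeIndicator a), sub_sub_cancel, sub_add_cancel, sub_zero,
    zero_add, logConv_primeIndicator_gumbel] at hprime
  rw [← tendsto_ofReal_iff]
  push_cast at hprime ⊢
  exact hprime

theorem fOdd_exp_asymptotic_general [NeZero q] (ha : IsUnit a) :
    Tendsto (fun t : ℝ ↦ primeSeries a (Real.exp (-t)) * (t * Real.log (1 / t))) (𝓝[>] 0)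
      (𝓝 (q.totient : ℝ)⁻¹) := by
  have hlog : Tendsto (fun t ↦ -Real.log t) (𝓝[>] 0) atTop :=
    tendsto_neg_atBot_atTop.comp Real.tendsto_log_nhdsGT_zero
  refine ((tendsto_mul_primeSeries_exp_neg_exp_neg ha).comp hlog).congr' ?_
  filter_upwards [self_mem_nhdsWithin] with t (ht : 0 < t)
  simp only [Function.comp_apply, neg_neg, Real.exp_log ht, one_div, Real.log_inv]
  ring

end PrimesInResidueClass

/-- `f(e^{−t}) ~ 1/(t·log(1/t))` as `t → 0⁺`. -/
theorem fOdd_exp_asymptotic :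
    Tendsto (fun t : ℝ => fOdd (Real.exp (-t)) * (t * Real.log (1 / t)))
      (𝓝[>] 0) (𝓝 1) := by
  simpa [fOdd_eq_primeSeries] using fOdd_exp_asymptotic_general (isUnit_one : IsUnit (1 : ZMod 2))
end

section
/- Let π(y) denote the number of primes not exceeding y, and for t > 0 set I(t) = t·∫₀^∞ y·e^{−yt}·π(y) dy. Then I(t) ~ 2/(t²·log(1/t)) as t → 0⁺. -/
open Filter Topology Asymptotics MeasureTheory

/-- `I(t) = t·∫₀^∞ y·e^{−yt}·π(y) dy`. -/
noncomputable def Ifun (t : ℝ) : ℝ :=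
  t * ∫ y in Set.Ioi (0 : ℝ), y * Real.exp (-(y * t)) * (primePi y : ℝ)

open scoped FourierTransform SchwartzMap ComplexOrder ComplexConjugate

/-! Wiener–Ikehara: the Laplace transform of `b(u) = e⁻ᵘ ψ(eᵘ) - 1` extends continuously to
`Re z ≥ 0`, because `ζ` has no zeros on `Re s = 1`. Averaging `b` against a translate of a
nonnegative kernel `𝓕 φ` with `φ` of compact support therefore gives a Fourier coefficient of a
continuous compactly supported function, which tends to `0` by Riemann–Lebesgue. Such kernels can
be concentrated near `0` at will, and `b` cannot drop quickly, so `b → 0`; this is the prime number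
theorem `F(y) = π(y) log y / y → 1`.

Substituting `y = z / t` and writing `log (1 / t) = log (z / t) - log z` yields
`I(t) t² log (1 / t) = ∫ z² e⁻ᶻ F(z / t) dz - ∫ z² e⁻ᶻ log z G(z / t) dz`, where
`G(y) = π(y) / y → 0`. As `F` and `G` are bounded, dominated convergence gives the limit
`∫ z² e⁻ᶻ dz = 2`.
-/

section Fourier

lemma fourier_fourierChar_smul {E : Type*} [NormedAddCommGroup E] [NormedSpace ℂ E] (φ : ℝ → E)
    (x w : ℝ) : 𝓕 (fun ξ => 𝐞 (ξ * x) • φ ξ) w = 𝓕 φ (w - x) := by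
  simp only [Real.fourier_real_eq, smul_smul, ← AddChar.map_add_eq_mul]
  congr! 4
  ring

lemma integral_fourier_sub_mul {φ g : ℝ → ℂ} (hφ : Integrable φ) (hg : Integrable g) (x : ℝ) :
    ∫ u, 𝓕 φ (u - x) * g u = 𝓕 (fun ξ => φ ξ * 𝓕 g ξ) (-x) := by
  have hmod : Integrable (fun ξ => 𝐞 (ξ * x) • φ ξ) := by
    simpa [mul_comm] using (Real.fourierIntegral_convergent_iff (μ := volume) (-x)).2 hφ
  calc ∫ u, 𝓕 φ (u - x) * g u
      = ∫ u, 𝓕 (fun ξ => 𝐞 (ξ * x) • φ ξ) u • g u := by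
        simp only [fourier_fourierChar_smul, smul_eq_mul]
    _ = ∫ ξ, (𝐞 (ξ * x) • φ ξ) • 𝓕 g ξ := by
        simpa using! VectorFourier.integral_fourierIntegral_smul_eq_flip (L := innerₗ ℝ)
          Real.continuous_fourierChar continuous_inner hmod hg
    _ = 𝓕 (fun ξ => φ ξ * 𝓕 g ξ) (-x) := by
        simp [Real.fourier_real_eq, smul_mul_assoc]

lemma conj_fourier (φ : ℝ → ℂ) (w : ℝ) :
    conj (𝓕 φ w) = 𝓕 (fun ξ => conj (φ (-ξ))) w := by
  rw [Real.fourier_real_eq, Real.fourier_real_eq, ← integral_conj, ← integral_neg_eq_self]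
  congr! 2
  simp [Circle.smul_def, ← Circle.coe_inv_eq_conj, ← AddChar.map_neg_eq_inv]

lemma fourier_comp_mul_left {E : Type*} [NormedAddCommGroup E] [NormedSpace ℂ E] (φ : ℝ → E)
    {a : ℝ} (ha : a ≠ 0) (w : ℝ) : 𝓕 (fun ξ => φ (a * ξ)) w = |a⁻¹| • 𝓕 φ (a⁻¹ * w) := by
  rw [Real.fourier_real_eq, Real.fourier_real_eq, ← Measure.integral_comp_mul_left]
  congr! 4
  field_simp

-- The convolution square of an even real bump function has Fourier transform a real square.
lemma exists_fourier_nonneg : ∃ φ : 𝓢(ℝ, ℂ), HasCompactSupport φ ∧ (∀ w, 0 ≤ 𝓕 φ w) ∧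
    ∫ w, ‖𝓕 φ w‖ = 1 := by
  let f : ContDiffBump (0 : ℝ) := ⟨1, 2, by norm_num, by norm_num⟩
  have hsupp : HasCompactSupport (fun x => (f x : ℂ)) :=
    f.hasCompactSupport.comp_left Complex.ofReal_zero
  let g : 𝓢(ℝ, ℂ) := hsupp.toSchwartzMap (Complex.ofRealCLM.contDiff.comp f.contDiff)
  have hg (x : ℝ) : g x = f x := rfl
  have hconj (w : ℝ) : conj (𝓕 g w) = 𝓕 g w := by
    rw [SchwartzMap.fourier_coe, conj_fourier]
    simp only [hg, f.neg, Complex.conj_ofReal]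
    rfl
  set c := ∫ x, ‖g x‖ ^ 2
  have hc : 0 < c := by
    have hg0 : g 0 = 1 := by simp [hg, f.one_of_mem_closedBall, f.rIn_pos.le]
    exact (g.continuous.norm.pow 2).integral_pos_of_hasCompactSupport_nonneg_nonzero (x := 0)
      (hsupp.norm.comp_left (g := (· ^ 2)) (by simp)) (fun _ => by positivity) (by simp [hg0])
  let φ : 𝓢(ℝ, ℂ) := c⁻¹ • SchwartzMap.convolution (.mul ℂ ℂ) g g
  have hφ (w : ℝ) : 𝓕 φ w = (c⁻¹ * ‖𝓕 g w‖ ^ 2 : ℝ) := by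
    rw [FourierTransform.fourier_smul, SchwartzMap.fourier_convolution, Complex.ofReal_mul,
      Complex.ofReal_pow, ← Complex.conj_mul', hconj]
    simp
  refine ⟨φ, ?_, fun w => ?_, ?_⟩
  · refine HasCompactSupport.smul_left ?_
    rw [funext (SchwartzMap.convolution_apply (.mul ℂ ℂ) g g)]
    exact hsupp.convolution _ hsupp
  · rw [hφ]
    exact Complex.zero_le_real.2 (by positivity)
  · have hnorm (w : ℝ) : ‖𝓕 φ w‖ = c⁻¹ * ‖𝓕 g w‖ ^ 2 := by
      rw [hφ, Complex.norm_real, Real.norm_of_nonneg (by positivity)]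
    simp only [hnorm]
    rw [integral_const_mul, SchwartzMap.integral_norm_sq_fourier, inv_mul_cancel₀ hc.ne']

lemma exists_concentrated_kernel {η : ℝ} (hη : 0 < η) : ∃ φ : ℝ → ℂ, Continuous φ ∧
    HasCompactSupport φ ∧ (∀ w, 0 ≤ 𝓕 φ w) ∧ ∫ w, ‖𝓕 φ w‖ = 1 ∧
    Integrable (fun w => |w| * ‖𝓕 φ w‖) ∧ ∫ w, |w| * ‖𝓕 φ w‖ ≤ η := by
  obtain ⟨φ, hsupp, hnonneg, hmass⟩ := exists_fourier_nonneg
  have hmoment : Integrable (fun w => |w| * ‖𝓕 φ w‖) := by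
    have := (𝓕 φ).integrable_pow_mul volume 1
    simp only [pow_one, Real.norm_eq_abs] at this
    exact this
  set m := ∫ w, |w| * ‖𝓕 φ w‖
  have hm : 0 ≤ m := integral_nonneg fun w => by positivity
  obtain ⟨ε, hε, hεm⟩ : ∃ ε > 0, ε * m ≤ η :=
    ⟨η / (m + 1), by positivity, by field_simp; linarith⟩
  have hnorm (w : ℝ) : ‖𝓕 (fun ξ => φ (ε * ξ)) w‖ = ε⁻¹ * ‖𝓕 φ (ε⁻¹ * w)‖ := by
    rw [fourier_comp_mul_left _ hε.ne', norm_smul, abs_of_pos (inv_pos.2 hε),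
      Real.norm_of_nonneg (inv_pos.2 hε).le, SchwartzMap.fourier_coe]
  have hweight (w : ℝ) :
      |w| * ‖𝓕 (fun ξ => φ (ε * ξ)) w‖ = |ε⁻¹ * w| * ‖𝓕 φ (ε⁻¹ * w)‖ := by
    rw [hnorm, abs_mul, abs_of_pos (inv_pos.2 hε)]
    ring
  refine ⟨fun ξ => φ (ε * ξ), by fun_prop,
    hsupp.comp_homeomorph (Homeomorph.mulLeft₀ ε hε.ne'), fun w => ?_, ?_, ?_, ?_⟩
  · rw [fourier_comp_mul_left _ hε.ne']
    exact smul_nonneg (abs_nonneg _) (hnonneg _)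
  · simp only [hnorm]
    rw [integral_const_mul, Measure.integral_comp_mul_left (fun w => ‖𝓕 φ w‖), hmass, inv_inv,
      abs_of_pos hε, smul_eq_mul, mul_one, inv_mul_cancel₀ hε.ne']
  · simp only [hweight]
    exact hmoment.comp_mul_left' (inv_ne_zero hε.ne')
  · simp only [hweight]
    rwa [Measure.integral_comp_mul_left (fun w => |w| * ‖𝓕 φ w‖), inv_inv, abs_of_pos hε,
      smul_eq_mul]

end Fourier

/-- The one-sided Laplace transform `∫₀^∞ b(u) e^{-zu} du`. It is `0` where the integrand is not
integrable; below, `b` is bounded and `Re z > 0`. -/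
noncomputable def laplaceTransform (b : ℝ → ℂ) (z : ℂ) : ℂ :=
  ∫ u in Set.Ioi (0 : ℝ), b u * Complex.exp (-z * u)

section Laplace

variable {b : ℝ → ℂ} {C : ℝ} {B : ℂ → ℂ} {φ : ℝ → ℂ}

lemma integrableOn_mul_exp (hb : Measurable b) (hbC : ∀ u, ‖b u‖ ≤ C) {z : ℂ}
    (hz : 0 < z.re) : IntegrableOn (fun u : ℝ => b u * Complex.exp (-z * u)) (Set.Ioi 0) :=
  (integrableOn_exp_mul_complex_Ioi (by simpa using hz) 0).bdd_mul hb.aestronglyMeasurable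
    (.of_forall hbC)

lemma laplaceTransform_sub_const {b : ℝ → ℂ} (hb : Measurable b) (hbC : ∀ u, ‖b u‖ ≤ C) (c : ℂ)
    {z : ℂ} (hz : 0 < z.re) :
    laplaceTransform (fun u => b u - c) z = laplaceTransform b z - c / z := by
  have hconst : ∫ u in Set.Ioi (0 : ℝ), Complex.exp (-z * u) = 1 / z := by
    rw [integral_exp_mul_complex_Ioi (by simpa using hz)]
    simp
  have hexp : IntegrableOn (fun u : ℝ => Complex.exp (-z * u)) (Set.Ioi 0) :=
    integrableOn_exp_mul_complex_Ioi (by simpa using hz) 0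
  simp only [laplaceTransform, sub_mul]
  rw [integral_sub (integrableOn_mul_exp hb hbC hz) (hexp.const_mul c), integral_const_mul, hconst,
    mul_one_div]

lemma fourier_indicator_mul_exp (b : ℝ → ℂ) (σ ξ : ℝ) :
    𝓕 ((Set.Ioi 0).indicator fun u : ℝ => b u * Complex.exp (-σ * u)) ξ =
      laplaceTransform b (σ + 2 * Real.pi * ξ * Complex.I) := by
  rw [Real.fourier_real_eq, laplaceTransform, ← integral_indicator measurableSet_Ioi]
  refine integral_congr_ae (.of_forall fun u => ?_)
  by_cases hu : u ∈ Set.Ioi 0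
  · simp only [Set.indicator_of_mem hu, Circle.smul_def, Real.fourierChar_apply, smul_eq_mul]
    rw [mul_left_comm, ← Complex.exp_add]
    congr 2
    push_cast
    ring
  · simp only [Set.indicator_of_notMem hu, smul_zero]

lemma integral_fourier_sub_mul_exp (hb : Measurable b) (hbC : ∀ u, ‖b u‖ ≤ C)
    (hφ : Integrable φ) {σ : ℝ} (hσ : 0 < σ) (x : ℝ) :
    ∫ u in Set.Ioi 0, 𝓕 φ (u - x) * (b u * Complex.exp (-σ * u)) =
      𝓕 (fun ξ : ℝ => φ ξ * laplaceTransform b (σ + 2 * Real.pi * ξ * Complex.I)) (-x) := by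
  have hg : Integrable ((Set.Ioi 0).indicator fun u : ℝ => b u * Complex.exp (-σ * u)) :=
    (integrableOn_mul_exp hb hbC (by simpa using hσ)).integrable_indicator measurableSet_Ioi
  rw [← integral_indicator measurableSet_Ioi]
  simp only [← fourier_indicator_mul_exp]
  rw [← integral_fourier_sub_mul hφ hg]
  simp only [Set.indicator_mul_right]

lemma tendsto_integral_mul_exp {k : ℝ → ℂ} (hk : IntegrableOn k (Set.Ioi 0)) :
    Tendsto (fun σ : ℝ => ∫ u in Set.Ioi 0, k u * Complex.exp (-σ * u)) (𝓝[>] 0)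
      (𝓝 (∫ u in Set.Ioi 0, k u)) := by
  refine tendsto_integral_filter_of_dominated_convergence (fun u => ‖k u‖)
    (.of_forall fun σ => hk.aestronglyMeasurable.mul (by fun_prop)) ?_ hk.norm
    (.of_forall fun u => ?_)
  · filter_upwards [self_mem_nhdsWithin] with σ (hσ : 0 < σ)
    filter_upwards [ae_restrict_mem measurableSet_Ioi] with u (hu : 0 < u)
    rw [norm_mul, Complex.norm_exp]
    refine mul_le_of_le_one_right (norm_nonneg _) (Real.exp_le_one_iff.2 ?_)
    simpa using (mul_pos hσ hu).le
  · have hcont : Continuous fun σ : ℝ => k u * Complex.exp (-σ * u) := by fun_prop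
    simpa using (hcont.tendsto 0).mono_left nhdsWithin_le_nhds

lemma tendsto_fourier_mul_comp_vertical (hφ : Continuous φ) (hφc : HasCompactSupport φ)
    (hB : ContinuousOn B {z | 0 ≤ z.re}) (x : ℝ) :
    Tendsto (fun σ : ℝ => 𝓕 (fun ξ : ℝ => φ ξ * B (σ + 2 * Real.pi * ξ * Complex.I)) x)
      (𝓝[>] 0) (𝓝 (𝓕 (fun ξ : ℝ => φ ξ * B (2 * Real.pi * ξ * Complex.I)) x)) := by
  simp only [Real.fourier_real_eq]
  have hBσ : ContinuousOn (fun p : ℝ × ℝ => B (p.1 + 2 * Real.pi * p.2 * Complex.I))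
      (Set.Ici 0 ×ˢ Set.univ) :=
    hB.comp (by fun_prop) fun p hp => by simpa using hp.1
  obtain ⟨M, hM⟩ := (isCompact_Icc (a := (0 : ℝ)) (b := 1)).prod hφc
    |>.exists_bound_of_continuousOn (hBσ.mono (Set.prod_mono Set.Icc_subset_Ici_self
      (Set.subset_univ _)))
  refine tendsto_integral_filter_of_dominated_convergence (fun ξ => ‖φ ξ‖ * M) ?_ ?_
    ((hφ.integrable_of_hasCompactSupport hφc).norm.mul_const M) (.of_forall fun ξ => ?_)
  · filter_upwards [self_mem_nhdsWithin] with σ (hσ : 0 < σ)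
    have hBσ : Continuous fun ξ : ℝ => B (σ + 2 * Real.pi * ξ * Complex.I) :=
      hBσ.comp_continuous (f := fun ξ : ℝ => (σ, ξ)) (by fun_prop) fun ξ => ⟨hσ.le, trivial⟩
    exact ((Real.continuous_fourierChar.comp (by fun_prop)).smul
      (hφ.mul hBσ)).aestronglyMeasurable
  · filter_upwards [self_mem_nhdsWithin, nhdsWithin_le_nhds (Iio_mem_nhds (zero_lt_one' ℝ))]
      with σ (hσ : 0 < σ) (hσ1 : σ < 1)
    refine .of_forall fun ξ => ?_
    rw [Circle.norm_smul, norm_mul]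
    by_cases hξ : φ ξ = 0
    · simp [hξ]
    · exact mul_le_mul_of_nonneg_left
        (hM (σ, ξ) ⟨⟨hσ.le, hσ1.le⟩, subset_tsupport _ hξ⟩) (norm_nonneg _)
  · have hBξ : ContinuousOn (fun σ : ℝ => B (σ + 2 * Real.pi * ξ * Complex.I)) (Set.Ici 0) :=
      hBσ.comp (f := fun σ : ℝ => (σ, ξ)) (by fun_prop) fun σ hσ => ⟨hσ, trivial⟩
    have hlim := ((hBξ 0 Set.self_mem_Ici).mono Set.Ioi_subset_Ici_self).tendsto
    simpa using! (hlim.const_mul (φ ξ)).const_smul (𝐞 (-(ξ * x)))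

theorem tendsto_integral_fourier_sub_mul_of_laplaceTransform (hb : Measurable b)
    (hbC : ∀ u, ‖b u‖ ≤ C) (hB : ContinuousOn B {z | 0 ≤ z.re})
    (hBb : Set.EqOn (laplaceTransform b) B {z | 0 < z.re}) (hφ : Continuous φ)
    (hφc : HasCompactSupport φ) (hFφ : Integrable (𝓕 φ)) :
    Tendsto (fun x => ∫ u in Set.Ioi 0, 𝓕 φ (u - x) * b u) atTop (𝓝 0) := by
  have hφi : Integrable φ := hφ.integrable_of_hasCompactSupport hφc
  have hboundary (x : ℝ) : ∫ u in Set.Ioi 0, 𝓕 φ (u - x) * b u =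
      𝓕 (fun ξ : ℝ => φ ξ * B (2 * Real.pi * ξ * Complex.I)) (-x) := by
    have hint : IntegrableOn (fun u => 𝓕 φ (u - x) * b u) (Set.Ioi 0) :=
      ((hFφ.comp_sub_right x).mul_bdd hb.aestronglyMeasurable (.of_forall hbC)).integrableOn
    refine tendsto_nhds_unique (tendsto_integral_mul_exp hint)
      ((tendsto_fourier_mul_comp_vertical hφ hφc hB (-x)).congr' ?_)
    filter_upwards [self_mem_nhdsWithin] with σ (hσ : 0 < σ)
    simp only [mul_assoc (𝓕 φ _)]
    rw [integral_fourier_sub_mul_exp hb hbC hφi hσ]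
    congr! 3 with ξ
    exact (hBb (by simpa using hσ)).symm
  simp only [hboundary]
  exact (Real.zero_at_infty_fourier _).comp
    (tendsto_neg_atTop_atBot.mono_right atBot_le_cocompact)

end Laplace

/-- Schmidt's Tauberian condition `lim inf (b(y) - b(x)) ≥ 0` as `x → ∞` and `y - x → 0⁺`. -/
def SlowlyDecreasing (b : ℝ → ℝ) : Prop :=
  ∀ η > 0, ∃ δ > 0, ∀ᶠ x in atTop, ∀ y ∈ Set.Icc x (x + δ), b x - η ≤ b y

section Tauberian

variable {b : ℝ → ℝ} {C : ℝ}

lemma sub_mul_abs_le_of_le_on_Icc (hbC : ∀ u, |b u| ≤ C) {x δ β : ℝ} (hδ : 0 < δ)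
    (hβ : ∀ u ∈ Set.Icc (x - δ) (x + δ), β ≤ b u) (u : ℝ) :
    β - 2 * C / δ * |u - x| ≤ b u := by
  have hC : 0 ≤ C := (abs_nonneg _).trans (hbC x)
  by_cases hu : |u - x| ≤ δ
  · have := hβ u ⟨by linarith [(abs_le.1 hu).1], by linarith [(abs_le.1 hu).2]⟩
    have : 0 ≤ 2 * C / δ * |u - x| := by positivity
    linarith
  · have hβC : β ≤ C :=
      (hβ x ⟨by linarith, by linarith⟩).trans ((le_abs_self _).trans (hbC x))
    have hfar : 2 * C ≤ 2 * C / δ * |u - x| := by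
      rw [div_mul_eq_mul_div, le_div_iff₀ hδ]
      gcongr
      exact (not_le.1 hu).le
    linarith [(abs_le.1 (hbC u)).1]

lemma le_integral_kernel_mul {K : ℝ → ℝ} (hK : ∀ w, 0 ≤ K w) (hmass : ∫ w, K w = 1)
    (hmoment : Integrable fun w => |w| * K w) (hb : Measurable b) (hbC : ∀ u, |b u| ≤ C)
    {s : Set ℝ} (hs : MeasurableSet s) {x δ β : ℝ} (hδ : 0 < δ)
    (hsub : Set.Icc (x - δ) (x + δ) ⊆ s) (hβ : ∀ u ∈ Set.Icc (x - δ) (x + δ), β ≤ b u) :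
    β - 2 * C / δ * ∫ w, |w| * K w ≤ ∫ u in s, K (u - x) * b u := by
  have hKi : Integrable K := .of_integral_ne_zero (by simp [hmass])
  have hbs (u : ℝ) : |s.indicator b u| ≤ C := (norm_indicator_le_norm_self b u).trans (hbC u)
  have hlower : Integrable fun w => β * K w - 2 * C / δ * (|w| * K w) :=
    (hKi.const_mul β).sub (hmoment.const_mul _)
  have hle (u : ℝ) : β * K (u - x) - 2 * C / δ * (|u - x| * K (u - x)) ≤
      K (u - x) * s.indicator b u := by
    have hpt := sub_mul_abs_le_of_le_on_Icc hbs hδ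
      (fun v hv => (hβ v hv).trans_eq (Set.indicator_of_mem (hsub hv) b).symm) u
    linarith [mul_le_mul_of_nonneg_left hpt (hK (u - x))]
  calc β - 2 * C / δ * ∫ w, |w| * K w
      = ∫ w, (β * K w - 2 * C / δ * (|w| * K w)) := by
        rw [integral_sub (hKi.const_mul β) (hmoment.const_mul _), integral_const_mul,
          integral_const_mul, hmass, mul_one]
    _ = ∫ u, (β * K (u - x) - 2 * C / δ * (|u - x| * K (u - x))) :=
        (integral_sub_right_eq_self _ x).symm
    _ ≤ ∫ u, K (u - x) * s.indicator b u :=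
        integral_mono (hlower.comp_sub_right x) ((hKi.comp_sub_right x).mul_bdd
          (hb.indicator hs).aestronglyMeasurable (.of_forall hbs)) hle
    _ = ∫ u in s, K (u - x) * b u := by
        rw [← integral_indicator hs]
        simp only [Set.indicator_mul_right]

lemma SlowlyDecreasing.exists_pos_eventually_forall_Icc (hslow : SlowlyDecreasing b) {η : ℝ}
    (hη : 0 < η) : ∃ δ > 0, ∀ᶠ x in atTop,
      (∀ u ∈ Set.Icc x (x + 2 * δ), b x - η ≤ b u) ∧
      ∀ u ∈ Set.Icc (x - 2 * δ) x, b u ≤ b x + η := by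
  obtain ⟨δ, hδ, h⟩ := hslow η hη
  obtain ⟨N, hN⟩ := eventually_atTop.1 h
  refine ⟨δ / 2, by positivity, ?_⟩
  rw [mul_div_cancel₀ δ two_ne_zero]
  filter_upwards [eventually_ge_atTop (N + δ)] with x hx
  refine ⟨hN x (by linarith), fun u hu => ?_⟩
  have := hN u (by linarith [hu.1]) x ⟨hu.2, by linarith [hu.1]⟩
  linarith

theorem SlowlyDecreasing.tendsto_zero_of_kernel_averages (hslow : SlowlyDecreasing b)
    (hb : Measurable b) (hbC : ∀ u, |b u| ≤ C)
    (hkernel : ∀ η > 0, ∃ K : ℝ → ℝ, (∀ w, 0 ≤ K w) ∧ ∫ w, K w = 1 ∧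
      Integrable (fun w => |w| * K w) ∧ ∫ w, |w| * K w ≤ η ∧
      Tendsto (fun x => ∫ u in Set.Ioi 0, K (u - x) * b u) atTop (𝓝 0)) :
    Tendsto b atTop (𝓝 0) := by
  have hC : 0 ≤ C := (abs_nonneg _).trans (hbC 0)
  rw [Metric.tendsto_nhds]
  intro η hη
  obtain ⟨δ, hδ, hslowδ⟩ := hslow.exists_pos_eventually_forall_Icc (η := η / 3) (by positivity)
  obtain ⟨η', hη', hη'C⟩ : ∃ η' > 0, 2 * C / δ * η' < η / 3 :=
    ⟨δ * η / (6 * (C + 1)), by positivity, by field_simp; linarith⟩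
  obtain ⟨K, hK, hmass, hmoment, hconc, hlim⟩ := hkernel η' hη'
  have herror : 2 * C / δ * ∫ w, |w| * K w < η / 3 :=
    (mul_le_mul_of_nonneg_left hconc (by positivity)).trans_lt hη'C
  have hsmall : ∀ᶠ x in atTop, |∫ u in Set.Ioi 0, K (u - x) * b u| < η / 3 := by
    simpa using Metric.tendsto_nhds.1 hlim (η / 3) (by positivity)
  have hpos {x : ℝ} (hx : δ < x) : Set.Icc (x - δ) (x + δ) ⊆ Set.Ioi 0 :=
    fun u hu => by have := hu.1; simp only [Set.mem_Ioi]; linarith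
  filter_upwards [hslowδ,
    (tendsto_atTop_add_const_right _ δ tendsto_id).eventually hsmall,
    (tendsto_atTop_add_const_right _ (-δ) tendsto_id).eventually hsmall,
    eventually_gt_atTop (2 * δ)] with x ⟨hright, hleft⟩ hsr hsl hx
  -- `b` stays above `b x - η / 3` around `x + δ` and below `b x + η / 3` around `x - δ`.
  have hr := le_integral_kernel_mul (x := x + δ) hK hmass hmoment hb hbC measurableSet_Ioi hδ
    (hpos (by linarith)) fun u hu => hright u ⟨by linarith [hu.1], by linarith [hu.2]⟩
  have hl := le_integral_kernel_mul (x := x - δ) (β := -b x - η / 3) hK hmass hmoment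
    hb.neg (by simpa using hbC) measurableSet_Ioi hδ (hpos (by linarith)) fun u hu => by
      have := hleft u ⟨by linarith [hu.1], by linarith [hu.2]⟩
      simp only [Pi.neg_apply]
      linarith
  simp only [id_eq, ← sub_eq_add_neg, abs_lt, Pi.neg_apply, mul_neg, integral_neg] at hsr hsl hl
  rw [Real.dist_0_eq_abs, abs_lt]
  constructor <;> linarith

theorem SlowlyDecreasing.tendsto_zero (hslow : SlowlyDecreasing b) (hb : Measurable b)
    (hbC : ∀ u, |b u| ≤ C) {B : ℂ → ℂ} (hB : ContinuousOn B {z | 0 ≤ z.re})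
    (hBb : Set.EqOn (laplaceTransform fun u => b u) B {z | 0 < z.re}) :
    Tendsto b atTop (𝓝 0) := by
  refine hslow.tendsto_zero_of_kernel_averages hb hbC fun η hη => ?_
  obtain ⟨φ, hφ, hφc, hnonneg, hmass, hmoment, hconc⟩ := exists_concentrated_kernel hη
  refine ⟨fun w => ‖𝓕 φ w‖, fun w => norm_nonneg _, hmass, hmoment, hconc, ?_⟩
  have hFφ_cont : Continuous (𝓕 φ) := VectorFourier.fourierIntegral_continuous (L := innerₗ ℝ)
    Real.continuous_fourierChar continuous_inner (hφ.integrable_of_hasCompactSupport hφc)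
  have hFφ : Integrable (𝓕 φ) :=
    (integrable_norm_iff hFφ_cont.aestronglyMeasurable).1
      (.of_integral_ne_zero (by simp [hmass]))
  have hlim := tendsto_integral_fourier_sub_mul_of_laplaceTransform
    (Complex.measurable_ofReal.comp hb) (C := C) (by simpa using hbC) hB hBb hφ hφc hFφ
  rw [← tendsto_ofReal_iff]
  refine (Complex.ofReal_zero ▸ hlim).congr fun x => ?_
  rw [← integral_complex_ofReal]
  congr! 2 with u
  simp [← Complex.eq_coe_norm_of_nonneg (hnonneg _)]

end Tauberian

section WienerIkehara

variable {f : ℕ → ℝ} {C : ℝ}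

/-- The mean value `e⁻ᵘ ∑_{1 ≤ k ≤ eᵘ} f(k)` in logarithmic scale, which relates the Dirichlet
series of `f` to a Laplace transform. -/
noncomputable def logScaleMean (f : ℕ → ℝ) (u : ℝ) : ℝ :=
  (∑ k ∈ Finset.Icc 1 ⌊Real.exp u⌋₊, f k) / Real.exp u

lemma monotone_sum_Icc_floor (hf : ∀ n, 0 ≤ f n) :
    Monotone fun x : ℝ => ∑ k ∈ Finset.Icc 1 ⌊x⌋₊, f k := fun _ _ hxy =>
  Finset.sum_le_sum_of_subset_of_nonneg
    (Finset.Icc_subset_Icc_right (Nat.floor_mono hxy)) fun k _ _ => hf k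

lemma logScaleMean_nonneg (hf : ∀ n, 0 ≤ f n) (u : ℝ) : 0 ≤ logScaleMean f u :=
  div_nonneg (Finset.sum_nonneg fun k _ => hf k) (Real.exp_pos u).le

lemma logScaleMean_le (hC : 0 ≤ C) (hfC : ∀ n : ℕ, ∑ k ∈ Finset.Icc 1 n, f k ≤ C * n) (u : ℝ) :
    logScaleMean f u ≤ C :=
  (div_le_iff₀ (Real.exp_pos u)).2 ((hfC _).trans
    (mul_le_mul_of_nonneg_left (Nat.floor_le (Real.exp_pos u).le) hC))

lemma measurable_logScaleMean (hf : ∀ n, 0 ≤ f n) : Measurable (logScaleMean f) :=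
  ((monotone_sum_Icc_floor hf).measurable.comp Real.measurable_exp).div Real.measurable_exp

lemma logScaleMean_sub_le (hf : ∀ n, 0 ≤ f n) {x y : ℝ} (hxy : x ≤ y) :
    logScaleMean f x * (1 - (y - x)) ≤ logScaleMean f y :=
  calc logScaleMean f x * (1 - (y - x)) ≤ logScaleMean f x * Real.exp (-(y - x)) :=
        mul_le_mul_of_nonneg_left (Real.one_sub_le_exp_neg _) (logScaleMean_nonneg hf x)
    _ = (∑ k ∈ Finset.Icc 1 ⌊Real.exp x⌋₊, f k) / Real.exp y := by
        rw [logScaleMean, neg_sub, Real.exp_sub]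
        field_simp
    _ ≤ logScaleMean f y :=
        div_le_div_of_nonneg_right (monotone_sum_Icc_floor hf (Real.exp_le_exp.2 hxy))
          (Real.exp_pos y).le

lemma slowlyDecreasing_logScaleMean_sub (hf : ∀ n, 0 ≤ f n) (hC : 0 ≤ C)
    (hfC : ∀ n : ℕ, ∑ k ∈ Finset.Icc 1 n, f k ≤ C * n) (c : ℝ) :
    SlowlyDecreasing fun u => logScaleMean f u - c := by
  refine fun η hη => ⟨η / (C + 1), by positivity, .of_forall fun x y hy => ?_⟩
  have hdrop : logScaleMean f x * (y - x) ≤ η :=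
    calc logScaleMean f x * (y - x) ≤ C * (η / (C + 1)) :=
          mul_le_mul (logScaleMean_le hC hfC x) (by linarith [hy.2]) (by linarith [hy.1]) hC
      _ ≤ η := by field_simp; linarith
  linarith [logScaleMean_sub_le hf hy.1]

lemma LSeries_one_add_eq_laplaceTransform (hf : ∀ n, 0 ≤ f n)
    (hfC : ∀ n : ℕ, ∑ k ∈ Finset.Icc 1 n, f k ≤ C * n) {z : ℂ} (hz : 0 < z.re) :
    LSeries (fun n => f n) (1 + z) =
      (1 + z) * laplaceTransform (fun u => logScaleMean f u) z := by
  have hO : (fun n : ℕ => ∑ k ∈ Finset.Icc 1 n, f k) =O[atTop] fun n => (n : ℝ) ^ (1 : ℝ) := by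
    refine .of_bound C (.of_forall fun n => ?_)
    rw [Real.norm_of_nonneg (Finset.sum_nonneg fun k _ => hf k), Real.rpow_one,
      Real.norm_of_nonneg n.cast_nonneg]
    exact hfC n
  rw [LSeries_eq_mul_integral_of_nonneg f zero_le_one (by simpa using hz) hO hf, ← Real.exp_zero,
    ← integral_comp_exp_Ioi, laplaceTransform]
  congr 1
  refine setIntegral_congr_fun measurableSet_Ioi fun u _ => ?_
  have hcpow : (Real.exp u : ℂ) ^ (-(1 + z + 1)) = Complex.exp (-z * u) / Real.exp u ^ 2 := by
    rw [Complex.ofReal_exp, Complex.cpow_def_of_ne_zero (Complex.exp_ne_zero _),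
      ← Complex.ofReal_exp, ← Complex.ofReal_log (Real.exp_pos u).le, Real.log_exp,
      Complex.ofReal_exp, ← Complex.exp_nat_mul, ← Complex.exp_sub]
    congr 1
    push_cast
    ring
  simp only [logScaleMean, hcpow, Complex.real_smul, Complex.ofReal_div, Complex.ofReal_sum]
  field_simp

theorem wiener_ikehara (hf : ∀ n, 0 ≤ f n)
    (hfC : ∀ n : ℕ, ∑ k ∈ Finset.Icc 1 n, f k ≤ C * n) {F : ℂ → ℂ} {c : ℝ}
    (hF : ContinuousOn F {s | 1 ≤ s.re})
    (hLSeries : ∀ s : ℂ, 1 < s.re → LSeries (fun n => f n) s = F s + c / (s - 1)) :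
    Tendsto (fun x : ℝ => (∑ k ∈ Finset.Icc 1 ⌊x⌋₊, f k) / x) atTop (𝓝 c) := by
  have hC : 0 ≤ C := by simpa using (Finset.sum_nonneg fun k _ => hf k).trans (hfC 1)
  have hbound (u : ℝ) : |logScaleMean f u| ≤ C := by
    rw [abs_of_nonneg (logScaleMean_nonneg hf u)]
    exact logScaleMean_le hC hfC u
  have hmeas := measurable_logScaleMean hf
  have hne {z : ℂ} (hz : 0 ≤ z.re) : 1 + z ≠ 0 := fun h => by
    have := congrArg Complex.re h
    simp only [Complex.add_re, Complex.one_re, Complex.zero_re] at this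
    linarith
  have hlaplace : Set.EqOn (laplaceTransform fun u => ((logScaleMean f u - c : ℝ) : ℂ))
      (fun z => (F (1 + z) - c) / (1 + z)) {z | 0 < z.re} := by
    intro z (hz : 0 < z.re)
    have hz0 : z ≠ 0 := fun h => by simp [h] at hz
    have hL := LSeries_one_add_eq_laplaceTransform hf hfC hz
    rw [hLSeries _ (by simpa using hz), add_sub_cancel_left] at hL
    simp only [Complex.ofReal_sub]
    rw [laplaceTransform_sub_const (b := fun u => (logScaleMean f u : ℂ))
      (Complex.measurable_ofReal.comp hmeas) (by simpa using hbound) _ hz,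
      eq_div_iff (hne hz.le), sub_mul, mul_comm _ (1 + z), ← hL]
    field_simp
    ring
  have hcont : ContinuousOn (fun z => (F (1 + z) - c) / (1 + z)) {z | 0 ≤ z.re} :=
    ((hF.comp (by fun_prop) fun z hz => by simpa using hz).sub continuousOn_const).div
      (by fun_prop) fun z hz => hne hz
  have hzero := (slowlyDecreasing_logScaleMean_sub hf hC hfC c).tendsto_zero (C := C + |c|)
    (hmeas.sub_const c) (fun u => (abs_sub _ _).trans (by gcongr; exact hbound u)) hcont hlaplace
  refine (tendsto_sub_nhds_zero_iff.1 (hzero.comp Real.tendsto_log_atTop)).congr' ?_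
  filter_upwards [eventually_gt_atTop 0] with x hx
  simp only [logScaleMean, Real.exp_log hx]

end WienerIkehara

section PrimeNumberTheorem

-- Modulo `1` the residue-class function is minus the logarithmic derivative of `ζ`, pole removed.
lemma LSeries_vonMangoldt_eq {s : ℂ} (hs : 1 < s.re) :
    LSeries (fun n => (ArithmeticFunction.vonMangoldt n : ℂ)) s =
      ArithmeticFunction.vonMangoldt.LFunctionResidueClassAux (1 : ZMod 1) s + 1 / (s - 1) := by
  have hclass : ArithmeticFunction.vonMangoldt.residueClass (1 : ZMod 1) =
      fun n => ArithmeticFunction.vonMangoldt n := by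
    ext n
    rw [ArithmeticFunction.vonMangoldt.residueClass, Set.indicator_of_mem]
    exact Subsingleton.elim _ _
  rw [ArithmeticFunction.vonMangoldt.eqOn_LFunctionResidueClassAux isUnit_one hs, hclass]
  simp

theorem tendsto_psi_div : Tendsto (fun x : ℝ => Chebyshev.psi x / x) atTop (𝓝 1) := by
  have hsum (n : ℕ) : ∑ k ∈ Finset.Icc 1 n, ArithmeticFunction.vonMangoldt k = Chebyshev.psi n := by
    simp [Chebyshev.psi, ← Finset.Icc_add_one_left_eq_Ioc]
  simpa only [hsum, ← Chebyshev.psi_eq_psi_coe_floor] using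
    wiener_ikehara (f := fun n => ArithmeticFunction.vonMangoldt n) (c := 1)
      (fun _ => ArithmeticFunction.vonMangoldt_nonneg)
      (fun n => (hsum n).trans_le (Chebyshev.psi_le_const_mul_self n.cast_nonneg))
      (ArithmeticFunction.vonMangoldt.continuousOn_LFunctionResidueClassAux (1 : ZMod 1))
      fun s hs => by simpa using LSeries_vonMangoldt_eq hs

lemma tendsto_theta_div : Tendsto (fun x : ℝ => Chebyshev.theta x / x) atTop (𝓝 1) := by
  have hdiff : Tendsto (fun x : ℝ => (Chebyshev.psi x - Chebyshev.theta x) * x⁻¹) atTop (𝓝 0) := by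
    refine (Chebyshev.isBigO_psi_sub_theta_sqrt.mul (isBigO_refl (·⁻¹) atTop)).trans_tendsto ?_
    refine Real.tendsto_sqrt_atTop.inv_tendsto_atTop.congr fun x => ?_
    rw [Pi.inv_apply, ← div_eq_mul_inv, Real.sqrt_div_self]
  have hlim := tendsto_psi_div.sub hdiff
  rw [sub_zero] at hlim
  exact hlim.congr fun x => by ring

theorem tendsto_primePi_mul_log_div :
    Tendsto (fun y => primePi y * Real.log y / y) atTop (𝓝 1) := by
  have hdiff : Tendsto (fun y => (primePi y - Chebyshev.theta y / Real.log y) *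
      (Real.log y / y)) atTop (𝓝 0) := by
    refine (Chebyshev.primeCounting_sub_theta_div_log_isBigO.mul
      (isBigO_refl (fun y : ℝ => Real.log y / y) atTop)).trans_tendsto ?_
    refine Real.tendsto_log_atTop.inv_tendsto_atTop.congr' ?_
    filter_upwards [eventually_gt_atTop 1] with y hy
    have hlog := Real.log_pos hy
    simp only [Pi.inv_apply]
    field_simp
  have hlim := hdiff.add tendsto_theta_div
  rw [zero_add] at hlim
  refine hlim.congr' ?_
  filter_upwards [eventually_gt_atTop 1] with y hy
  have hlog := Real.log_pos hy
  field_simp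
  ring

lemma tendsto_primePi_div : Tendsto (fun y => primePi y / y) atTop (𝓝 0) := by
  refine (tendsto_primePi_mul_log_div.div_atTop Real.tendsto_log_atTop).congr' ?_
  filter_upwards [eventually_gt_atTop 1] with y hy
  have hlog := Real.log_pos hy
  field_simp

lemma primePi_le {y : ℝ} (hy : 0 ≤ y) : primePi y ≤ y := by
  refine le_trans ?_ (Nat.floor_le hy)
  rw [primePi, Nat.primeCounting, Nat.primeCounting', Nat.count_succ', if_neg Nat.not_prime_zero]
  exact_mod_cast Nat.count_le _

lemma abs_primePi_div_le {y : ℝ} (hy : 0 < y) : |primePi y / y| ≤ 1 := by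
  rw [abs_of_nonneg (by positivity)]
  exact (div_le_one hy).2 (primePi_le hy.le)

lemma primePi_mul_log_le {y : ℝ} (hy : 1 < y) :
    primePi y * Real.log y ≤ (2 * Real.log 4 + 2) * y := by
  have hlog : 0 < Real.log y := Real.log_pos hy
  have hlog_sqrt : Real.log √y = Real.log y / 2 := Real.log_sqrt (by linarith)
  have hlog_le : Real.log y ≤ 2 * √y := by
    linarith [Real.log_le_self (Real.sqrt_nonneg y)]
  calc primePi y * Real.log y
      ≤ (Real.log 4 * y / Real.log √y + √y) * Real.log y :=
        mul_le_mul_of_nonneg_right (Chebyshev.pi_le_log4_mul_div hy) hlog.le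
    _ = 2 * Real.log 4 * y + √y * Real.log y := by
        rw [hlog_sqrt]
        field_simp
    _ ≤ 2 * Real.log 4 * y + √y * (2 * √y) := by gcongr
    _ = (2 * Real.log 4 + 2) * y := by
        linear_combination 2 * Real.mul_self_sqrt (zero_le_one.trans hy.le)

lemma abs_primePi_mul_log_div_le {y : ℝ} (hy : 0 < y) :
    |primePi y * Real.log y / y| ≤ 2 * Real.log 4 + 2 := by
  rcases le_or_gt y 1 with hy1 | hy1
  · have hzero : primePi y = 0 :=
      Nat.primeCounting_eq_zero_iff.2 (Nat.floor_le_of_le (by simpa using hy1))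
    rw [hzero, Nat.cast_zero, zero_mul, zero_div, abs_zero]
    positivity
  · rw [abs_of_nonneg (by have := Real.log_pos hy1; positivity), div_le_iff₀ hy]
    exact primePi_mul_log_le hy1

lemma measurable_primePi : Measurable primePi :=
  (Nat.monotone_primeCounting.comp Nat.floor_mono).measurable

end PrimeNumberTheorem

section Abelian

variable {h g : ℝ → ℝ} {C c : ℝ}

lemma norm_mul_comp_div_le (hgC : ∀ y > 0, |g y| ≤ C) {t : ℝ} (ht : 0 < t) :
    ∀ᵐ z ∂volume.restrict (Set.Ioi 0), ‖h z * g (z / t)‖ ≤ ‖h z‖ * C := by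
  filter_upwards [ae_restrict_mem measurableSet_Ioi] with z hz
  rw [norm_mul]
  exact mul_le_mul_of_nonneg_left (hgC _ (div_pos hz ht)) (norm_nonneg _)

lemma integrableOn_mul_comp_div (hh : IntegrableOn h (Set.Ioi 0)) (hg : Measurable g)
    (hgC : ∀ y > 0, |g y| ≤ C) {t : ℝ} (ht : 0 < t) :
    IntegrableOn (fun z => h z * g (z / t)) (Set.Ioi 0) :=
  (hh.norm.mul_const C).mono' (hh.aestronglyMeasurable.mul
    (hg.comp (measurable_id.div_const t)).aestronglyMeasurable) (norm_mul_comp_div_le hgC ht)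

lemma tendsto_integral_mul_comp_div (hh : IntegrableOn h (Set.Ioi 0)) (hg : Measurable g)
    (hgC : ∀ y > 0, |g y| ≤ C) (hlim : Tendsto g atTop (𝓝 c)) :
    Tendsto (fun t => ∫ z in Set.Ioi 0, h z * g (z / t)) (𝓝[>] 0)
      (𝓝 ((∫ z in Set.Ioi 0, h z) * c)) := by
  rw [← integral_mul_const]
  refine tendsto_integral_filter_of_dominated_convergence (fun z => ‖h z‖ * C)
    ?_ ?_ (hh.norm.mul_const C) ?_
  · filter_upwards [self_mem_nhdsWithin] with t ht
    exact (integrableOn_mul_comp_div hh hg hgC ht).aestronglyMeasurable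
  · filter_upwards [self_mem_nhdsWithin] with t ht using norm_mul_comp_div_le hgC ht
  · filter_upwards [ae_restrict_mem measurableSet_Ioi] with z hz
    simp only [div_eq_mul_inv]
    exact (hlim.comp (tendsto_inv_nhdsGT_zero.const_mul_atTop hz)).const_mul (h z)

end Abelian

section Gamma

lemma integrableOn_pow_mul_exp_neg (n : ℕ) :
    IntegrableOn (fun z : ℝ => z ^ n * Real.exp (-z)) (Set.Ioi 0) := by
  simpa [mul_comm] using Real.GammaIntegral_convergent (s := n + 1) (by positivity)

lemma integral_pow_mul_exp_neg (n : ℕ) :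
    ∫ z in Set.Ioi (0 : ℝ), z ^ n * Real.exp (-z) = n.factorial := by
  rw [← Real.Gamma_nat_eq_factorial, Real.Gamma_eq_integral (by positivity)]
  simp [mul_comm]

lemma abs_mul_log_le {z : ℝ} (hz : 0 < z) : |z * Real.log z| ≤ z ^ 2 + 1 := by
  have hupper := mul_le_mul_of_nonneg_left (Real.log_le_self hz.le) hz.le
  have hlower := mul_le_mul_of_nonneg_left (Real.one_sub_inv_le_log_of_pos hz) hz.le
  rw [mul_sub, mul_inv_cancel₀ hz.ne'] at hlower
  exact abs_le.2 ⟨by nlinarith, by nlinarith⟩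

lemma integrableOn_pow_succ_mul_exp_neg_mul_log (n : ℕ) :
    IntegrableOn (fun z : ℝ => z ^ (n + 1) * Real.exp (-z) * Real.log z) (Set.Ioi 0) := by
  refine ((integrableOn_pow_mul_exp_neg (n + 2)).add (integrableOn_pow_mul_exp_neg n)).mono'
    (by fun_prop) ?_
  filter_upwards [ae_restrict_mem measurableSet_Ioi] with z (hz : 0 < z)
  calc ‖z ^ (n + 1) * Real.exp (-z) * Real.log z‖
      = |z ^ n * Real.exp (-z) * (z * Real.log z)| := by
        rw [Real.norm_eq_abs]
        ring_nf
    _ = z ^ n * Real.exp (-z) * |z * Real.log z| := by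
        rw [abs_mul, abs_of_pos (by positivity)]
    _ ≤ z ^ n * Real.exp (-z) * (z ^ 2 + 1) := by gcongr; exact abs_mul_log_le hz
    _ = z ^ (n + 2) * Real.exp (-z) + z ^ n * Real.exp (-z) := by ring

end Gamma

lemma Ifun_mul_eq_integral {t : ℝ} (ht : 0 < t) : Ifun t * (t ^ 2 * Real.log (1 / t)) =
    ∫ z in Set.Ioi (0 : ℝ), (z ^ 2 * Real.exp (-z) * (primePi (z / t) * Real.log (z / t) / (z / t))
      - z ^ 2 * Real.exp (-z) * Real.log z * (primePi (z / t) / (z / t))) := by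
  have hscale := integral_comp_mul_left_Ioi'
    (fun y : ℝ => y * Real.exp (-(y * t)) * (primePi y : ℝ)) 0 (inv_pos.2 ht)
  rw [mul_zero, smul_eq_mul] at hscale
  rw [Ifun, ← hscale, ← integral_const_mul, ← integral_const_mul, ← integral_mul_const]
  refine setIntegral_congr_fun measurableSet_Ioi fun z (hz : 0 < z) => ?_
  have hz_div : t⁻¹ * z = z / t := by ring
  simp only [hz_div, div_mul_cancel₀ z ht.ne', Real.log_div hz.ne' ht.ne', one_div, Real.log_inv]
  field_simp
  ring

/-- `I(t) ~ 2/(t²·log(1/t))` as `t → 0⁺`. -/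
theorem Ifun_asymptotic :
    Tendsto (fun t : ℝ => Ifun t * (t ^ 2 * Real.log (1 / t)))
      (𝓝[>] 0) (𝓝 2) := by
  have hmeas : Measurable fun y => (primePi y : ℝ) := measurable_from_nat.comp measurable_primePi
  have hexp := integrableOn_pow_mul_exp_neg 2
  have hexp_log := integrableOn_pow_succ_mul_exp_neg_mul_log 1
  have hmain_meas : Measurable fun y => primePi y * Real.log y / y := by fun_prop
  have herror_meas : Measurable fun y => primePi y / y := by fun_prop
  have hmain := tendsto_integral_mul_comp_div hexp hmain_meas
    (fun _ => abs_primePi_mul_log_div_le) tendsto_primePi_mul_log_div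
  have herror := tendsto_integral_mul_comp_div hexp_log herror_meas
    (fun _ => abs_primePi_div_le) tendsto_primePi_div
  have hlim := hmain.sub herror
  rw [integral_pow_mul_exp_neg, Nat.factorial_two, Nat.cast_two, mul_one, mul_zero, sub_zero]
    at hlim
  refine hlim.congr' ?_
  filter_upwards [self_mem_nhdsWithin] with t ht
  rw [Ifun_mul_eq_integral ht]
  exact (integral_sub
    (integrableOn_mul_comp_div hexp hmain_meas (fun _ => abs_primePi_mul_log_div_le) ht)
    (integrableOn_mul_comp_div hexp_log herror_meas (fun _ => abs_primePi_div_le) ht)).symm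
end

section
/- Let f″(z) = Σ_{p odd prime} p(p−1)·z^{p−2} for 0 < z < 1. Then f″(e^{−t}) ~ 2/(t³·log(1/t)) as t → 0⁺; that is, Σ_{p odd prime} p(p−1)·e^{−(p−2)t}, multiplied by t³·log(1/t), tends to 2 as t decreases to 0. -/
open Filter Topology Asymptotics MeasureTheory

/-!
A smoothed form of the Wiener–Ikehara theorem does the work. The Dirichlet series of `log p` over
the primes `p ≡ r mod q` is, up to a function continuous on `1 ≤ re s`, equal to
`φ(q)⁻¹ / (s - 1)`; this is the nonvanishing of Dirichlet `L`-functions on the line `re s = 1`.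
Testing it against a continuous compactly supported `g` and letting `s → 1`, the Riemann–Lebesgue
lemma gives `∑ (log p / p) K (log p - y) → φ(q)⁻¹ ∫ K` as `y → ∞` for `K = 𝓕 g`. Chebyshev's bound
makes the left side continuous in `K` for the norm `sup (1 + u ^ 2) |K u|`, in which Fourier
transforms of such `g` approximate every kernel that decays together with its derivative.

Only primes with `log p ≈ y` matter, so `log p` may be replaced by `y`. The kernel
`K u = exp (s u - exp u)`, with `y = log (1 / t)`, turns the sum into `∑ (p t) ^ s exp (-p t) / p`
and has integral `Γ(s)`; the odd primes are those `≡ 1 mod 2`, and the theorem is the case `s = 3`,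
the contribution of `s = 2` being smaller by a factor `t`.
-/

open Complex (I)
open scoped FourierTransform Real

theorem summable_inv_one_add_intCast_sq : Summable fun k : ℤ ↦ (1 + (k : ℝ) ^ 2)⁻¹ := by
  refine Summable.of_norm_bounded_eventually
    ((Real.summable_one_div_int_pow (p := 2)).2 one_lt_two) ?_
  filter_upwards [(Set.finite_singleton (0 : ℤ)).compl_mem_cofinite] with k hk
  have hk0 : (k : ℝ) ≠ 0 := by exact_mod_cast hk
  rw [Real.norm_of_nonneg (by positivity), one_div]
  gcongr
  linarith

/-- Nonnegative coefficients whose partial sums satisfy a Chebyshev upper bound with constant `C`.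
The case `N = 0` forces `a 0 = 0`. -/
structure HasChebyshevBound (a : ℕ → ℝ) (C : ℝ) : Prop where
  nonneg : ∀ n, 0 ≤ a n
  sum_le : ∀ N : ℕ, ∑ n ∈ Finset.Icc 0 N, a n ≤ C * N

namespace HasChebyshevBound

variable {a : ℕ → ℝ} {C : ℝ}

theorem const_nonneg (ha : HasChebyshevBound a C) : 0 ≤ C := by
  simpa using (Finset.sum_nonneg fun n _ ↦ ha.nonneg n).trans (ha.sum_le 1)

theorem sum_le_of_forall_le (ha : HasChebyshevBound a C) {s : Finset ℕ} {x : ℝ} (hx : 0 ≤ x)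
    (hs : ∀ n ∈ s, (n : ℝ) ≤ x) : ∑ n ∈ s, a n ≤ C * x :=
  calc ∑ n ∈ s, a n ≤ ∑ n ∈ Finset.Icc 0 ⌊x⌋₊, a n :=
        Finset.sum_le_sum_of_subset_of_nonneg
          (fun n hn ↦ Finset.mem_Icc.2 ⟨n.zero_le, Nat.le_floor (hs n hn)⟩)
          fun n _ _ ↦ ha.nonneg n
    _ ≤ C * ⌊x⌋₊ := ha.sum_le _
    _ ≤ C * x := mul_le_mul_of_nonneg_left (Nat.floor_le hx) ha.const_nonneg

theorem lseriesSummable (ha : HasChebyshevBound a C) {s : ℂ} (hs : 1 < s.re) :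
    LSeriesSummable (fun n ↦ (a n : ℂ)) s := by
  refine LSeriesSummable_of_sum_norm_bigO (r := 1) (.of_bound C (.of_forall fun N ↦ ?_))
    zero_le_one hs
  have hsum : ∑ n ∈ Finset.Icc 1 N, ‖(a n : ℂ)‖ = ∑ n ∈ Finset.Icc 1 N, a n :=
    Finset.sum_congr rfl fun n _ ↦ by rw [Complex.norm_real, Real.norm_of_nonneg (ha.nonneg n)]
  rw [hsum, Real.rpow_one, Real.norm_of_nonneg (Finset.sum_nonneg fun n _ ↦ ha.nonneg n),
    Real.norm_natCast]
  exact ha.sum_le_of_forall_le N.cast_nonneg fun n hn ↦ by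
    exact_mod_cast (Finset.mem_Icc.1 hn).2

theorem sum_window_le (ha : HasChebyshevBound a C) (y : ℝ) (k : ℤ) (s : Finset ℕ)
    (hs : ∀ n ∈ s, ⌊Real.log n - y⌋ = k) :
    ∑ n ∈ s, a n / n * (1 + (Real.log n - y) ^ 2)⁻¹ ≤
      C * (3 * Real.exp 1) * (1 + (k : ℝ) ^ 2)⁻¹ := by
  have hterm : ∀ n ∈ s, a n / n * (1 + (Real.log n - y) ^ 2)⁻¹ ≤
      a n * (Real.exp (-(y + k)) * (3 * (1 + (k : ℝ) ^ 2)⁻¹)) := by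
    intro n hn
    obtain ⟨hk, hk'⟩ := Int.floor_eq_iff.1 (hs n hn)
    rcases Nat.eq_zero_or_pos n with rfl | hpos
    · simpa using mul_nonneg (ha.nonneg 0) (by positivity)
    have hn' : (0 : ℝ) < n := Nat.cast_pos.2 hpos
    have hinv : (n : ℝ)⁻¹ ≤ Real.exp (-(y + k)) := by
      rw [Real.exp_neg]
      refine inv_anti₀ (Real.exp_pos _) ((Real.le_log_iff_exp_le hn').1 (by linarith))
    have hdecay : (1 + (Real.log n - y) ^ 2)⁻¹ ≤ 3 * (1 + (k : ℝ) ^ 2)⁻¹ := by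
      rw [← div_eq_mul_inv, inv_eq_one_div, div_le_div_iff₀ (by positivity) (by positivity)]
      nlinarith [sq_nonneg (2 * (Real.log n - y) - k)]
    rw [div_eq_mul_inv, mul_assoc]
    have := ha.nonneg n
    gcongr
  have hmass : ∑ n ∈ s, a n ≤ C * Real.exp (y + k + 1) := by
    refine ha.sum_le_of_forall_le (Real.exp_pos _).le fun n hn ↦ ?_
    obtain ⟨-, hk'⟩ := Int.floor_eq_iff.1 (hs n hn)
    exact (Real.le_exp_log n).trans (Real.exp_le_exp.2 (by linarith))
  calc ∑ n ∈ s, a n / n * (1 + (Real.log n - y) ^ 2)⁻¹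
      ≤ (∑ n ∈ s, a n) * (Real.exp (-(y + k)) * (3 * (1 + (k : ℝ) ^ 2)⁻¹)) := by
        rw [Finset.sum_mul]
        exact Finset.sum_le_sum hterm
    _ ≤ C * Real.exp (y + k + 1) * (Real.exp (-(y + k)) * (3 * (1 + (k : ℝ) ^ 2)⁻¹)) := by gcongr
    _ = C * (3 * (Real.exp (y + k + 1) * Real.exp (-(y + k)))) * (1 + (k : ℝ) ^ 2)⁻¹ := by ring
    _ = C * (3 * Real.exp 1) * (1 + (k : ℝ) ^ 2)⁻¹ := by
        rw [← Real.exp_add, add_right_comm, add_neg_cancel, zero_add]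

theorem exists_forall_summable_tsum_le (ha : HasChebyshevBound a C) :
    ∃ B, ∀ y : ℝ, Summable (fun n : ℕ ↦ a n / n * (1 + (Real.log n - y) ^ 2)⁻¹) ∧
      ∑' n : ℕ, a n / n * (1 + (Real.log n - y) ^ 2)⁻¹ ≤ B := by
  refine ⟨C * (3 * Real.exp 1) * ∑' k : ℤ, (1 + (k : ℝ) ^ 2)⁻¹, fun y ↦ ?_⟩
  have hnonneg (n : ℕ) : 0 ≤ a n / n * (1 + (Real.log n - y) ^ 2)⁻¹ := by
    have := ha.nonneg n
    positivity
  have hpartial (s : Finset ℕ) : ∑ n ∈ s, a n / n * (1 + (Real.log n - y) ^ 2)⁻¹ ≤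
      C * (3 * Real.exp 1) * ∑' k : ℤ, (1 + (k : ℝ) ^ 2)⁻¹ := by
    rw [← Finset.sum_fiberwise_of_maps_to fun n hn ↦
      Finset.mem_image_of_mem (fun n : ℕ ↦ ⌊Real.log n - y⌋) hn]
    refine (Finset.sum_le_sum fun k _ ↦ ha.sum_window_le y k _
      fun n hn ↦ (Finset.mem_filter.1 hn).2).trans ?_
    rw [← Finset.mul_sum]
    have := ha.const_nonneg
    gcongr
    exact summable_inv_one_add_intCast_sq.sum_le_tsum _ fun k _ ↦ by positivity
  have hsum := summable_of_sum_le hnonneg hpartial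
  exact ⟨hsum, hsum.tsum_le_of_sum_le hpartial⟩

theorem exists_forall_summable_norm_tsum_le (ha : HasChebyshevBound a C) :
    ∃ B, ∀ (f : ℝ → ℂ) (D : ℝ), (∀ u, ‖f u‖ ≤ D * (1 + u ^ 2)⁻¹) → ∀ y : ℝ,
      Summable (fun n : ℕ ↦ (a n : ℂ) / n * f (Real.log n - y)) ∧
        ‖∑' n : ℕ, (a n : ℂ) / n * f (Real.log n - y)‖ ≤ D * B := by
  obtain ⟨B, hB⟩ := ha.exists_forall_summable_tsum_le
  refine ⟨B, fun f D hf y ↦ ?_⟩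
  obtain ⟨hsum, hle⟩ := hB y
  have hD : 0 ≤ D := by simpa using (norm_nonneg _).trans (hf 0)
  have hterm (n : ℕ) : ‖(a n : ℂ) / n * f (Real.log n - y)‖ ≤
      D * (a n / n * (1 + (Real.log n - y) ^ 2)⁻¹) := by
    rw [norm_mul, norm_div, Complex.norm_natCast, Complex.norm_real,
      Real.norm_of_nonneg (ha.nonneg n), mul_left_comm]
    exact mul_le_mul_of_nonneg_left (hf _) (div_nonneg (ha.nonneg n) n.cast_nonneg)
  refine ⟨.of_norm_bounded (hsum.mul_left D) hterm, ?_⟩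
  refine (tsum_of_norm_bounded (hsum.mul_left D).hasSum hterm).trans ?_
  rw [tsum_mul_left]
  gcongr

end HasChebyshevBound

section FourierIdentities

variable {g : ℝ → ℂ}

theorem term_one_eq_div (a : ℕ → ℂ) (n : ℕ) : LSeries.term a 1 n = a n / n := by
  rcases eq_or_ne n 0 with rfl | hn
  · simp
  · rw [LSeries.term_of_ne_zero hn, Complex.cpow_one]

theorem term_add_mul_I (a : ℕ → ℂ) (s : ℂ) (t : ℝ) (n : ℕ) :
    LSeries.term a (s + (2 * π * t : ℝ) * I) n =
      Complex.exp ((-2 * π * t * Real.log n : ℝ) * I) * LSeries.term a s n := by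
  rcases eq_or_ne n 0 with rfl | hn
  · simp
  have hn' : (n : ℂ) ≠ 0 := Nat.cast_ne_zero.2 hn
  rw [LSeries.term_of_ne_zero hn, LSeries.term_of_ne_zero hn, Complex.cpow_add _ _ hn',
    Complex.cpow_def_of_ne_zero hn' (_ * I), ← Complex.natCast_log, div_mul_eq_div_div_swap,
    div_eq_mul_inv _ (Complex.exp _), ← Complex.exp_neg, mul_div_right_comm, mul_comm]
  · push_cast
    ring_nf

theorem tsum_term_mul_fourier_log {a : ℕ → ℂ} {s : ℂ} (ha : LSeriesSummable a s)
    (hg : Integrable g) :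
    ∑' n, LSeries.term a s n * 𝓕 g (Real.log n) =
      ∫ t, g t * LSeries a (s + (2 * π * t : ℝ) * I) := by
  have hnorm (n : ℕ) (t : ℝ) :
      ‖g t * LSeries.term a (s + (2 * π * t : ℝ) * I) n‖ = ‖LSeries.term a s n‖ * ‖g t‖ := by
    rw [term_add_mul_I, norm_mul, norm_mul, Complex.norm_exp_ofReal_mul_I, one_mul, mul_comm]
  have hint (n : ℕ) : Integrable fun t ↦ g t * LSeries.term a (s + (2 * π * t : ℝ) * I) n := by
    simp_rw [term_add_mul_I]
    refine hg.mul_bdd (c := ‖LSeries.term a s n‖) (by fun_prop) (.of_forall fun t ↦ ?_)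
    rw [norm_mul, Complex.norm_exp_ofReal_mul_I, one_mul]
  have hsum : Summable fun n ↦ ∫ t, ‖g t * LSeries.term a (s + (2 * π * t : ℝ) * I) n‖ := by
    simp_rw [hnorm, integral_const_mul]
    exact ha.norm.mul_right _
  calc ∑' n, LSeries.term a s n * 𝓕 g (Real.log n)
      = ∑' n, ∫ t, g t * LSeries.term a (s + (2 * π * t : ℝ) * I) n := by
        refine tsum_congr fun n ↦ ?_
        rw [Real.fourier_real_eq_integral_exp_smul, ← integral_const_mul]
        refine integral_congr_ae (.of_forall fun t ↦ ?_)
        simp only [term_add_mul_I, smul_eq_mul]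
        ring
    _ = ∫ t, ∑' n, g t * LSeries.term a (s + (2 * π * t : ℝ) * I) n :=
        integral_tsum_of_summable_integral_norm hint hsum
    _ = ∫ t, g t * LSeries a (s + (2 * π * t : ℝ) * I) := by simp_rw [tsum_mul_left, LSeries]

theorem integral_Ioi_exp_mul_fourier {z : ℂ} (hz : 0 < z.re) (hg : Integrable g) :
    ∫ u in Set.Ioi (0 : ℝ), Complex.exp (-z * u) * 𝓕 g u =
      ∫ t, g t / (z + (2 * π * t : ℝ) * I) := by
  have hexp (t u : ℝ) : Complex.exp (-z * u) * (Complex.exp ((-2 * π * t * u : ℝ) * I) * g t) =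
      g t * Complex.exp (-(z + (2 * π * t : ℝ) * I) * u) := by
    rw [← mul_assoc, ← Complex.exp_add, mul_comm]
    push_cast
    ring_nf
  have hnorm (t u : ℝ) : ‖g t * Complex.exp (-(z + (2 * π * t : ℝ) * I) * u)‖ =
      Real.exp (-z.re * u) * ‖g t‖ := by
    rw [norm_mul, Complex.norm_exp, mul_comm]
    simp
  calc ∫ u in Set.Ioi (0 : ℝ), Complex.exp (-z * u) * 𝓕 g u
      = ∫ u in Set.Ioi (0 : ℝ), ∫ t, g t * Complex.exp (-(z + (2 * π * t : ℝ) * I) * u) := by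
        simp_rw [Real.fourier_real_eq_integral_exp_smul, ← integral_const_mul, smul_eq_mul, hexp]
    _ = ∫ t, ∫ u in Set.Ioi (0 : ℝ), g t * Complex.exp (-(z + (2 * π * t : ℝ) * I) * u) := by
        refine integral_integral_swap (Integrable.mono'
          ((exp_neg_integrableOn_Ioi 0 hz).mul_prod hg.norm) ?_ (.of_forall fun p ↦ (hnorm _ _).le))
        have hexp_meas : Continuous fun p : ℝ × ℝ ↦
            Complex.exp (-(z + (2 * π * p.2 : ℝ) * I) * p.1) := by fun_prop
        exact hg.aestronglyMeasurable.comp_snd.mul hexp_meas.aestronglyMeasurable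
    _ = ∫ t, g t / (z + (2 * π * t : ℝ) * I) := by
        refine integral_congr_ae (.of_forall fun t ↦ ?_)
        simp only
        rw [integral_const_mul, integral_exp_mul_complex_Ioi (by simpa using hz),
          Complex.ofReal_zero, mul_zero, Complex.exp_zero, neg_div_neg_eq, mul_one_div]

theorem tendsto_tsum_term_mul {a h : ℕ → ℂ} (hs : Summable fun n ↦ LSeries.term a 1 n * h n) :
    Tendsto (fun σ : ℝ ↦ ∑' n, LSeries.term a σ n * h n) (𝓝[>] 1)
      (𝓝 (∑' n, LSeries.term a 1 n * h n)) := by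
  refine tendsto_tsum_of_dominated_convergence hs.norm (fun n ↦ ?_) ?_
  · have hcont : ContinuousAt (fun σ : ℝ ↦ LSeries.term a σ n) 1 :=
      (LSeries.hasDerivAt_term a n _).continuousAt.comp Complex.continuous_ofReal.continuousAt
    simpa using (hcont.tendsto.mono_left nhdsWithin_le_nhds).mul_const (h n)
  · filter_upwards [self_mem_nhdsWithin] with σ hσ n
    rw [norm_mul, norm_mul]
    gcongr
    exact LSeries.norm_term_le_of_re_le_re a (by simpa using (Set.mem_Ioi.1 hσ).le) n

theorem tendsto_integral_Ioi_exp_mul {f : ℝ → ℂ} (hf : IntegrableOn f (Set.Ioi 0)) :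
    Tendsto (fun σ : ℝ ↦ ∫ u in Set.Ioi (0 : ℝ), Complex.exp (-(σ - 1 : ℂ) * u) * f u) (𝓝[>] 1)
      (𝓝 (∫ u in Set.Ioi (0 : ℝ), f u)) := by
  refine tendsto_integral_filter_of_dominated_convergence (fun u ↦ ‖f u‖) (.of_forall fun σ ↦ ?_)
    ?_ hf.norm (.of_forall fun u ↦ ?_)
  · exact (by fun_prop : Continuous fun u : ℝ ↦ Complex.exp (-(σ - 1 : ℂ) * u)
      ).aestronglyMeasurable.mul hf.aestronglyMeasurable
  · filter_upwards [self_mem_nhdsWithin] with σ hσ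
    filter_upwards [ae_restrict_mem measurableSet_Ioi] with u hu
    rw [norm_mul, Complex.norm_exp]
    refine mul_le_of_le_one_left (norm_nonneg _) (Real.exp_le_one_iff.2 ?_)
    simpa using mul_nonpos_of_nonpos_of_nonneg (sub_neg.2 hσ).le (Set.mem_Ioi.1 hu).le
  · have hcont : Continuous fun σ : ℝ ↦ Complex.exp (-(σ - 1 : ℂ) * u) * f u := by fun_prop
    simpa using (hcont.tendsto 1).mono_left nhdsWithin_le_nhds

theorem tendsto_integral_mul_vertical {G : ℂ → ℂ} (hG : ContinuousOn G {s | 1 ≤ s.re})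
    (hg : Continuous g) (hgc : HasCompactSupport g) :
    Tendsto (fun σ : ℝ ↦ ∫ t, g t * G (σ + (2 * π * t : ℝ) * I)) (𝓝[>] 1)
      (𝓝 (∫ t, g t * G (1 + (2 * π * t : ℝ) * I))) := by
  have hmaps : Set.MapsTo (fun p : ℝ × ℝ ↦ (p.1 : ℂ) + (2 * π * p.2 : ℝ) * I)
      (Set.Ici 1 ×ˢ Set.univ) {s | 1 ≤ s.re} := fun p hp ↦ by simpa using hp.1
  have hcont : ContinuousOn (fun p : ℝ × ℝ ↦ g p.2 * G (p.1 + (2 * π * p.2 : ℝ) * I))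
      (Set.Ici 1 ×ˢ Set.univ) :=
    (by fun_prop : Continuous fun p : ℝ × ℝ ↦ g p.2).continuousOn.mul
      (hG.comp (by fun_prop) hmaps)
  have hint : ContinuousOn (fun σ : ℝ ↦ ∫ t, g t * G (σ + (2 * π * t : ℝ) * I)) (Set.Ici 1) :=
    continuousOn_integral_of_compact_support hgc hcont fun σ t _ ht ↦ by
      simp only [image_eq_zero_of_notMem_tsupport ht, zero_mul]
  simpa using ((hint 1 Set.self_mem_Ici).mono Set.Ioi_subset_Ici_self).tendsto

theorem tsum_term_mul_fourier_log_of_simple_pole {a : ℕ → ℂ} {A : ℂ} {G : ℂ → ℂ}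
    (hG : ContinuousOn G {s | 1 ≤ s.re}) (ha : ∀ s : ℂ, 1 < s.re → LSeriesSummable a s)
    (haG : ∀ s : ℂ, 1 < s.re → LSeries a s = G s + A / (s - 1))
    (hg : Continuous g) (hgc : HasCompactSupport g) {σ : ℝ} (hσ : 1 < σ) :
    ∑' n, LSeries.term a σ n * 𝓕 g (Real.log n) =
      (∫ t, g t * G (σ + (2 * π * t : ℝ) * I)) +
        A * ∫ u in Set.Ioi (0 : ℝ), Complex.exp (-(σ - 1 : ℂ) * u) * 𝓕 g u := by
  have hgi : Integrable g := hg.integrable_of_hasCompactSupport hgc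
  have hre (t : ℝ) : 1 < (σ + (2 * π * t : ℝ) * I : ℂ).re := by simpa using hσ
  have hne (t : ℝ) : (σ - 1 + (2 * π * t : ℝ) * I : ℂ) ≠ 0 := fun h ↦ by
    have hre0 : σ - 1 = 0 := by simpa using congrArg Complex.re h
    linarith
  have hcont : Continuous fun t : ℝ ↦ g t * G (σ + (2 * π * t : ℝ) * I) :=
    hg.mul (hG.comp_continuous (by fun_prop) fun t ↦ (hre t).le)
  have hcont_pole : Continuous fun t : ℝ ↦ A * (g t / (σ - 1 + (2 * π * t : ℝ) * I)) :=
    continuous_const.mul (hg.div (by fun_prop) hne)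
  rw [tsum_term_mul_fourier_log (ha σ (by simpa using hσ)) hgi,
    integral_Ioi_exp_mul_fourier (by simpa using hσ) hgi, ← integral_const_mul, ← integral_add
      (hcont.integrable_of_hasCompactSupport hgc.mul_right)
      (hcont_pole.integrable_of_hasCompactSupport (by
        simp only [div_eq_mul_inv]; exact hgc.mul_right.mul_left))]
  refine integral_congr_ae (.of_forall fun t ↦ ?_)
  simp only [haG _ (hre t), add_sub_right_comm]
  ring

theorem tsum_div_mul_fourier_log {a : ℕ → ℂ} {A : ℂ} {G : ℂ → ℂ}
    (hG : ContinuousOn G {s | 1 ≤ s.re}) (ha : ∀ s : ℂ, 1 < s.re → LSeriesSummable a s)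
    (haG : ∀ s : ℂ, 1 < s.re → LSeries a s = G s + A / (s - 1))
    (hg : Continuous g) (hgc : HasCompactSupport g) (hFg : IntegrableOn (𝓕 g) (Set.Ioi 0))
    (hsum : Summable fun n : ℕ ↦ a n / n * 𝓕 g (Real.log n)) :
    ∑' n : ℕ, a n / n * 𝓕 g (Real.log n) =
      (∫ t, g t * G (1 + (2 * π * t : ℝ) * I)) + A * ∫ u in Set.Ioi (0 : ℝ), 𝓕 g u := by
  simp only [← term_one_eq_div] at hsum ⊢
  refine tendsto_nhds_unique_of_eventuallyEq (tendsto_tsum_term_mul hsum)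
    ((tendsto_integral_mul_vertical hG hg hgc).add
      ((tendsto_integral_Ioi_exp_mul hFg).const_mul A)) ?_
  filter_upwards [self_mem_nhdsWithin] with σ hσ
  exact tsum_term_mul_fourier_log_of_simple_pole hG ha haG hg hgc hσ

theorem fourier_modulate (g : ℝ → ℂ) (y : ℝ) :
    𝓕 (fun t : ℝ ↦ Complex.exp ((2 * π * t * y : ℝ) * I) * g t) = fun u ↦ 𝓕 g (u - y) := by
  ext u
  simp only [Real.fourier_real_eq_integral_exp_smul, smul_eq_mul, ← mul_assoc, ← Complex.exp_add]
  refine integral_congr_ae (.of_forall fun t ↦ ?_)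
  simp only
  push_cast
  ring_nf

theorem tendsto_tsum_div_mul_fourier_log_sub {a : ℕ → ℂ} {A : ℂ} {G : ℂ → ℂ}
    (hG : ContinuousOn G {s | 1 ≤ s.re}) (ha : ∀ s : ℂ, 1 < s.re → LSeriesSummable a s)
    (haG : ∀ s : ℂ, 1 < s.re → LSeries a s = G s + A / (s - 1))
    (hg : Continuous g) (hgc : HasCompactSupport g) (hFg : Integrable (𝓕 g))
    (hsum : ∀ y : ℝ, Summable fun n : ℕ ↦ a n / n * 𝓕 g (Real.log n - y)) :
    Tendsto (fun y : ℝ ↦ ∑' n : ℕ, a n / n * 𝓕 g (Real.log n - y)) atTop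
      (𝓝 (A * ∫ u, 𝓕 g u)) := by
  have hidentity (y : ℝ) : ∑' n : ℕ, a n / n * 𝓕 g (Real.log n - y) =
      𝓕 (fun t : ℝ ↦ g t * G (1 + (2 * π * t : ℝ) * I)) (-y) +
        A * ∫ u in Set.Ioi (-y), 𝓕 g u := by
    have hphase : Continuous fun t : ℝ ↦ Complex.exp ((2 * π * t * y : ℝ) * I) * g t := by
      fun_prop
    have hshift : ∫ u in Set.Ioi (0 : ℝ), 𝓕 g (u - y) = ∫ u in Set.Ioi (-y), 𝓕 g u := by
      simpa using (measurePreserving_sub_right volume y).setIntegral_preimage_emb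
        (MeasurableEquiv.subRight y).measurableEmbedding (𝓕 g) (Set.Ioi (-y))
    have hFg' := (hFg.comp_sub_right y).integrableOn (s := Set.Ioi 0)
    have hidentity' := tsum_div_mul_fourier_log hG ha haG hphase hgc.mul_left
    simp only [fourier_modulate] at hidentity'
    rw [hidentity' hFg' (hsum y), hshift, Real.fourier_real_eq_integral_exp_smul]
    congr 1
    refine integral_congr_ae (.of_forall fun t ↦ ?_)
    simp only [smul_eq_mul, ← mul_assoc]
    ring_nf
  have hRL : Tendsto (fun y : ℝ ↦ 𝓕 (fun t : ℝ ↦ g t * G (1 + (2 * π * t : ℝ) * I)) (-y))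
      atTop (𝓝 0) :=
    (Real.zero_at_infty_fourier _).comp (tendsto_neg_atTop_atBot.mono_right atBot_le_cocompact)
  have hpole : Tendsto (fun y : ℝ ↦ ∫ u in Set.Ioi (-y), 𝓕 g u) atTop (𝓝 (∫ u, 𝓕 g u)) :=
    (aecover_Ioi tendsto_neg_atTop_atBot).integral_tendsto_of_countably_generated hFg
  simp_rw [hidentity]
  simpa using hRL.add (hpole.const_mul A)

end FourierIdentities

theorem integrable_of_norm_le_const_mul_inv_one_add_sq {K : ℝ → ℂ} {C : ℝ}
    (hKc : Continuous K) (hK : ∀ u, ‖K u‖ ≤ C * (1 + u ^ 2)⁻¹) : Integrable K :=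
  (integrable_inv_one_add_sq.const_mul C).mono' hKc.aestronglyMeasurable (.of_forall hK)

theorem integral_fourier_mul_eq {f g : ℝ → ℂ} (hf : Integrable f) (hg : Integrable g) :
    ∫ u, 𝓕 f u * g u = ∫ t, f t * 𝓕 g t := by
  have h := VectorFourier.integral_fourierIntegral_smul_eq_flip (L := innerₗ ℝ)
    Real.continuous_fourierChar continuous_inner hf hg
  rwa [flip_innerₗ] at h

theorem fourier_comp_mul_mul_fourierInv {χ K : ℝ → ℂ} (hχ : Integrable χ) (hK : Integrable K)
    {δ : ℝ} (hδ : 0 < δ) (u : ℝ) :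
    𝓕 (fun t ↦ χ (δ * t) * 𝓕⁻ K t) u = ∫ v, 𝓕 χ v * K (u - δ * v) := by
  have hKδ : Integrable fun v ↦ K (u - δ * v) := (hK.comp_sub_left u).comp_mul_left' hδ.ne'
  have hscale (t : ℝ) : 𝓕 (fun v ↦ K (u - δ * v)) (δ * t) =
      δ⁻¹ • (Complex.exp ((-2 * π * t * u : ℝ) * I) * 𝓕⁻ K t) := by
    calc 𝓕 (fun v ↦ K (u - δ * v)) (δ * t)
        = ∫ v, Complex.exp ((-2 * π * (δ * v) * t : ℝ) * I) * K (u - δ * v) := by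
          rw [Real.fourier_real_eq_integral_exp_smul]
          refine integral_congr_ae (.of_forall fun v ↦ ?_)
          simp only [smul_eq_mul]
          ring_nf
      _ = δ⁻¹ • ∫ w, Complex.exp ((-2 * π * w * t : ℝ) * I) * K (u - w) := by
          rw [Measure.integral_comp_mul_left
            (fun w ↦ Complex.exp ((-2 * π * w * t : ℝ) * I) * K (u - w)),
            abs_of_pos (by positivity)]
      _ = δ⁻¹ • ∫ s, Complex.exp ((-2 * π * t * u : ℝ) * I) *
            (Complex.exp ((2 * π * (s * t) : ℝ) * I) * K s) := by
          rw [← integral_sub_left_eq_self _ _ u]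
          simp only [sub_sub_cancel, ← mul_assoc, ← Complex.exp_add]
          congr! 5
          push_cast
          ring
      _ = δ⁻¹ • (Complex.exp ((-2 * π * t * u : ℝ) * I) * 𝓕⁻ K t) := by
          rw [integral_const_mul, Real.fourierInv_eq']
          simp only [smul_eq_mul, RCLike.inner_apply, conj_trivial, mul_comm]
  calc 𝓕 (fun t ↦ χ (δ * t) * 𝓕⁻ K t) u
      = δ • ∫ t, χ (δ * t) * 𝓕 (fun v ↦ K (u - δ * v)) (δ * t) := by
        rw [Real.fourier_real_eq_integral_exp_smul, ← integral_smul]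
        refine integral_congr_ae (.of_forall fun t ↦ ?_)
        simp only [hscale, mul_smul_comm, smul_smul, mul_inv_cancel₀ hδ.ne', one_smul, smul_eq_mul]
        ring
    _ = ∫ t, χ t * 𝓕 (fun v ↦ K (u - δ * v)) t := by
        rw [Measure.integral_comp_mul_left (fun t ↦ χ t * 𝓕 (fun v ↦ K (u - δ * v)) t),
          abs_of_pos (by positivity), smul_smul, mul_inv_cancel₀ hδ.ne', one_smul]
    _ = ∫ v, 𝓕 χ v * K (u - δ * v) := (integral_fourier_mul_eq hχ hKδ).symm

theorem exists_schwartzMap_hasCompactSupport_integral_fourier_eq_one :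
    ∃ χ : SchwartzMap ℝ ℂ, HasCompactSupport χ ∧ ∫ v, 𝓕 χ v = 1 := by
  obtain ⟨f, -, hf_supp, hf_smooth, -, hf_zero⟩ :=
    exists_contDiff_tsupport_subset (n := ⊤) (univ_mem : Set.univ ∈ 𝓝 (0 : ℝ))
  have hsupp : HasCompactSupport fun t ↦ (f t : ℂ) := hf_supp.comp_left Complex.ofReal_zero
  have hsmooth : ContDiff ℝ (⊤ : ℕ∞) fun t ↦ (f t : ℂ) := Complex.ofRealCLM.contDiff.comp hf_smooth
  refine ⟨hsupp.toSchwartzMap hsmooth, hsupp, ?_⟩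
  have hinv : 𝓕⁻ (𝓕 (hsupp.toSchwartzMap hsmooth)) 0 = f 0 := by
    rw [FourierTransform.fourierInv_fourier_eq]
    rfl
  rw [SchwartzMap.fourierInv_coe, Real.fourierInv_eq'] at hinv
  simpa [hf_zero] using hinv

theorem norm_sub_le_of_norm_deriv_le {K K' : ℝ → ℂ} {C : ℝ} (hK : ∀ u, HasDerivAt K (K' u) u)
    (hK' : ∀ u, ‖K' u‖ ≤ C * (1 + u ^ 2)⁻¹) (u w : ℝ) :
    ‖K (u - w) - K u‖ ≤ 2 * C * (|w| + |w| ^ 3) * (1 + u ^ 2)⁻¹ := by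
  have hC : 0 ≤ C := by simpa using (norm_nonneg _).trans (hK' 0)
  have hbound : ∀ ξ ∈ Set.uIcc u (u - w), ‖K' ξ‖ ≤ C * (2 * (1 + w ^ 2) * (1 + u ^ 2)⁻¹) := by
    intro ξ hξ
    refine (hK' ξ).trans (mul_le_mul_of_nonneg_left ?_ hC)
    have hdist : (u - ξ) ^ 2 ≤ w ^ 2 := by
      refine sq_le_sq.2 ((abs_sub_comm _ _).trans_le ((Set.abs_sub_left_of_mem_uIcc hξ).trans ?_))
      simp
    rw [inv_eq_one_div, ← div_eq_mul_inv, div_le_div_iff₀ (by positivity) (by positivity)]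
    nlinarith [sq_nonneg (u - 2 * ξ), mul_nonneg (sq_nonneg w) (sq_nonneg ξ)]
  have hmv := (convex_uIcc u (u - w)).norm_image_sub_le_of_norm_hasDerivWithin_le
    (fun ξ _ ↦ (hK ξ).hasDerivWithinAt) hbound Set.left_mem_uIcc Set.right_mem_uIcc
  rw [sub_sub_cancel_left, norm_neg, Real.norm_eq_abs] at hmv
  refine hmv.trans_eq ?_
  rw [← sq_abs w]
  ring

theorem norm_fourier_comp_mul_mul_fourierInv_sub_le {K K' : ℝ → ℂ} {C : ℝ}
    (hK : ∀ u, HasDerivAt K (K' u) u) (hKi : Integrable K)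
    (hK' : ∀ u, ‖K' u‖ ≤ C * (1 + u ^ 2)⁻¹) {χ : SchwartzMap ℝ ℂ} (hχ : ∫ v, 𝓕 χ v = 1)
    {δ : ℝ} (hδ : 0 < δ) (hδ1 : δ ≤ 1) (u : ℝ) :
    ‖𝓕 (fun t ↦ χ (δ * t) * 𝓕⁻ K t) u - K u‖ ≤
      δ * (2 * C * ∫ v, ‖𝓕 χ v‖ * (|v| + |v| ^ 3)) * (1 + u ^ 2)⁻¹ := by
  have hC : 0 ≤ C := by simpa using (norm_nonneg _).trans (hK' 0)
  have hdiff (v : ℝ) : ‖K (u - δ * v) - K u‖ ≤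
      2 * C * (δ * (|v| + |v| ^ 3)) * (1 + u ^ 2)⁻¹ := by
    refine (norm_sub_le_of_norm_deriv_le hK hK' u (δ * v)).trans ?_
    rw [abs_mul, abs_of_pos hδ, mul_pow, mul_add δ]
    gcongr
    exact pow_le_of_le_one hδ.le hδ1 (by norm_num)
  have hmoment : Integrable fun v ↦ ‖𝓕 χ v‖ * (|v| + |v| ^ 3) := by
    refine (((𝓕 χ).integrable_pow_mul volume 1).add
      ((𝓕 χ).integrable_pow_mul volume 3)).congr (.of_forall fun v ↦ ?_)
    simp only [Pi.add_apply, Real.norm_eq_abs, pow_one]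
    ring
  have hbound (v : ℝ) : ‖𝓕 χ v * (K (u - δ * v) - K u)‖ ≤
      δ * (2 * C) * (1 + u ^ 2)⁻¹ * (‖𝓕 χ v‖ * (|v| + |v| ^ 3)) := by
    rw [norm_mul]
    refine (mul_le_mul_of_nonneg_left (hdiff v) (norm_nonneg _)).trans_eq ?_
    ring
  have hφK : Integrable fun v ↦ 𝓕 χ v * K u := (𝓕 χ).integrable.mul_const _
  have hKcont : Continuous K := continuous_iff_continuousAt.2 fun v ↦ (hK v).continuousAt
  have hφdiff : Integrable fun v ↦ 𝓕 χ v * (K (u - δ * v) - K u) :=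
    (hmoment.const_mul _).mono' (by fun_prop) (.of_forall hbound)
  have herror : 𝓕 (fun t ↦ χ (δ * t) * 𝓕⁻ K t) u - K u =
      ∫ v, 𝓕 χ v * (K (u - δ * v) - K u) := by
    have hsplit := integral_add hφdiff hφK
    simp only [← mul_add, sub_add_cancel, integral_mul_const, hχ, one_mul] at hsplit
    rw [fourier_comp_mul_mul_fourierInv χ.integrable hKi hδ, ← SchwartzMap.fourier_coe, hsplit,
      add_sub_cancel_right]
  rw [herror]
  calc ‖∫ v, 𝓕 χ v * (K (u - δ * v) - K u)‖
      ≤ ∫ v, δ * (2 * C) * (1 + u ^ 2)⁻¹ * (‖𝓕 χ v‖ * (|v| + |v| ^ 3)) :=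
        norm_integral_le_of_norm_le (hmoment.const_mul _) (.of_forall hbound)
    _ = δ * (2 * C * ∫ v, ‖𝓕 χ v‖ * (|v| + |v| ^ 3)) * (1 + u ^ 2)⁻¹ := by
        rw [integral_const_mul]
        ring

theorem exists_norm_fourier_sub_le {K K' : ℝ → ℂ} {C : ℝ} (hK : ∀ u, HasDerivAt K (K' u) u)
    (hKi : Integrable K) (hK' : ∀ u, ‖K' u‖ ≤ C * (1 + u ^ 2)⁻¹) {ε : ℝ} (hε : 0 < ε) :
    ∃ g : ℝ → ℂ, Continuous g ∧ HasCompactSupport g ∧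
      ∀ u, ‖𝓕 g u - K u‖ ≤ ε * (1 + u ^ 2)⁻¹ := by
  obtain ⟨χ, hχ, hone⟩ := exists_schwartzMap_hasCompactSupport_integral_fourier_eq_one
  obtain ⟨δ, hδ, hδ1, hδε⟩ : ∃ δ, 0 < δ ∧ δ ≤ 1 ∧
      δ * (2 * C * ∫ v, ‖𝓕 χ v‖ * (|v| + |v| ^ 3)) ≤ ε := by
    have hlim : Tendsto (fun δ ↦ δ * (2 * C * ∫ v, ‖𝓕 χ v‖ * (|v| + |v| ^ 3))) (𝓝[>] 0) (𝓝 0) :=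
      ((continuous_mul_const _).tendsto' 0 0 (zero_mul _)).mono_left nhdsWithin_le_nhds
    obtain ⟨δ, hδε, hδ⟩ := ((hlim.eventually_le_const hε).and
      (Ioc_mem_nhdsGT (zero_lt_one' ℝ))).exists
    exact ⟨δ, hδ.1, hδ.2, hδε⟩
  have hcont : Continuous (𝓕⁻ K) := by
    simp only [funext (Real.fourierInv_eq_fourier_neg K)]
    exact (VectorFourier.fourierIntegral_continuous Real.continuous_fourierChar
      continuous_inner hKi).comp continuous_neg
  refine ⟨fun t ↦ χ (δ * t) * 𝓕⁻ K t, by fun_prop, ?_, fun u ↦ ?_⟩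
  · exact (hχ.comp_homeomorph (Homeomorph.mulLeft₀ δ hδ.ne')).mul_right
  · exact (norm_fourier_comp_mul_mul_fourierInv_sub_le hK hKi hK' hone hδ hδ1 u).trans
      (by gcongr)

/-- The boundary condition of the Wiener–Ikehara theorem: after removing a simple pole of residue
`A` at `s = 1`, the Dirichlet series of `a` extends continuously to the closed half-plane
`1 ≤ re s`. -/
def HasSimplePoleAtOne (a : ℕ → ℂ) (A : ℂ) : Prop :=
  ∃ G : ℂ → ℂ, ContinuousOn G {s | 1 ≤ s.re} ∧
    ∀ s : ℂ, 1 < s.re → LSeries a s = G s + A / (s - 1)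

theorem HasSimplePoleAtOne.tendsto_tsum_div_mul {a : ℕ → ℝ} {A : ℂ}
    (hA : HasSimplePoleAtOne (fun n ↦ (a n : ℂ)) A) {C : ℝ} (ha : HasChebyshevBound a C)
    {K K' : ℝ → ℂ} {D : ℝ} (hK : ∀ u, HasDerivAt K (K' u) u)
    (hKD : ∀ u, ‖K u‖ ≤ D * (1 + u ^ 2)⁻¹) (hK'D : ∀ u, ‖K' u‖ ≤ D * (1 + u ^ 2)⁻¹) :
    Tendsto (fun y : ℝ ↦ ∑' n : ℕ, (a n : ℂ) / n * K (Real.log n - y)) atTop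
      (𝓝 (A * ∫ u, K u)) := by
  obtain ⟨G, hG, haG⟩ := hA
  obtain ⟨B, hB⟩ := ha.exists_forall_summable_norm_tsum_le
  have hKi : Integrable K := integrable_of_norm_le_const_mul_inv_one_add_sq
    (continuous_iff_continuousAt.2 fun u ↦ (hK u).continuousAt) hKD
  refine Metric.tendsto_nhds.2 fun ε hε ↦ ?_
  obtain ⟨η, hη, hηε⟩ : ∃ η > 0, η * B + ‖A‖ * (η * π) < ε / 2 := by
    have hlim : Tendsto (fun η ↦ η * B + ‖A‖ * (η * π)) (𝓝[>] 0) (𝓝 0) :=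
      ((by fun_prop : Continuous fun η ↦ η * B + ‖A‖ * (η * π)).tendsto' 0 0
        (by ring)).mono_left nhdsWithin_le_nhds
    obtain ⟨η, hη, hη0⟩ := ((hlim.eventually_lt_const (half_pos hε)).and
      self_mem_nhdsWithin).exists
    exact ⟨η, hη0, hη⟩
  obtain ⟨g, hg, hgc, hgK⟩ := exists_norm_fourier_sub_le hK hKi hK'D hη
  have hgD (u : ℝ) : ‖𝓕 g u‖ ≤ (η + D) * (1 + u ^ 2)⁻¹ := by
    rw [add_mul]
    exact (norm_le_norm_sub_add _ (K u)).trans (add_le_add (hgK u) (hKD u))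
  have hFg : Integrable (𝓕 g) := integrable_of_norm_le_const_mul_inv_one_add_sq
    (VectorFourier.fourierIntegral_continuous Real.continuous_fourierChar continuous_inner
      (hg.integrable_of_hasCompactSupport hgc)) hgD
  have hlim := tendsto_tsum_div_mul_fourier_log_sub hG (fun s ↦ ha.lseriesSummable) haG hg hgc
    hFg fun y ↦ (hB _ _ hgD y).1
  filter_upwards [Metric.tendsto_nhds.1 hlim (ε / 2) (half_pos hε)] with y hy
  have hsums : ‖∑' n : ℕ, (a n : ℂ) / n * 𝓕 g (Real.log n - y) -
      ∑' n : ℕ, (a n : ℂ) / n * K (Real.log n - y)‖ ≤ η * B := by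
    rw [← (hB _ _ hgD y).1.tsum_sub (hB _ _ hKD y).1]
    simpa only [← mul_sub] using (hB _ _ hgK y).2
  have hintegrals : ‖(∫ u, 𝓕 g u) - ∫ u, K u‖ ≤ η * π := by
    rw [← integral_sub hFg hKi, ← integral_univ_inv_one_add_sq, ← integral_const_mul]
    exact norm_integral_le_of_norm_le (integrable_inv_one_add_sq.const_mul η) (.of_forall hgK)
  calc _ ≤ dist _ (∑' n : ℕ, (a n : ℂ) / n * 𝓕 g (Real.log n - y)) +
        dist _ (A * ∫ u, 𝓕 g u) + dist (A * ∫ u, 𝓕 g u) (A * ∫ u, K u) := dist_triangle4 _ _ _ _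
    _ ≤ η * B + ε / 2 + ‖A‖ * (η * π) := by
        rw [dist_eq_norm', dist_eq_norm (A * _), ← mul_sub, norm_mul]
        gcongr
    _ < ε := by linarith

theorem continuousOn_LSeries_of_summable_one {b : ℕ → ℂ} (hb : LSeriesSummable b 1) :
    ContinuousOn (LSeries b) {s | 1 ≤ s.re} := by
  exact continuousOn_tsum
    (fun n s _ ↦ (LSeries.hasDerivAt_term b n s).continuousAt.continuousWithinAt) hb.norm
    fun n s hs ↦ LSeries.norm_term_le_of_re_le_re b (by simpa using hs) n

section PrimesInProgressions

open ArithmeticFunction.vonMangoldt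

/-- The weight `log p` on the primes `p` in the residue class `r` modulo `q`. -/
noncomputable def primeLogWeight {q : ℕ} (r : ZMod q) (n : ℕ) : ℝ :=
  if n.Prime ∧ (n : ZMod q) = r then Real.log n else 0

variable {q : ℕ} (r : ZMod q)

theorem primeLogWeight_nonneg (n : ℕ) : 0 ≤ primeLogWeight r n := by
  rw [primeLogWeight]
  split_ifs
  exacts [Real.log_natCast_nonneg n, le_rfl]

theorem hasChebyshevBound_primeLogWeight : HasChebyshevBound (primeLogWeight r) (Real.log 4) where
  nonneg := primeLogWeight_nonneg r
  sum_le N := calc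
    ∑ n ∈ Finset.Icc 0 N, primeLogWeight r n
      ≤ ∑ n ∈ Finset.Icc 0 N, if n.Prime then Real.log n else 0 := by
        refine Finset.sum_le_sum fun n _ ↦ ?_
        rw [primeLogWeight, ite_and]
        split_ifs
        exacts [le_rfl, Real.log_natCast_nonneg n, le_rfl]
    _ = Chebyshev.theta N := by
        rw [Chebyshev.theta_eq_sum_Icc, Nat.floor_natCast, Finset.sum_filter]
    _ ≤ Real.log 4 * N := Chebyshev.theta_le_log4_mul_x N.cast_nonneg

theorem hasSimplePoleAtOne_primeLogWeight [NeZero q] (hr : IsUnit r) :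
    HasSimplePoleAtOne (fun n ↦ (primeLogWeight r n : ℂ)) (q.totient : ℂ)⁻¹ := by
  let b (n : ℕ) : ℂ := ((if n.Prime then 0 else residueClass r n : ℝ) : ℂ)
  have hsplit : (fun n ↦ (primeLogWeight r n : ℂ)) = (fun n ↦ (residueClass r n : ℂ)) - b := by
    ext n
    by_cases hn : n.Prime <;> by_cases hnr : (n : ZMod q) = r <;>
      simp [b, primeLogWeight, hn, hnr, ArithmeticFunction.vonMangoldt_apply_prime]
  have hb : LSeriesSummable b 1 := by
    refine (Complex.summable_ofReal.2 (summable_residueClass_non_primes_div r)).congr fun n ↦ ?_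
    rw [term_one_eq_div, Complex.ofReal_div, Complex.ofReal_natCast]
  refine ⟨fun s ↦ LFunctionResidueClassAux r s - LSeries b s,
    (continuousOn_LFunctionResidueClassAux r).sub (continuousOn_LSeries_of_summable_one hb),
    fun s hs ↦ ?_⟩
  have hΛ : LSeriesSummable (fun n ↦ (residueClass r n : ℂ)) s :=
    LSeriesSummable_of_abscissaOfAbsConv_lt_re
      ((abscissaOfAbsConv_residueClass_le_one r).trans_lt (by exact_mod_cast hs))
  rw [hsplit, LSeries_sub hΛ (hb.of_re_le_re (by simpa using hs.le))]
  simp only [eqOn_LFunctionResidueClassAux hr hs]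
  ring

end PrimesInProgressions

theorem inv_one_add_sq_sq_le (u : ℝ) : ((1 + u ^ 2) ^ 2)⁻¹ ≤ (1 + u ^ 2)⁻¹ :=
  inv_anti₀ (by positivity) (le_self_pow₀ (le_add_of_nonneg_right (sq_nonneg u)) two_ne_zero)

theorem abs_div_log_sub_one_le (n : ℕ) {y : ℝ} (hy : 0 < y) :
    |y / Real.log n - 1| ≤ 3 / y * (1 + (Real.log n - y) ^ 2) := by
  rw [div_mul_eq_mul_div]
  rcases le_or_gt n 1 with hn | hn
  · have hlog : Real.log n = 0 := by interval_cases n <;> simp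
    rw [hlog, div_zero, zero_sub, abs_neg, abs_one, le_div_iff₀ hy]
    nlinarith [sq_nonneg (y - 1)]
  have hlog : 1 / 2 < Real.log n := by
    have hle : Real.log 2 ≤ Real.log n := Real.log_le_log two_pos (by exact_mod_cast hn)
    linarith [Real.log_two_gt_d9]
  have hlog0 : 0 < Real.log n := by linarith
  have hyl : y ≤ Real.log n * (1 + 2 * |Real.log n - y|) := by
    nlinarith [neg_abs_le (Real.log n - y), abs_nonneg (Real.log n - y)]
  rw [div_sub_one hlog0.ne', abs_div, abs_of_pos hlog0, abs_sub_comm,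
    div_le_div_iff₀ hlog0 hy, ← sq_abs (Real.log n - y)]
  set v := |Real.log n - y|
  have hv : 0 ≤ v := abs_nonneg _
  calc v * y ≤ v * (Real.log n * (1 + 2 * v)) := mul_le_mul_of_nonneg_left hyl hv
    _ = v * (1 + 2 * v) * Real.log n := by ring
    _ ≤ 3 * (1 + v ^ 2) * Real.log n :=
        mul_le_mul_of_nonneg_right (by nlinarith [sq_nonneg (v - 1)]) hlog0.le

theorem HasChebyshevBound.exists_forall_summable_norm_tsum_mul_div_log_sub_one_le {a : ℕ → ℝ}
    {C : ℝ} (ha : HasChebyshevBound a C) {K : ℝ → ℂ} {D : ℝ}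
    (hKD : ∀ u, ‖K u‖ ≤ D * ((1 + u ^ 2) ^ 2)⁻¹) :
    ∃ B, ∀ y : ℝ, 0 < y →
      Summable (fun n : ℕ ↦
        (a n : ℂ) / n * K (Real.log n - y) * ((y / Real.log n - 1 : ℝ) : ℂ)) ∧
      ‖∑' n : ℕ, (a n : ℂ) / n * K (Real.log n - y) * ((y / Real.log n - 1 : ℝ) : ℂ)‖ ≤ B / y := by
  have hD : 0 ≤ D := by simpa using (norm_nonneg _).trans (hKD 0)
  obtain ⟨B, hB⟩ := ha.exists_forall_summable_tsum_le
  refine ⟨D * 3 * B, fun y hy ↦ ?_⟩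
  obtain ⟨hsum, hle⟩ := hB y
  have hterm (n : ℕ) :
      ‖(a n : ℂ) / n * K (Real.log n - y) * ((y / Real.log n - 1 : ℝ) : ℂ)‖ ≤
        D * (3 / y) * (a n / n * (1 + (Real.log n - y) ^ 2)⁻¹) := by
    have han : 0 ≤ a n / n := div_nonneg (ha.nonneg n) n.cast_nonneg
    rw [norm_mul, norm_mul, norm_div, Complex.norm_natCast, Complex.norm_real, Complex.norm_real,
      Real.norm_of_nonneg (ha.nonneg n), Real.norm_eq_abs]
    calc a n / n * ‖K (Real.log n - y)‖ * |y / Real.log n - 1|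
        ≤ a n / n * (D * ((1 + (Real.log n - y) ^ 2) ^ 2)⁻¹) *
            (3 / y * (1 + (Real.log n - y) ^ 2)) := by
          gcongr
          exacts [hKD _, abs_div_log_sub_one_le n hy]
      _ = D * (3 / y) * (a n / n * (1 + (Real.log n - y) ^ 2)⁻¹) := by field_simp
  refine ⟨.of_norm_bounded (hsum.mul_left _) hterm,
    (tsum_of_norm_bounded (hsum.mul_left _).hasSum hterm).trans ?_⟩
  calc ∑' n : ℕ, D * (3 / y) * (a n / n * (1 + (Real.log n - y) ^ 2)⁻¹)
      = D * (3 / y) * ∑' n : ℕ, a n / n * (1 + (Real.log n - y) ^ 2)⁻¹ := tsum_mul_left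
    _ ≤ D * (3 / y) * B := by gcongr
    _ = D * 3 * B / y := by ring

theorem HasSimplePoleAtOne.tendsto_mul_tsum_div_log_mul {a : ℕ → ℝ} {A : ℂ}
    (hA : HasSimplePoleAtOne (fun n ↦ (a n : ℂ)) A) {C : ℝ} (ha : HasChebyshevBound a C)
    {K K' : ℝ → ℂ} {D : ℝ} (hK : ∀ u, HasDerivAt K (K' u) u)
    (hKD : ∀ u, ‖K u‖ ≤ D * ((1 + u ^ 2) ^ 2)⁻¹) (hK'D : ∀ u, ‖K' u‖ ≤ D * (1 + u ^ 2)⁻¹) :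
    Tendsto (fun y : ℝ ↦ y * ∑' n : ℕ, (a n : ℂ) / (n * Real.log n) * K (Real.log n - y)) atTop
      (𝓝 (A * ∫ u, K u)) := by
  have hD : 0 ≤ D := by simpa using (norm_nonneg _).trans (hK'D 0)
  have hKD' (u : ℝ) : ‖K u‖ ≤ D * (1 + u ^ 2)⁻¹ :=
    (hKD u).trans (mul_le_mul_of_nonneg_left (inv_one_add_sq_sq_le u) hD)
  obtain ⟨_, hmain⟩ := ha.exists_forall_summable_norm_tsum_le
  obtain ⟨B, herror⟩ := ha.exists_forall_summable_norm_tsum_mul_div_log_sub_one_le hKD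
  have herror_lim : Tendsto (fun y : ℝ ↦ ∑' n : ℕ,
      (a n : ℂ) / n * K (Real.log n - y) * ((y / Real.log n - 1 : ℝ) : ℂ)) atTop (𝓝 0) := by
    refine squeeze_zero_norm' ?_ (tendsto_id.const_div_atTop B)
    filter_upwards [eventually_gt_atTop 0] with y hy using (herror y hy).2
  have hlim := (hA.tendsto_tsum_div_mul ha hK hKD' hK'D).add herror_lim
  rw [add_zero] at hlim
  refine hlim.congr' ?_
  filter_upwards [eventually_gt_atTop 0] with y hy
  rw [← (hmain K D hKD' y).1.tsum_add (herror y hy).1, ← tsum_mul_left]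
  refine tsum_congr fun n ↦ ?_
  push_cast
  rw [← div_div]
  ring

/-- The kernel `exp (s * u - exp u)`, which is `x ^ s * exp (-x)` in the variable `u = log x`; its
integral over the line is therefore `Γ(s)`. -/
noncomputable def gammaKernel (s u : ℝ) : ℝ := Real.exp (s * u - Real.exp u)

theorem gammaKernel_log (s : ℝ) {x : ℝ} (hx : 0 < x) :
    gammaKernel s (Real.log x) = x ^ s * Real.exp (-x) := by
  rw [gammaKernel, Real.exp_log hx, sub_eq_add_neg, Real.exp_add, Real.rpow_def_of_pos hx,
    mul_comm s]

theorem gammaKernel_add (s r u : ℝ) :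
    gammaKernel (s + r) u = Real.exp (r * u) * gammaKernel s u := by
  rw [gammaKernel, gammaKernel, ← Real.exp_add]
  ring_nf

theorem integral_gammaKernel {s : ℝ} (hs : 0 < s) : ∫ u, gammaKernel s u = Real.Gamma s := by
  have hcov := integral_image_eq_integral_abs_deriv_smul MeasurableSet.univ
    (fun u _ ↦ (Real.hasDerivAt_exp u).hasDerivWithinAt) Real.exp_injective.injOn
    fun x ↦ Real.exp (-x) * x ^ (s - 1)
  rw [Set.image_univ, Real.range_exp, Measure.restrict_univ, ← Real.Gamma_eq_integral hs] at hcov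
  refine (integral_congr_ae (.of_forall fun u ↦ ?_)).trans hcov.symm
  simp only [smul_eq_mul, abs_of_pos (Real.exp_pos u), ← Real.exp_mul, ← Real.exp_add, gammaKernel]
  ring_nf

theorem hasDerivAt_gammaKernel (s u : ℝ) :
    HasDerivAt (gammaKernel s) (s * gammaKernel s u - gammaKernel (s + 1) u) u := by
  refine (((hasDerivAt_id u).const_mul s).sub (Real.hasDerivAt_exp u)).exp.congr_deriv ?_
  rw [gammaKernel_add, one_mul, mul_one, mul_comm, sub_mul]
  rfl

theorem exists_forall_gammaKernel_le {s : ℝ} (hs : 0 < s) : ∃ M, ∀ u, gammaKernel s u ≤ M := by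
  refine ⟨Real.exp (s * (Real.log s - 1)), fun u ↦ Real.exp_le_exp.2 ?_⟩
  have htangent : s * (u - Real.log s + 1) ≤ Real.exp u := by
    calc s * (u - Real.log s + 1) ≤ s * Real.exp (u - Real.log s) := by
          gcongr
          exact Real.add_one_le_exp _
      _ = Real.exp u := by rw [Real.exp_sub, Real.exp_log hs, mul_div_cancel₀ _ hs.ne']
  linarith

theorem exists_one_add_sq_sq_le_exp {δ : ℝ} (hδ : 0 < δ) :
    ∃ c, 0 ≤ c ∧ ∀ u : ℝ, (1 + u ^ 2) ^ 2 ≤ c * (Real.exp (δ * u) + Real.exp (-δ * u)) := by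
  refine ⟨2 + 48 / δ ^ 4, by positivity, fun u ↦ ?_⟩
  have hquartic : u ^ 4 ≤ 24 / δ ^ 4 * Real.exp |δ * u| := by
    have hpow := Real.pow_div_factorial_le_exp _ (abs_nonneg (δ * u)) 4
    rw [(by decide : Even 4).pow_abs, mul_pow, (by decide : Nat.factorial 4 = 24),
      div_le_iff₀ (by positivity)] at hpow
    push_cast at hpow
    rw [div_mul_eq_mul_div, le_div_iff₀ (by positivity)]
    linarith
  have hone : 1 ≤ Real.exp |δ * u| := Real.one_le_exp (abs_nonneg _)
  calc (1 + u ^ 2) ^ 2 ≤ 2 + 2 * u ^ 4 := by nlinarith [sq_nonneg (u ^ 2 - 1)]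
    _ ≤ (2 + 48 / δ ^ 4) * Real.exp |δ * u| := by linear_combination 2 * hone + 2 * hquartic
    _ ≤ (2 + 48 / δ ^ 4) * (Real.exp (δ * u) + Real.exp (-δ * u)) := by
        rw [neg_mul]
        gcongr
        exact Real.exp_abs_le _

theorem exists_forall_gammaKernel_le_inv_one_add_sq_sq {s : ℝ} (hs : 0 < s) :
    ∃ D, ∀ u, gammaKernel s u ≤ D * ((1 + u ^ 2) ^ 2)⁻¹ := by
  obtain ⟨c, hc, hpoly⟩ := exists_one_add_sq_sq_le_exp (half_pos hs)
  obtain ⟨M, hM⟩ := exists_forall_gammaKernel_le (add_pos hs (half_pos hs))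
  obtain ⟨M', hM'⟩ := exists_forall_gammaKernel_le (by linarith : 0 < s + -(s / 2))
  refine ⟨c * (M + M'), fun u ↦ (le_mul_inv_iff₀ (by positivity)).2 ?_⟩
  have hpos : 0 ≤ gammaKernel s u := (Real.exp_pos _).le
  calc gammaKernel s u * (1 + u ^ 2) ^ 2
      ≤ gammaKernel s u * (c * (Real.exp (s / 2 * u) + Real.exp (-(s / 2) * u))) := by
        gcongr
        exact hpoly u
    _ = c * (gammaKernel (s + s / 2) u + gammaKernel (s + -(s / 2)) u) := by
        rw [gammaKernel_add, gammaKernel_add]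
        ring
    _ ≤ c * (M + M') := by
        gcongr
        exacts [hM u, hM' u]

theorem exists_norm_gammaKernel_le_and_norm_deriv_le {s : ℝ} (hs : 0 < s) :
    ∃ D, (∀ u, ‖(gammaKernel s u : ℂ)‖ ≤ D * ((1 + u ^ 2) ^ 2)⁻¹) ∧
      ∀ u, ‖((s * gammaKernel s u - gammaKernel (s + 1) u : ℝ) : ℂ)‖ ≤ D * (1 + u ^ 2)⁻¹ := by
  obtain ⟨D, hD⟩ := exists_forall_gammaKernel_le_inv_one_add_sq_sq hs
  obtain ⟨D', hD'⟩ := exists_forall_gammaKernel_le_inv_one_add_sq_sq (add_pos hs one_pos)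
  have hnonneg (r u : ℝ) : 0 ≤ gammaKernel r u := (Real.exp_pos _).le
  have hE : 0 ≤ s * D + D' := by
    have h0 := (hnonneg s 0).trans (hD 0)
    have h0' := (hnonneg (s + 1) 0).trans (hD' 0)
    norm_num at h0 h0'
    positivity
  refine ⟨max D (s * D + D'), fun u ↦ ?_, fun u ↦ ?_⟩
  · rw [Complex.norm_real, Real.norm_of_nonneg (hnonneg s u)]
    exact (hD u).trans (by gcongr; exact le_max_left _ _)
  rw [Complex.norm_real]
  calc ‖s * gammaKernel s u - gammaKernel (s + 1) u‖
      ≤ s * gammaKernel s u + gammaKernel (s + 1) u := by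
        refine (norm_sub_le _ _).trans_eq ?_
        rw [Real.norm_of_nonneg (mul_nonneg hs.le (hnonneg s u)),
          Real.norm_of_nonneg (hnonneg (s + 1) u)]
    _ ≤ s * (D * ((1 + u ^ 2) ^ 2)⁻¹) + D' * ((1 + u ^ 2) ^ 2)⁻¹ := by
        gcongr
        exacts [hD u, hD' u]
    _ = (s * D + D') * ((1 + u ^ 2) ^ 2)⁻¹ := by ring
    _ ≤ max D (s * D + D') * (1 + u ^ 2)⁻¹ := by
        gcongr ?_ * ?_
        exacts [le_max_right _ _, inv_one_add_sq_sq_le u]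

section PrimeExpSum

/-- The exponential sum `∑ p ^ (s - 1) * exp (-p t)` over the primes `p ≡ r mod q`; it is the sum
`∑ (p t) ^ s * exp (-p t) / p` up to the factor `t ^ s`. -/
noncomputable def primeExpSum {q : ℕ} (r : ZMod q) (s t : ℝ) : ℝ :=
  ∑' p : ℕ, if p.Prime ∧ (p : ZMod q) = r then (p : ℝ) ^ (s - 1) * Real.exp (-(p * t)) else 0

variable {q : ℕ} (r : ZMod q)

theorem tsum_primeLogWeight_mul_gammaKernel (s : ℝ) {t : ℝ} (ht : 0 < t) :
    ∑' n : ℕ, primeLogWeight r n / (n * Real.log n) *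
      gammaKernel s (Real.log n - Real.log (1 / t)) = t ^ s * primeExpSum r s t := by
  rw [primeExpSum, ← tsum_mul_left]
  refine tsum_congr fun n ↦ ?_
  rw [primeLogWeight]
  split_ifs with hn
  · have hn0 : (0 : ℝ) < n := by exact_mod_cast hn.1.pos
    have hlog : Real.log n ≠ 0 := (Real.log_pos (by exact_mod_cast hn.1.one_lt)).ne'
    rw [← Real.log_div hn0.ne' (by positivity), div_div_eq_mul_div, div_one,
      gammaKernel_log s (by positivity), Real.mul_rpow hn0.le ht.le, Real.rpow_sub_one hn0.ne']
    field_simp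
  · simp

theorem tendsto_rpow_mul_log_mul_primeExpSum [NeZero q] (hr : IsUnit r) {s : ℝ} (hs : 0 < s) :
    Tendsto (fun t ↦ t ^ s * Real.log (1 / t) * primeExpSum r s t) (𝓝[>] 0)
      (𝓝 (Real.Gamma s / q.totient)) := by
  obtain ⟨D, hKD, hK'D⟩ := exists_norm_gammaKernel_le_and_norm_deriv_le hs
  have hlog : Tendsto (fun t : ℝ ↦ Real.log (1 / t)) (𝓝[>] 0) atTop := by
    simpa only [one_div, Function.comp_def] using
      Real.tendsto_log_atTop.comp tendsto_inv_nhdsGT_zero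
  have hsum := ((hasSimplePoleAtOne_primeLogWeight r hr).tendsto_mul_tsum_div_log_mul
    (hasChebyshevBound_primeLogWeight r) (fun u ↦ (hasDerivAt_gammaKernel s u).ofReal_comp)
    hKD hK'D).comp hlog
  have hvalue : (q.totient : ℂ)⁻¹ * ∫ u, (gammaKernel s u : ℂ) =
      (Real.Gamma s / q.totient : ℝ) := by
    rw [integral_complex_ofReal, integral_gammaKernel hs]
    push_cast
    ring
  rw [hvalue] at hsum
  refine tendsto_ofReal_iff.1 (hsum.congr' ?_)
  filter_upwards [self_mem_nhdsWithin] with t ht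
  rw [mul_right_comm, ← tsum_primeLogWeight_mul_gammaKernel r s ht, mul_comm]
  push_cast
  rfl

theorem summable_primeExpSum (s : ℝ) {t : ℝ} (ht : 0 < t) :
    Summable fun p : ℕ ↦
      if p.Prime ∧ (p : ZMod q) = r then (p : ℝ) ^ (s - 1) * Real.exp (-(p * t)) else 0 := by
  refine .of_norm_bounded (Real.summable_pow_mul_exp_neg_nat_mul ⌈s⌉₊ ht) fun n ↦ ?_
  split_ifs with hn
  · have hn1 : (1 : ℝ) ≤ n := by exact_mod_cast hn.1.one_le
    rw [Real.norm_of_nonneg (by positivity), ← Real.rpow_natCast, neg_mul, mul_comm t]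
    gcongr
    exact (sub_one_lt s).le.trans (Nat.le_ceil s)
  · rw [norm_zero]
    positivity

end PrimeExpSum

theorem fOdd''_exp_neg {t : ℝ} (ht : 0 < t) : fOdd'' (Real.exp (-t)) =
    Real.exp (2 * t) * (primeExpSum (1 : ZMod 2) 3 t - primeExpSum (1 : ZMod 2) 2 t) := by
  rw [fOdd'', primeExpSum, primeExpSum,
    ← (summable_primeExpSum 1 3 ht).tsum_sub (summable_primeExpSum 1 2 ht), ← tsum_mul_left]
  refine tsum_congr fun p ↦ ?_
  simp only [ZMod.natCast_eq_one_iff_odd]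
  split_ifs with hp
  · have hexp : Real.exp (-t) ^ (p - 2) = Real.exp (2 * t) * Real.exp (-(p * t)) := by
      rw [← Real.exp_nat_mul, ← Real.exp_add, Nat.cast_sub hp.1.two_le]
      push_cast
      ring_nf
    have hsq : (p : ℝ) ^ ((3 : ℝ) - 1) = p ^ 2 := by
      rw [← Real.rpow_natCast]
      norm_num
    have hone : (p : ℝ) ^ ((2 : ℝ) - 1) = p := by norm_num
    rw [hexp, hsq, hone]
    ring
  · simp

/-- `f″(e^{−t}) ~ 2/(t³·log(1/t))` as `t → 0⁺`. -/
theorem fOdd''_exp_asymptotic :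
    Tendsto (fun t : ℝ => fOdd'' (Real.exp (-t)) * (t ^ 3 * Real.log (1 / t)))
      (𝓝[>] 0) (𝓝 2) := by
  have hid : Tendsto (fun t : ℝ ↦ t) (𝓝[>] 0) (𝓝 0) := nhdsWithin_le_nhds
  have hexp : Tendsto (fun t : ℝ ↦ Real.exp (2 * t)) (𝓝[>] 0) (𝓝 1) := by
    simpa using (hid.const_mul 2).rexp
  have hcube : Tendsto (fun t ↦ t ^ (3 : ℝ) * Real.log (1 / t) * primeExpSum (1 : ZMod 2) 3 t)
      (𝓝[>] 0) (𝓝 2) := by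
    have hΓ : Real.Gamma 3 = 2 := by simp
    simpa [hΓ] using tendsto_rpow_mul_log_mul_primeExpSum (1 : ZMod 2) isUnit_one three_pos
  have hsq := tendsto_rpow_mul_log_mul_primeExpSum (1 : ZMod 2) isUnit_one two_pos
  have hlim := hexp.mul (hcube.sub (hid.mul hsq))
  rw [zero_mul, sub_zero, one_mul] at hlim
  refine hlim.congr' ?_
  filter_upwards [self_mem_nhdsWithin] with t ht
  rw [fOdd''_exp_neg ht]
  norm_cast
  ring
end

section
/- Let π(y) denote the number of primes not exceeding y, and for t > 0 set I₂(t) = ∫_{√t}^∞ s·e^{−s}·π(s/t) ds. Then I₂(t) ~ 2/(t·log(1/t)) as t → 0⁺. -/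
open Filter Topology Asymptotics MeasureTheory

/-- `I₂(t) = ∫_{√t}^∞ s·e^{−s}·π(s/t) ds`. -/
noncomputable def I2 (t : ℝ) : ℝ :=
  ∫ s in Set.Ioi (Real.sqrt t), s * Real.exp (-s) * (primePi (s / t) : ℝ)

/-!
The dilates of `sinc ^ 2` are Fourier transforms of compactly supported functions. The Laplace
transform of `u ↦ ψ (exp u) * exp (-u) - 1` on `u > 0` extends continuously to the imaginary axis,
because the logarithmic derivative of `ζ`, minus its pole at `1`, is continuous on `1 ≤ re s`. By
Parseval and the Riemann–Lebesgue lemma the averages of this remainder against translates of every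
dilate of `sinc ^ 2` tend to `0`. As `ψ` is monotone, the remainder is slowly decreasing, and so
tends to `0` itself, which is the prime number theorem.

For fixed `s`, the prime number theorem gives `π(s/t) * (t * log (1/t)) → s` as `t → 0⁺`. On the
range `s > √t` one has `log (1/t) ≤ 2 * log (s/t)`, so for small `t` the integrand of
`I₂(t) * (t * log (1/t))` is dominated by `4 * s ^ 2 * exp (-s)`; it converges to
`s ^ 2 * exp (-s)`, whose integral is `Γ(3) = 2`.
-/

section

open Real Set
open scoped FourierTransform Convolution

theorem intervalIntegral_exp_mul_mul_I (r c : ℝ) :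
    ∫ t in -r..r, Complex.exp (↑(c * t) * Complex.I) = 2 * r * sinc (c * r) := by
  rcases eq_or_ne c 0 with rfl | hc
  · simp only [zero_mul, Complex.ofReal_zero, Complex.exp_zero, intervalIntegral.integral_const,
      sinc_zero, Complex.real_smul]
    push_cast
    ring
  · rw [intervalIntegral.integral_comp_mul_left (fun t : ℝ => Complex.exp (t * Complex.I)) hc,
      mul_neg, integral_exp_mul_I_eq_sinc, Complex.real_smul]
    have : (c : ℂ) ≠ 0 := mod_cast hc
    push_cast
    field_simp

theorem fourier_indicator_Ioc_neg {r : ℝ} (hr : 0 ≤ r) (c : ℂ) (w : ℝ) :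
    𝓕 ((Ioc (-r) r).indicator fun _ => c) w = c * (2 * r * sinc (2 * π * r * w)) := by
  have integrand_eq (x : ℝ) :
      Complex.exp (↑(-2 * π * x * w) * Complex.I) • (Ioc (-r) r).indicator (fun _ => c) x =
        (Ioc (-r) r).indicator
          (fun x : ℝ => c * Complex.exp (↑(-(2 * π * w) * x) * Complex.I)) x := by
    by_cases hx : x ∈ Ioc (-r) r
    · simp only [indicator_of_mem hx, smul_eq_mul, mul_comm c]
      ring_nf
    · simp only [indicator_of_notMem hx, smul_zero]
  rw [fourier_real_eq_integral_exp_smul]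
  simp only [integrand_eq]
  rw [integral_indicator measurableSet_Ioc, ← intervalIntegral.integral_of_le (by linarith),
    intervalIntegral.integral_const_mul, intervalIntegral_exp_mul_mul_I, neg_mul, sinc_neg]
  ring_nf

theorem exists_fourier_eq_sinc_sq {l : ℝ} (hl : 0 < l) :
    ∃ φ : ℝ → ℂ, Integrable φ ∧ HasCompactSupport φ ∧
      ∀ w, 𝓕 φ w = ((sinc (l * w) ^ 2 : ℝ) : ℂ) := by
  set r := l / (2 * π)
  have r_pos : 0 < r := by positivity
  set χ : ℝ → ℂ := (Ioc (-r) r).indicator fun _ => ((2 * r : ℝ) : ℂ)⁻¹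
  have χ_integrable : Integrable χ :=
    (integrable_indicator_iff measurableSet_Ioc).2 (integrableOn_const (by simp) enorm_ne_top)
  have χ_compact : HasCompactSupport χ :=
    HasCompactSupport.intro isCompact_Icc fun _ hx =>
      indicator_of_notMem (fun h => hx (Ioc_subset_Icc_self h)) _
  have fourier_χ (w : ℝ) : 𝓕 χ w = sinc (l * w) := by
    have two_r_ne : ((2 * r : ℝ) : ℂ) ≠ 0 := mod_cast (by positivity)
    have two_pi_r : 2 * π * r = l := mul_div_cancel₀ _ (by positivity)
    rw [fourier_indicator_Ioc_neg r_pos.le, two_pi_r, ← Complex.ofReal_ofNat,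
      ← Complex.ofReal_mul, inv_mul_cancel_left₀ two_r_ne]
  refine ⟨χ ⋆[ContinuousLinearMap.mul ℂ ℂ] χ, χ_integrable.integrable_convolution _ χ_integrable,
    χ_compact.convolution _ χ_compact, fun w => ?_⟩
  rw [Real.fourier_mul_convolution_eq χ_integrable χ_integrable, fourier_χ, ← sq,
    Complex.ofReal_pow]

theorem sinc_sq_le (x : ℝ) : sinc x ^ 2 ≤ 2 * (1 + x ^ 2)⁻¹ := by
  have mul_sinc : x * sinc x = sin x := by
    rcases eq_or_ne x 0 with rfl | hx
    · simp
    · rw [sinc_of_ne_zero hx, mul_div_cancel₀ _ hx]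
  have sinc_sq_le_one : sinc x ^ 2 ≤ 1 := (sq_le_one_iff_abs_le_one _).2 (abs_sinc_le_one x)
  rw [← div_eq_mul_inv, le_div_iff₀ (by positivity)]
  calc sinc x ^ 2 * (1 + x ^ 2) = sinc x ^ 2 + sin x ^ 2 := by rw [← mul_sinc]; ring
    _ ≤ 2 := by linarith [sin_sq_le_one x]

theorem integrable_sinc_sq : Integrable fun x => sinc x ^ 2 :=
  (integrable_inv_one_add_sq.const_mul 2).mono' (continuous_sinc.pow 2).aestronglyMeasurable <|
    .of_forall fun x => (norm_of_nonneg (sq_nonneg _)).trans_le (sinc_sq_le x)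

theorem integral_sinc_sq_pos : 0 < ∫ x, sinc x ^ 2 :=
  integral_pos_of_integrable_nonneg_nonzero (x := 0) (continuous_sinc.pow 2) integrable_sinc_sq
    (fun _ => sq_nonneg _) (by simp)

theorem fourier_exp_mul (φ : ℝ → ℂ) (v : ℝ) :
    𝓕 (fun y : ℝ => Complex.exp (2 * π * v * y * Complex.I) * φ y) = fun u => 𝓕 φ (u - v) := by
  ext u
  simp only [fourier_real_eq_integral_exp_smul, smul_eq_mul, ← mul_assoc, ← Complex.exp_add]
  congr! 4
  push_cast
  ring

section LaplaceBoundary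

variable {F : ℝ → ℂ} {M : ℝ} {g : ℂ → ℂ} {φ : ℝ → ℂ}

theorem integrable_exp_neg_mul_of_bounded (hF : AEStronglyMeasurable F) (hFM : ∀ u, ‖F u‖ ≤ M)
    (hF0 : ∀ u ≤ 0, F u = 0) {z : ℂ} (hz : 0 < z.re) :
    Integrable fun u : ℝ => Complex.exp (-z * u) * F u := by
  have supported : (fun u : ℝ => Complex.exp (-z * u) * F u) =
      (Ioi 0).indicator fun u : ℝ => Complex.exp (-z * u) * F u := by
    refine (indicator_eq_self.2 fun u hu => ?_).symm
    contrapose! hu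
    simp [hF0 u (not_lt.1 hu)]
  rw [supported, integrable_indicator_iff measurableSet_Ioi]
  exact (integrableOn_exp_mul_complex_Ioi (by simpa) 0).mul_bdd hF.restrict (.of_forall hFM)

theorem integral_exp_mul_fourier_eq_integral_laplace (hF : AEStronglyMeasurable F)
    (hFM : ∀ u, ‖F u‖ ≤ M) (hF0 : ∀ u ≤ 0, F u = 0)
    (hg : ∀ z : ℂ, 0 < z.re → ∫ u : ℝ, Complex.exp (-z * u) * F u = g z)
    (hφ : Integrable φ) {ε : ℝ} (hε : 0 < ε) :
    ∫ u : ℝ, Complex.exp (-ε * u) * F u * 𝓕 φ u =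
      ∫ y : ℝ, g (ε + 2 * π * y * Complex.I) * φ y := by
  have fourier_eq (y : ℝ) :
      𝓕 (fun u : ℝ => Complex.exp (-ε * u) * F u) y = g (ε + 2 * π * y * Complex.I) := by
    rw [← hg _ (by simpa), fourier_real_eq_integral_exp_smul]
    simp only [smul_eq_mul, ← mul_assoc, ← Complex.exp_add]
    congr! 4
    push_cast
    ring
  have hFε : Integrable fun u : ℝ => Complex.exp (-ε * u) * F u :=
    integrable_exp_neg_mul_of_bounded hF hFM hF0 (by simpa)
  simp only [← fourier_eq]
  simpa using! (VectorFourier.integral_fourierIntegral_smul_eq_flip (L := innerₗ ℝ)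
      Real.continuous_fourierChar continuous_inner hFε hφ).symm

theorem tendsto_integral_exp_mul_fourier (hF : AEStronglyMeasurable F)
    (hFM : ∀ u, ‖F u‖ ≤ M) (hF0 : ∀ u ≤ 0, F u = 0) (hφ : Integrable (𝓕 φ)) :
    Tendsto (fun ε : ℝ => ∫ u : ℝ, Complex.exp (-ε * u) * F u * 𝓕 φ u) (𝓝[>] 0)
      (𝓝 (∫ u, F u * 𝓕 φ u)) := by
  refine tendsto_integral_filter_of_dominated_convergence (fun u => M * ‖𝓕 φ u‖) ?_ ?_
    (hφ.norm.const_mul M) (.of_forall fun u => ?_)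
  · refine .of_forall fun ε => (AEStronglyMeasurable.mul ?_ hF).mul hφ.aestronglyMeasurable
    exact (by fun_prop : Continuous fun u : ℝ => Complex.exp (-ε * u)).aestronglyMeasurable
  · filter_upwards [self_mem_nhdsWithin] with ε hε
    refine .of_forall fun u => ?_
    rw [norm_mul]
    gcongr
    rcases le_or_gt u 0 with hu | hu
    · simpa [hF0 u hu] using (norm_nonneg _).trans (hFM u)
    · have exp_le_one : ‖Complex.exp (-ε * u)‖ ≤ 1 := by
        simpa [Complex.norm_exp] using (mul_pos (mem_Ioi.1 hε) hu).le
      rw [norm_mul]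
      exact (mul_le_of_le_one_left (norm_nonneg _) exp_le_one).trans (hFM u)
  · have : Continuous fun ε : ℝ => Complex.exp (-ε * u) * F u * 𝓕 φ u := by fun_prop
    simpa using (this.tendsto 0).mono_left nhdsWithin_le_nhds

theorem tendsto_integral_boundary (hg : ContinuousOn g {z | 0 ≤ z.re}) (hφ : Integrable φ)
    (hφc : HasCompactSupport φ) :
    Tendsto (fun ε : ℝ => ∫ y : ℝ, g (ε + 2 * π * y * Complex.I) * φ y) (𝓝[>] 0)
      (𝓝 (∫ y : ℝ, g (2 * π * y * Complex.I) * φ y)) := by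
  set γ : ℝ × ℝ → ℂ := fun p => g (p.1 + 2 * π * p.2 * Complex.I)
  have γ_continuousOn : ContinuousOn γ (Ici 0 ×ˢ univ) :=
    hg.comp (by fun_prop) fun p hp => by simpa using hp.1
  obtain ⟨B, hB⟩ := (isCompact_Icc (a := (0 : ℝ)) (b := 1)).prod hφc
    |>.exists_bound_of_continuousOn
      (γ_continuousOn.mono (prod_mono Icc_subset_Ici_self (subset_univ _)))
  refine tendsto_integral_filter_of_dominated_convergence (fun y => B * ‖φ y‖) ?_ ?_
    (hφ.norm.const_mul B) (.of_forall fun y => ?_)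
  · filter_upwards [self_mem_nhdsWithin] with ε hε
    have : Continuous fun y : ℝ => γ (ε, y) :=
      γ_continuousOn.comp_continuous (by fun_prop) fun y => ⟨mem_Ici.2 (mem_Ioi.1 hε).le, trivial⟩
    exact this.aestronglyMeasurable.mul hφ.aestronglyMeasurable
  · filter_upwards [Ioc_mem_nhdsGT one_pos] with ε hε
    refine .of_forall fun y => ?_
    by_cases hy : y ∈ tsupport φ
    · rw [norm_mul]
      gcongr
      exact hB (ε, y) ⟨Ioc_subset_Icc_self hε, hy⟩
    · simp [image_eq_zero_of_notMem_tsupport hy]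
  · have : Tendsto (fun ε : ℝ => γ (ε, y)) (𝓝[>] 0) (𝓝 (γ (0, y))) :=
      (γ_continuousOn (0, y) (by simp)).tendsto.comp <| tendsto_nhdsWithin_iff.2
        ⟨(Continuous.prodMk_left y).tendsto 0 |>.mono_left nhdsWithin_le_nhds, by
          filter_upwards [self_mem_nhdsWithin] with ε hε
          exact ⟨mem_Ici.2 (mem_Ioi.1 hε).le, trivial⟩⟩
    simpa [γ] using this.mul_const (φ y)

theorem integral_mul_fourier_eq_integral_boundary (hF : AEStronglyMeasurable F)
    (hFM : ∀ u, ‖F u‖ ≤ M) (hF0 : ∀ u ≤ 0, F u = 0)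
    (hgF : ∀ z : ℂ, 0 < z.re → ∫ u : ℝ, Complex.exp (-z * u) * F u = g z)
    (hg : ContinuousOn g {z | 0 ≤ z.re})
    (hφ : Integrable φ) (hφc : HasCompactSupport φ) (hφ' : Integrable (𝓕 φ)) :
    ∫ u, F u * 𝓕 φ u = ∫ y : ℝ, g (2 * π * y * Complex.I) * φ y := by
  refine tendsto_nhds_unique (tendsto_integral_exp_mul_fourier hF hFM hF0 hφ')
    ((tendsto_integral_boundary hg hφ hφc).congr' ?_)
  filter_upwards [self_mem_nhdsWithin] with ε hε
  exact (integral_exp_mul_fourier_eq_integral_laplace hF hFM hF0 hgF hφ hε).symm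

theorem tendsto_integral_mul_fourier_sub (hF : AEStronglyMeasurable F)
    (hFM : ∀ u, ‖F u‖ ≤ M) (hF0 : ∀ u ≤ 0, F u = 0)
    (hgF : ∀ z : ℂ, 0 < z.re → ∫ u : ℝ, Complex.exp (-z * u) * F u = g z)
    (hg : ContinuousOn g {z | 0 ≤ z.re})
    (hφ : Integrable φ) (hφc : HasCompactSupport φ) (hφ' : Integrable (𝓕 φ)) :
    Tendsto (fun v : ℝ => ∫ u, F u * 𝓕 φ (u - v)) atTop (𝓝 0) := by
  have eq_fourier (v : ℝ) : ∫ u, F u * 𝓕 φ (u - v) =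
      𝓕 (fun y : ℝ => g (2 * π * y * Complex.I) * φ y) (-v) := by
    have modulated : Integrable fun y : ℝ => Complex.exp (2 * π * v * y * Complex.I) * φ y :=
      hφ.bdd_mul (c := 1) (by fun_prop) (.of_forall fun y => by simp [Complex.norm_exp])
    have parseval := integral_mul_fourier_eq_integral_boundary hF hFM hF0 hgF hg modulated
      hφc.mul_left (by simpa only [fourier_exp_mul] using hφ'.comp_sub_right v)
    rw [fourier_exp_mul] at parseval
    rw [parseval, fourier_real_eq_integral_exp_smul]
    congr 1 with y
    rw [smul_eq_mul, mul_left_comm]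
    congr! 3
    push_cast
    ring
  simp only [eq_fourier]
  exact (Real.zero_at_infty_fourier _).comp (tendsto_neg_atTop_atBot.mono_right atBot_le_cocompact)

theorem tendsto_integral_mul_sinc_sq {F : ℝ → ℝ} (hF : Measurable F)
    (hFM : ∀ u, |F u| ≤ M) (hF0 : ∀ u ≤ 0, F u = 0)
    (hgF : ∀ z : ℂ, 0 < z.re → ∫ u : ℝ, Complex.exp (-z * u) * F u = g z)
    (hg : ContinuousOn g {z | 0 ≤ z.re}) {l : ℝ} (hl : 0 < l) :
    Tendsto (fun v => ∫ u, F u * sinc (l * (u - v)) ^ 2) atTop (𝓝 0) := by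
  obtain ⟨φ, hφ, hφc, fourier_φ⟩ := exists_fourier_eq_sinc_sq hl
  have fourier_integrable : Integrable (𝓕 φ) :=
    (integrable_sinc_sq.comp_mul_left' hl.ne').ofReal.congr (.of_forall fun w => (fourier_φ w).symm)
  have complex_limit := tendsto_integral_mul_fourier_sub (F := fun u => (F u : ℂ))
    (by fun_prop) (by simpa using hFM) (by simpa using hF0) hgF hg hφ hφc fourier_integrable
  simp only [fourier_φ, ← Complex.ofReal_mul, integral_complex_ofReal] at complex_limit
  exact (Complex.continuous_re.tendsto 0).comp complex_limit

end LaplaceBoundary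

/-- Slowly decreasing functions in the sense of Schmidt, for increments in an additive variable:
the side condition under which limits of kernel averages are limits of the function itself. -/
def IsSlowlyDecreasing (F : ℝ → ℝ) : Prop :=
  ∀ ε > 0, ∃ δ > 0, ∀ᶠ u in atTop, ∀ v ∈ Icc u (u + δ), F u - ε ≤ F v

section Tauberian

variable {K G F : ℝ → ℝ} {M : ℝ}

theorem tendsto_setIntegral_lt_abs (hK : Integrable K) :
    Tendsto (fun R : ℝ => ∫ w in {w | R < |w|}, K w) atTop (𝓝 0) := by
  have meas (R : ℝ) : MeasurableSet {w : ℝ | R < |w|} :=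
    measurableSet_lt measurable_const measurable_abs
  have eq_empty : ⋂ R : ℝ, {w : ℝ | R < |w|} = ∅ :=
    eq_empty_of_forall_notMem fun w hw => lt_irrefl |w| (mem_iInter.1 hw |w|)
  simpa [eq_empty] using tendsto_setIntegral_of_antitone (f := K) meas
    (fun R R' hR w hw => hR.trans_lt hw) ⟨0, hK.integrableOn⟩

theorem integral_comp_mul_sub (f : ℝ → ℝ) {l : ℝ} (hl : 0 < l) (v : ℝ) :
    l * ∫ u, f (l * (u - v)) = ∫ w, f w := by
  rw [integral_sub_right_eq_self (fun u => f (l * u)), Measure.integral_comp_mul_left,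
    abs_of_pos (inv_pos.2 hl), smul_eq_mul, mul_inv_cancel_left₀ hl.ne']

theorem le_mul_integral_mul_kernel (hK0 : 0 ≤ K) (hK : Integrable K) (hG : Measurable G)
    (hGM : ∀ u, |G u| ≤ M) {η δ l v : ℝ} (hl : 0 < l) (hη : ∀ u, |u - v| ≤ δ → η ≤ G u) :
    η * (∫ w, K w) - (η + M) * ∫ w in {w | l * δ < |w|}, K w ≤
      l * ∫ u, G u * K (l * (u - v)) := by
  set T : Set ℝ := {w | l * δ < |w|}
  have T_meas : MeasurableSet T := measurableSet_lt measurable_const measurable_abs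
  have minorant_integrable : Integrable fun w => η * K w - (η + M) * T.indicator K w :=
    (hK.const_mul η).sub ((hK.indicator T_meas).const_mul _)
  have pointwise (u : ℝ) : η * K (l * (u - v)) - (η + M) * T.indicator K (l * (u - v)) ≤
      G u * K (l * (u - v)) := by
    by_cases hu : |u - v| ≤ δ
    · have : l * (u - v) ∉ T := by
        simpa [T, abs_mul, abs_of_pos hl] using mul_le_mul_of_nonneg_left hu hl.le
      rw [indicator_of_notMem this, mul_zero, sub_zero]
      exact mul_le_mul_of_nonneg_right (hη u hu) (hK0 _)
    · have : l * (u - v) ∈ T := by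
        simpa [T, abs_mul, abs_of_pos hl] using mul_lt_mul_of_pos_left (not_le.1 hu) hl
      rw [indicator_of_mem this]
      linarith [mul_le_mul_of_nonneg_right (neg_le_of_abs_le (hGM u)) (hK0 (l * (u - v)))]
  calc η * (∫ w, K w) - (η + M) * ∫ w in T, K w
      = ∫ w, (η * K w - (η + M) * T.indicator K w) := by
        rw [integral_sub (hK.const_mul η) ((hK.indicator T_meas).const_mul _),
          integral_const_mul, integral_const_mul, integral_indicator T_meas]
    _ = l * ∫ u, (η * K (l * (u - v)) - (η + M) * T.indicator K (l * (u - v))) :=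
        (integral_comp_mul_sub _ hl v).symm
    _ ≤ l * ∫ u, G u * K (l * (u - v)) := by
        gcongr
        · exact (minorant_integrable.comp_mul_left' hl.ne').comp_sub_right v
        · exact ((hK.comp_mul_left' hl.ne').comp_sub_right v).bdd_mul hG.aestronglyMeasurable
            (.of_forall hGM)
        · exact fun u => pointwise u

theorem eventually_exists_abs_sub_le_lt (hK0 : 0 ≤ K) (hK : Integrable K) (hKpos : 0 < ∫ w, K w)
    (hG : Measurable G) (hGM : ∀ u, |G u| ≤ M)
    (hGK : ∀ l > 0, Tendsto (fun v => ∫ u, G u * K (l * (u - v))) atTop (𝓝 0))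
    {η δ : ℝ} (hη : 0 < η) (hδ : 0 < δ) :
    ∀ᶠ v in atTop, ∃ u, |u - v| ≤ δ ∧ G u < η := by
  have tail : Tendsto (fun l : ℝ => (η + M) * ∫ w in {w | l * δ < |w|}, K w) atTop (𝓝 0) := by
    simpa using ((tendsto_setIntegral_lt_abs hK).comp
      (tendsto_id.atTop_mul_const hδ)).const_mul (η + M)
  obtain ⟨l, tail_lt, hl⟩ :=
    ((tail.eventually_lt_const (mul_pos hη hKpos)).and (eventually_gt_atTop 0)).exists
  filter_upwards [((hGK l hl).const_mul l).eventually_lt_const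
    ((mul_zero l).trans_lt (sub_pos.2 tail_lt))] with v average_lt
  by_contra! hv
  exact (le_mul_integral_mul_kernel hK0 hK hG hGM hl hv).not_gt average_lt

theorem IsSlowlyDecreasing.tendsto_zero (hFs : IsSlowlyDecreasing F) (hK0 : 0 ≤ K)
    (hK : Integrable K) (hKpos : 0 < ∫ w, K w) (hF : Measurable F) (hFM : ∀ u, |F u| ≤ M)
    (hFK : ∀ l > 0, Tendsto (fun v => ∫ u, F u * K (l * (u - v))) atTop (𝓝 0)) :
    Tendsto F atTop (𝓝 0) := by
  have hFK_neg (l : ℝ) (hl : 0 < l) :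
      Tendsto (fun v => ∫ u, (-F) u * K (l * (u - v))) atTop (𝓝 0) := by
    simpa [integral_neg] using (hFK l hl).neg
  refine Metric.tendsto_nhds.2 fun ε hε => ?_
  obtain ⟨δ, hδ, slow⟩ := hFs (ε / 2) (by positivity)
  have small_after := (tendsto_atTop_add_const_right _ (δ / 2) tendsto_id).eventually <|
    eventually_exists_abs_sub_le_lt hK0 hK hKpos hF hFM hFK (half_pos hε) (half_pos hδ)
  have large_before := (tendsto_atTop_add_const_right _ (-(δ / 2)) tendsto_id).eventually <|
    eventually_exists_abs_sub_le_lt hK0 hK hKpos hF.neg (by simpa using hFM) hFK_neg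
      (half_pos hε) (half_pos hδ)
  have slow_before := (tendsto_atTop_add_const_right _ (-δ) tendsto_id).eventually
    (eventually_forall_ge_atTop.2 slow)
  filter_upwards [slow, slow_before, small_after, large_before] with
    v slow_v slow_before_v ⟨u, hu, hFu⟩ ⟨u', hu', hFu'⟩
  simp only [id, abs_le] at hu hu' slow_before_v
  rw [Real.dist_0_eq_abs, abs_lt]
  constructor
  · have := slow_before_v u' (by linarith) v ⟨by linarith, by linarith⟩
    simp only [Pi.neg_apply] at hFu'
    linarith
  · linarith [slow_v u ⟨by linarith, by linarith⟩]

end Tauberian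

section WienerIkehara

/-- The error `S x / x - A` in the logarithmic variable `x = exp u`, cut off to `u > 0`; it
converts the Mellin transform of `S` into a Laplace transform. -/
noncomputable def logRemainder (S : ℝ → ℝ) (A : ℝ) : ℝ → ℝ :=
  (Ioi 0).indicator fun u => S (exp u) * exp (-u) - A

variable {S : ℝ → ℝ} {A C : ℝ}

theorem integral_exp_neg_mul_comp_exp (S : ℝ → ℝ) (z : ℂ) :
    ∫ u in Ioi (0 : ℝ), Complex.exp (-z * u) * (S (exp u) * exp (-u) : ℝ) =
      ∫ t in Ioi (1 : ℝ), (S t : ℂ) * (t : ℂ) ^ (-(z + 1 + 1)) := by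
  rw [← exp_zero, ← integral_comp_exp_Ioi]
  congr 1 with u
  have exp_ne : ((exp u : ℝ) : ℂ) ≠ 0 := mod_cast (exp_pos u).ne'
  have exponents : Complex.exp (-z * u) * Complex.exp (-u) =
      Complex.exp u * Complex.exp (u * -(z + 1 + 1)) := by
    rw [← Complex.exp_add, ← Complex.exp_add]
    ring_nf
  rw [Complex.real_smul, Complex.cpow_def_of_ne_zero exp_ne, ← Complex.ofReal_log (exp_nonneg u),
    log_exp]
  push_cast
  linear_combination (S (exp u) : ℂ) * exponents

theorem abs_comp_exp_mul_exp_neg_le (hSC : ∀ x ≥ 1, |S x| ≤ C * x) {u : ℝ} (hu : 0 ≤ u) :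
    |S (exp u) * exp (-u)| ≤ C := by
  rw [abs_mul, abs_of_pos (exp_pos _), exp_neg, ← div_eq_mul_inv, div_le_iff₀ (exp_pos u)]
  exact hSC _ (one_le_exp hu)

theorem measurable_logRemainder (hS : Monotone S) : Measurable (logRemainder S A) := by
  have := hS.measurable
  exact Measurable.indicator (by fun_prop) measurableSet_Ioi

theorem abs_logRemainder_le (hSC : ∀ x ≥ 1, |S x| ≤ C * x) (u : ℝ) :
    |logRemainder S A u| ≤ C + |A| := by
  by_cases hu : u ∈ Ioi 0
  · rw [logRemainder, indicator_of_mem hu]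
    exact (abs_sub _ _).trans (by gcongr; exact abs_comp_exp_mul_exp_neg_le hSC (mem_Ioi.1 hu).le)
  · rw [logRemainder, indicator_of_notMem hu, abs_zero]
    have : 0 ≤ C := by simpa using (abs_nonneg _).trans (hSC 1 le_rfl)
    positivity

theorem isSlowlyDecreasing_logRemainder (hS : Monotone S) (hSC : ∀ x ≥ 1, |S x| ≤ C * x) :
    IsSlowlyDecreasing (logRemainder S A) := by
  have C_nonneg : 0 ≤ C := by simpa using (abs_nonneg _).trans (hSC 1 le_rfl)
  refine fun ε hε => ⟨ε / (C + 1), by positivity, ?_⟩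
  filter_upwards [eventually_gt_atTop 0] with u hu v ⟨huv, hvu⟩
  rw [logRemainder, indicator_of_mem (mem_Ioi.2 hu), indicator_of_mem (mem_Ioi.2 (hu.trans_le huv))]
  set H : ℝ → ℝ := fun u => S (exp u) * exp (-u)
  have decay : exp (u - v) * H u ≤ H v :=
    calc exp (u - v) * H u = S (exp u) * exp (-v) := by
          rw [mul_left_comm, ← exp_add, sub_add_eq_add_sub, add_neg_cancel, zero_sub]
      _ ≤ H v := mul_le_mul_of_nonneg_right (hS (exp_le_exp.2 huv)) (exp_nonneg _)
  have drop : H u - H v ≤ ε :=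
    calc H u - H v ≤ (1 - exp (u - v)) * H u := by linarith
      _ ≤ (1 - exp (u - v)) * C := mul_le_mul_of_nonneg_left
          (le_of_abs_le (abs_comp_exp_mul_exp_neg_le hSC hu.le))
          (sub_nonneg.2 (exp_le_one_iff.2 (sub_nonpos.2 huv)))
      _ ≤ ε / (C + 1) * (C + 1) := by gcongr <;> linarith [add_one_le_exp (u - v)]
      _ = ε := div_mul_cancel₀ _ (by positivity)
  linarith

theorem integral_exp_neg_mul_logRemainder (hS : Monotone S) (hSC : ∀ x ≥ 1, |S x| ≤ C * x)
    {z : ℂ} (hz : 0 < z.re) :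
    ∫ u : ℝ, Complex.exp (-z * u) * logRemainder S A u =
      (∫ t in Ioi (1 : ℝ), (S t : ℂ) * (t : ℂ) ^ (-(z + 1 + 1))) - A / z := by
  have exp_integrable : IntegrableOn (fun u : ℝ => Complex.exp (-z * u)) (Ioi 0) :=
    integrableOn_exp_mul_complex_Ioi (by simpa) 0
  have main_integrable : IntegrableOn
      (fun u : ℝ => Complex.exp (-z * u) * (S (exp u) * exp (-u) : ℝ)) (Ioi 0) := by
    have := hS.measurable
    refine Integrable.mul_bdd (c := C) exp_integrable (by fun_prop) ?_
    filter_upwards [ae_restrict_mem measurableSet_Ioi] with u hu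
    exact (Complex.norm_real _).trans_le (abs_comp_exp_mul_exp_neg_le hSC (mem_Ioi.1 hu).le)
  have integral_exp : ∫ u in Ioi (0 : ℝ), Complex.exp (-z * u) * A = A / z := by
    rw [integral_mul_const, integral_exp_mul_complex_Ioi (by simpa)]
    simp [div_eq_inv_mul]
  have split (u : ℝ) : Complex.exp (-z * u) * logRemainder S A u =
      (Ioi 0).indicator (fun u : ℝ => Complex.exp (-z * u) * (S (exp u) * exp (-u) : ℝ) -
        Complex.exp (-z * u) * A) u := by
    by_cases hu : u ∈ Ioi 0
    · simp only [logRemainder, indicator_of_mem hu, Complex.ofReal_sub, mul_sub]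
    · simp only [logRemainder, indicator_of_notMem hu, Complex.ofReal_zero, mul_zero]
  simp only [split]
  rw [integral_indicator measurableSet_Ioi,
    integral_sub main_integrable (exp_integrable.mul_const _), integral_exp,
    integral_exp_neg_mul_comp_exp]

theorem tendsto_div_of_integral_mul_cpow_eq {h : ℂ → ℂ} (hS : Monotone S)
    (hSC : ∀ x ≥ 1, |S x| ≤ C * x) (hh : ContinuousOn h {s | 1 ≤ s.re})
    (hSh : ∀ s : ℂ, 1 < s.re →
      ∫ t in Ioi (1 : ℝ), (S t : ℂ) * (t : ℂ) ^ (-(s + 1)) = h s + A / (s - 1)) :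
    Tendsto (fun x => S x / x) atTop (𝓝 A) := by
  have laplace (z : ℂ) (hz : 0 < z.re) :
      ∫ u : ℝ, Complex.exp (-z * u) * logRemainder S A u = h (z + 1) := by
    rw [integral_exp_neg_mul_logRemainder hS hSC hz, hSh _ (by simpa), add_sub_cancel_right,
      add_sub_cancel_right]
  have boundary : ContinuousOn (fun z => h (z + 1)) {z | 0 ≤ z.re} :=
    hh.comp (by fun_prop) fun z hz => by simpa using hz
  have remainder : Tendsto (logRemainder S A) atTop (𝓝 0) :=
    (isSlowlyDecreasing_logRemainder hS hSC).tendsto_zero (fun _ => sq_nonneg _)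
      integrable_sinc_sq integral_sinc_sq_pos (measurable_logRemainder hS)
      (abs_logRemainder_le hSC) fun _ => tendsto_integral_mul_sinc_sq (measurable_logRemainder hS)
        (abs_logRemainder_le hSC) (fun _ hu => indicator_of_notMem hu.not_gt _) laplace boundary
  rw [← zero_add A]
  refine ((remainder.comp tendsto_log_atTop).add_const A).congr' ?_
  filter_upwards [eventually_gt_atTop 1] with x hx
  simp only [Function.comp_apply, logRemainder, indicator_of_mem (mem_Ioi.2 (log_pos hx)), exp_neg,
    exp_log (one_pos.trans hx), sub_add_cancel, div_eq_mul_inv]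

theorem tendsto_sum_div_of_LSeries_sub_pole {a : ℕ → ℝ} {G : ℂ → ℂ} (ha : 0 ≤ a)
    (hbound : (fun n => ∑ k ∈ Finset.Icc 1 n, a k) =O[atTop] fun n => (n : ℝ))
    (hG : ContinuousOn G {s | 1 ≤ s.re})
    (hGa : EqOn G (fun s => LSeries (fun n => a n) s - A / (s - 1)) {s | 1 < s.re}) :
    Tendsto (fun x : ℝ => (∑ k ∈ Finset.Icc 1 ⌊x⌋₊, a k) / x) atTop (𝓝 A) := by
  set S : ℝ → ℝ := fun x => ∑ k ∈ Finset.Icc 1 ⌊x⌋₊, a k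
  have S_mono : Monotone S := fun x y hxy => Finset.sum_le_sum_of_subset_of_nonneg
    (Finset.Icc_subset_Icc_right (Nat.floor_le_floor hxy)) fun k _ _ => ha k
  obtain ⟨C, C_pos, hC⟩ := bound_of_isBigO_nat_atTop hbound
  have S_le (x : ℝ) (hx : x ≥ 1) : |S x| ≤ C * x := by
    have floor_ne : (⌊x⌋₊ : ℝ) ≠ 0 := mod_cast (Nat.floor_pos.2 hx).ne'
    calc |S x| ≤ C * ‖(⌊x⌋₊ : ℝ)‖ := hC floor_ne
      _ ≤ C * x := by
        rw [norm_natCast]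
        gcongr
        exact Nat.floor_le (by linarith)
  have ne_zero {s : ℂ} (hs : 1 ≤ s.re) : s ≠ 0 := by
    rintro rfl
    norm_num at hs
  refine tendsto_div_of_integral_mul_cpow_eq (h := fun s => (G s - A) / s) S_mono S_le
    ((hG.sub continuousOn_const).div continuousOn_id fun s => ne_zero) fun s hs => ?_
  have mellin := LSeries_eq_mul_integral_of_nonneg a zero_le_one hs
    (by simpa only [rpow_one] using hbound) ha
  have sub_one_ne : s - 1 ≠ 0 := sub_ne_zero.2 (by rintro rfl; simp at hs)
  have hs0 : s ≠ 0 := ne_zero hs.le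
  simp only [hGa hs, Complex.ofReal_sum, mellin]
  field_simp
  ring

end WienerIkehara

section PrimeNumberTheorem

open ArithmeticFunction (vonMangoldt)

theorem sum_Icc_one_vonMangoldt (x : ℝ) :
    ∑ k ∈ Finset.Icc 1 ⌊x⌋₊, vonMangoldt k = Chebyshev.psi x := rfl

theorem eqOn_LFunctionResidueClassAux_one :
    EqOn (vonMangoldt.LFunctionResidueClassAux (1 : ZMod 1))
      (fun s => LSeries (fun n => (vonMangoldt n : ℝ)) s - (1 : ℝ) / (s - 1)) {s | 1 < s.re} := by
  intro s hs
  have residueClass_one (n : ℕ) : vonMangoldt.residueClass (1 : ZMod 1) n = vonMangoldt n :=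
    indicator_of_mem (s := {n : ℕ | (n : ZMod 1) = 1}) (Subsingleton.elim _ _) _
  rw [vonMangoldt.eqOn_LFunctionResidueClassAux isUnit_one hs]
  simp [residueClass_one]

theorem psi_isEquivalent : Chebyshev.psi ~[atTop] fun x => x := by
  have hbound : (fun n => ∑ k ∈ Finset.Icc 1 n, vonMangoldt k) =O[atTop] fun n => (n : ℝ) := by
    refine .of_bound (log 4 + 4) (.of_forall fun n => ?_)
    rw [← Nat.floor_natCast (R := ℝ) n, sum_Icc_one_vonMangoldt,
      norm_of_nonneg (Chebyshev.psi_nonneg _), Nat.floor_natCast, norm_natCast]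
    exact Chebyshev.psi_le_const_mul_self n.cast_nonneg
  exact isEquivalent_of_tendsto_one <| tendsto_sum_div_of_LSeries_sub_pole
    (fun _ => ArithmeticFunction.vonMangoldt_nonneg) hbound
    (vonMangoldt.continuousOn_LFunctionResidueClassAux 1) eqOn_LFunctionResidueClassAux_one

theorem sqrt_isLittleO_id : Real.sqrt =o[atTop] fun x : ℝ => x := by
  have one_isLittleO : (fun _ => (1 : ℝ)) =o[atTop] Real.sqrt :=
    (isLittleO_one_left_iff ℝ).2 (tendsto_norm_atTop_atTop.comp tendsto_sqrt_atTop)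
  refine ((isBigO_refl Real.sqrt atTop).mul_isLittleO one_isLittleO).congr' ?_ ?_
  · exact .of_forall fun x => mul_one _
  · filter_upwards [eventually_ge_atTop 0] with x hx using mul_self_sqrt hx

theorem theta_isEquivalent : Chebyshev.theta ~[atTop] fun x => x := by
  have := psi_isEquivalent.sub_isLittleO
    (Chebyshev.isBigO_psi_sub_theta_sqrt.trans_isLittleO sqrt_isLittleO_id)
  simpa

theorem primePi_isEquivalent : (fun x => (primePi x : ℝ)) ~[atTop] fun x => x / log x := by
  have log_inv : (fun x => (log x)⁻¹) =o[atTop] fun _ => (1 : ℝ) :=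
    (isLittleO_one_iff ℝ).2 tendsto_log_atTop.inv_tendsto_atTop
  have error : (fun x => x / log x ^ 2) =o[atTop] fun x : ℝ => x / log x :=
    ((isBigO_refl (fun x => x / log x) atTop).mul_isLittleO log_inv).congr
      (fun x => by rw [← div_eq_mul_inv, div_div, sq]) fun x => mul_one _
  exact (theta_isEquivalent.div (IsEquivalent.refl (u := log))).add_isLittleO
    (Chebyshev.primeCounting_sub_theta_div_log_isBigO.trans_isLittleO error) |>.congr_left
      (.of_forall fun x => add_sub_cancel _ _)

end PrimeNumberTheorem

section AbelianLimit

theorem tendsto_const_div_nhdsGT_zero {s : ℝ} (hs : 0 < s) :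
    Tendsto (fun t => s / t) (𝓝[>] 0) atTop := by
  simpa only [div_eq_mul_inv] using tendsto_inv_nhdsGT_zero.const_mul_atTop hs

theorem tendsto_log_div_log {s : ℝ} (hs : 0 < s) :
    Tendsto (fun t => log (1 / t) / log (s / t)) (𝓝[>] 0) (𝓝 1) := by
  have log_atTop := tendsto_log_atTop.comp (tendsto_const_div_nhdsGT_zero hs)
  have limit := (tendsto_const_nhds (x := log s)).div_atTop log_atTop |>.const_sub 1
  rw [sub_zero] at limit
  refine limit.congr' ?_
  filter_upwards [self_mem_nhdsWithin, log_atTop.eventually_gt_atTop 0] with t ht log_pos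
  simp only [Function.comp_apply] at log_pos ⊢
  have ht : t ≠ 0 := (mem_Ioi.1 ht).ne'
  have log_one_div : log (1 / t) = log (s / t) - log s := by
    rw [log_div one_ne_zero ht, log_div hs.ne' ht, log_one]
    ring
  rw [log_one_div, sub_div, div_self log_pos.ne']

theorem tendsto_sqrt_nhdsGT_zero : Tendsto Real.sqrt (𝓝[>] 0) (𝓝[>] 0) :=
  tendsto_nhdsWithin_iff.2 ⟨(continuous_sqrt.tendsto' 0 0 sqrt_zero).mono_left nhdsWithin_le_nhds,
    eventually_mem_nhdsWithin.mono fun _ => sqrt_pos.2⟩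

theorem one_div_sqrt_lt_div {s t : ℝ} (ht : 0 < t) (hs : √t < s) : 1 / √t < s / t := by
  have sqrt_pos : 0 < √t := sqrt_pos.2 ht
  rw [div_lt_div_iff₀ sqrt_pos ht, one_mul]
  calc t = √t * √t := (mul_self_sqrt ht.le).symm
    _ < s * √t := mul_lt_mul_of_pos_right hs sqrt_pos

theorem one_lt_div_of_sqrt_lt {s t : ℝ} (ht : 0 < t) (ht1 : t ≤ 1) (hs : √t < s) : 1 < s / t :=
  (one_le_one_div (sqrt_pos.2 ht) (sqrt_le_one.2 ht1)).trans_lt (one_div_sqrt_lt_div ht hs)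

theorem abs_log_div_log_le_two {s t : ℝ} (ht : 0 < t) (ht1 : t ≤ 1) (hs : √t < s) :
    |log (1 / t) / log (s / t)| ≤ 2 := by
  have log_nonneg : 0 ≤ log (1 / t) := log_nonneg (one_le_one_div ht ht1)
  have log_pos : 0 < log (s / t) := log_pos (one_lt_div_of_sqrt_lt ht ht1 hs)
  rw [abs_of_nonneg (by positivity), div_le_iff₀ log_pos]
  calc log (1 / t) = 2 * log (1 / √t) := by
        rw [one_div, one_div, log_inv, log_inv, log_sqrt ht.le]
        ring
    _ ≤ 2 * log (s / t) := by
        have := log_le_log (by positivity) (one_div_sqrt_lt_div ht hs).le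
        linarith

theorem comp_div_mul_log_eq (f : ℝ → ℝ) {s t : ℝ} (hs : s ≠ 0) (ht : t ≠ 0)
    (hst : log (s / t) ≠ 0) :
    f (s / t) * (t * log (1 / t)) / s =
      f (s / t) / (s / t / log (s / t)) * (log (1 / t) / log (s / t)) := by
  field_simp

variable {f w : ℝ → ℝ}

theorem tendsto_div_of_isEquivalent_div_log (hf : f ~[atTop] fun x => x / log x) :
    Tendsto (fun x => f x / (x / log x)) atTop (𝓝 1) := by
  refine (isEquivalent_iff_tendsto_one ?_).1 hf
  filter_upwards [eventually_gt_atTop 1] with x hx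
  exact div_ne_zero (by positivity) (log_pos hx).ne'

theorem tendsto_comp_div_mul_log (hf : f ~[atTop] fun x => x / log x) {s : ℝ} (hs : 0 < s) :
    Tendsto (fun t => f (s / t) * (t * log (1 / t)) / s) (𝓝[>] 0) (𝓝 1) := by
  have limit := ((tendsto_div_of_isEquivalent_div_log hf).comp
    (tendsto_const_div_nhdsGT_zero hs)).mul (tendsto_log_div_log hs)
  rw [mul_one] at limit
  refine limit.congr' ?_
  filter_upwards [self_mem_nhdsWithin,
    (tendsto_log_atTop.comp (tendsto_const_div_nhdsGT_zero hs)).eventually_gt_atTop 0]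
    with t ht log_pos
  exact (comp_div_mul_log_eq f hs.ne' (mem_Ioi.1 ht).ne' log_pos.ne').symm

theorem eventually_abs_comp_div_mul_log_le (hf : f ~[atTop] fun x => x / log x) :
    ∀ᶠ t in 𝓝[>] 0, ∀ s > √t, |f (s / t) * (t * log (1 / t)) / s| ≤ 4 := by
  have ratio_le : ∀ᶠ x in atTop, ∀ y ≥ x, |f y / (y / log y)| ≤ 2 :=
    eventually_forall_ge_atTop.2 <|
      (tendsto_div_of_isEquivalent_div_log hf).abs.eventually_le_const (by norm_num)
  have one_div_sqrt_atTop : Tendsto (fun t => 1 / √t) (𝓝[>] 0) atTop := by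
    simpa only [one_div] using! tendsto_inv_nhdsGT_zero.comp tendsto_sqrt_nhdsGT_zero
  filter_upwards [one_div_sqrt_atTop.eventually ratio_le, Ioc_mem_nhdsGT one_pos]
    with t ratio_le ⟨ht, ht1⟩ s hs
  have hs0 : 0 < s := (sqrt_nonneg t).trans_lt hs
  have hst : log (s / t) ≠ 0 := (log_pos (one_lt_div_of_sqrt_lt ht ht1 hs)).ne'
  rw [comp_div_mul_log_eq f hs0.ne' ht.ne' hst, abs_mul]
  calc _ ≤ (2 : ℝ) * 2 := by
        gcongr
        · exact ratio_le _ (one_div_sqrt_lt_div ht hs).le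
        · exact abs_log_div_log_le_two ht ht1 hs
    _ = 4 := by norm_num

theorem tendsto_setIntegral_comp_div_mul_log (hfm : Measurable f)
    (hf : f ~[atTop] fun x => x / log x) (hw : IntegrableOn (fun s => w s * s) (Ioi 0)) :
    Tendsto (fun t => (∫ s in Ioi √t, w s * f (s / t)) * (t * log (1 / t))) (𝓝[>] 0)
      (𝓝 (∫ s in Ioi 0, w s * s)) := by
  set q : ℝ → ℝ → ℝ := fun t => (Ioi √t).indicator fun s => f (s / t) * (t * log (1 / t)) / s
  have integral_eq (t : ℝ) : ∫ s in Ioi 0, w s * s * q t s =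
      (∫ s in Ioi √t, w s * f (s / t)) * (t * log (1 / t)) := by
    have mul_indicator (s : ℝ) : w s * s * q t s =
        (Ioi √t).indicator (fun s => w s * s * (f (s / t) * (t * log (1 / t)) / s)) s :=
      (indicator_mul_right (Ioi √t) (fun s => w s * s) _).symm
    simp only [mul_indicator]
    rw [setIntegral_indicator measurableSet_Ioi,
      inter_eq_right.2 (Ioi_subset_Ioi (sqrt_nonneg t)), ← integral_mul_const]
    refine setIntegral_congr_fun measurableSet_Ioi fun s hs => ?_
    have : s ≠ 0 := ((sqrt_nonneg t).trans_lt hs).ne'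
    field_simp
  have q_measurable (t : ℝ) : Measurable (q t) :=
    Measurable.indicator (by fun_prop) measurableSet_Ioi
  have q_tendsto {s : ℝ} (hs : 0 < s) : Tendsto (fun t => q t s) (𝓝[>] 0) (𝓝 1) := by
    have sqrt_lt : ∀ᶠ t in 𝓝[>] 0, √t < s :=
      (tendsto_sqrt_nhdsGT_zero.mono_right nhdsWithin_le_nhds).eventually_lt_const hs
    refine (tendsto_comp_div_mul_log hf hs).congr' ?_
    filter_upwards [sqrt_lt] with t ht using (indicator_of_mem (mem_Ioi.2 ht) _).symm
  simp only [← integral_eq]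
  refine tendsto_integral_filter_of_dominated_convergence (fun s => ‖w s * s‖ * 4)
    (.of_forall fun t => hw.aestronglyMeasurable.mul (q_measurable t).aestronglyMeasurable) ?_
    (hw.norm.mul_const 4) ?_
  · filter_upwards [eventually_abs_comp_div_mul_log_le hf] with t q_le
    refine .of_forall fun s => ?_
    rw [norm_mul]
    gcongr
    by_cases hs : s ∈ Ioi √t
    · exact (congrArg norm (indicator_of_mem hs _)).trans_le (q_le s hs)
    · exact (congrArg norm (indicator_of_notMem hs _)).trans_le (by norm_num)
  · filter_upwards [ae_restrict_mem measurableSet_Ioi] with s hs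
    simpa using (q_tendsto hs).const_mul (w s * s)

end AbelianLimit

theorem integrableOn_mul_exp_neg_mul :
    IntegrableOn (fun s : ℝ => s * exp (-s) * s) (Ioi 0) := by
  refine (GammaIntegral_convergent (s := 3) (by norm_num)).congr_fun (fun s _ => ?_)
    measurableSet_Ioi
  norm_num
  ring

theorem integral_mul_exp_neg_mul : ∫ s in Ioi (0 : ℝ), s * exp (-s) * s = 2 := by
  calc ∫ s in Ioi (0 : ℝ), s * exp (-s) * s = Real.Gamma 3 := by
        rw [Gamma_eq_integral (by norm_num)]
        congr 1 with s
        norm_num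
        ring
    _ = 2 := by
        norm_num [Gamma_ofNat_eq_factorial, Nat.factorial]

theorem measurable_primePi_s19 : Measurable fun y => (primePi y : ℝ) :=
  (measurable_from_top (f := fun n : ℕ => (Nat.primeCounting n : ℝ))).comp Nat.measurable_floor

end

/-- `I₂(t) ~ 2/(t·log(1/t))` as `t → 0⁺`. -/
theorem I2_asymptotic :
    Tendsto (fun t : ℝ => I2 t * (t * Real.log (1 / t)))
      (𝓝[>] 0) (𝓝 2) := by
  rw [← integral_mul_exp_neg_mul]
  exact tendsto_setIntegral_comp_div_mul_log measurable_primePi_s19 primePi_isEquivalent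
    integrableOn_mul_exp_neg_mul
end
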